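/- Nonlocal maximum principle for dissipative active scalars (Theorem 2.linked to eq. (keyineq)): There exists a constant c > 0, depending only on the dimension d and on α ∈ (0,1), such that the following holds. Let θ : ℝ^d × [0,∞) → ℝ be smooth and periodic in the space variable, let u : ℝ^d × [0,∞) → ℝ^d be smooth and periodic in space, and suppose θ satisfies ∂_t θ = (u·∇)θ − L_α θ, where L_α f(x) = P.V. ∫_{ℝ^d} (f(x) − f(x+y))/|y|^{d+2α} dy. Let ω(ξ,t) be continuous in (ξ,t) and piecewise C¹ in t for each fixed ξ, such that for each fixed t ≥ 0 the function ω(·,t) is a modulus of continuity with ∂²_{ξξ}ω(0,t) = −∞ (i.e. the second derivative tends to −∞ as ξ → 0+ whenever the one-sided first derivative at 0 is finite). Let Ω(ξ,t) be, for each t, a modulus of continuity in ξ such that: whenever |θ(x,t) − θ(y,t)| ≤ ω(|x−y|,t) for all x,y, one has |u(x,t) − u(y,t)| ≤ Ω(|x−y|,t) for all x,y. Assume θ(·,0) obeys ω(·,0), and that ∂_t ω(ξ,t) > Ω(ξ,t)·∂_ξ ω(ξ,t) + D_{α,ω}(ξ,t) holds for all ξ, t > 0 with ω(ξ,t) ≤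 2‖θ(·,t)‖_{L^∞}, where D_{α,ω}(ξ,t) = c·( ∫_0^{ξ/2} [ω(ξ+2η,t)+ω(ξ−2η,t)−2ω(ξ,t)]/η^{1+2α} dη + ∫_{ξ/2}^∞ [ω(ξ+2η,t)−ω(2η−ξ,t)−2ω(ξ,t)]/η^{1+2α} dη ), and at points where ∂_ξω (resp. ∂_tω) does not exist the larger (resp. smaller) one-sided derivative is taken. Then θ(·,t) obeys the modulus of continuity ω(·,t) for all t > 0. -/

import Mathlib

open Set MeasureTheory Filter Topology

/-- A modulus of continuity: `ω 0 = 0`, continuous, increasing and concave on `[0,∞)`,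
and piecewise `C¹` on `(0,∞)`. -/
def IsModulusOfContinuity (ω : ℝ → ℝ) : Prop :=
  ω 0 = 0 ∧ ContinuousOn ω (Ici 0) ∧ StrictMonoOn ω (Ici 0) ∧ ConcaveOn ℝ (Ici 0) ω ∧
  ∃ S : Finset ℝ, (∀ ξ ∈ Ioi (0:ℝ) \ ↑S, DifferentiableAt ℝ ω ξ) ∧
    ContinuousOn (deriv ω) (Ioi (0:ℝ) \ ↑S)

/-!
Suppose that `ω` is violated. Contracting `ω` by a factor `λ(t)` that grows in time makes the key
inequality strict, and by compactness there is a first time `t₀` at which `θ(·,t₀)` touches the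
modulus `V = λω` at a pair `x₀ ≠ y₀`; pairs near the diagonal are excluded by `∂²ω(0,t) = -∞`.
Contact with `ω` where `ω = 2‖θ‖_∞` is impossible: the two points would be extrema of `θ`, whereas
the gradient cannot vanish at a contact with a strictly increasing concave modulus. So, for `λ`
close to `1`, the key inequality is available in a neighbourhood of the contact.

At the contact the gradients of `θ` point along `x₀ - y₀` and have the size of the slope of `V`,
which bounds the drift by `Ω ∂V`. Reflecting across the perpendicular bisector of `x₀` and `y₀`,
and integrating over the directions orthogonal to `x₀ - y₀`, bounds the dissipation of `θ` by the
one-dimensional dissipation of `V`.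

The time derivative of `V(ξ,·)` exists only off a finite set depending on `ξ`, possibly containing
`t₀`, so the two sides cannot be compared at the contact itself. Let instead `p(z,t)` be the
difference of `θ` at `x₀` and `y₀` moved apart by `z`, and average the gap `V(ξ₀+z,t) - p(z,t) ≥ 0`
in `z`, where `ξ₀ = |x₀ - y₀|`, against an arch of a cosine of width `r`. By discrete integration by
parts, the average of the dissipation of `V` at small scales, where it may be infinite, is
controlled by the average of the gap and by the second derivatives of `p`. Hence, as long as the
averaged gap is of order `r²`, it grows at a rate independent of `r`; at `t₀` it is of this order,
so it would have been negative shortly before.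
-/

/-! ### Concave moduli and their second differences -/

/-- The part of the notion of a modulus of continuity on which the comparison with the
dissipation rests. Only the values on `[0, ∞)` matter. -/
structure IsConcaveModulus (w : ℝ → ℝ) : Prop where
  zero : w 0 = 0
  monotoneOn : MonotoneOn w (Ici 0)
  concaveOn : ConcaveOn ℝ (Ici 0) w

lemma IsModulusOfContinuity.isConcaveModulus {w : ℝ → ℝ} (hw : IsModulusOfContinuity w) :
    IsConcaveModulus w :=
  ⟨hw.1, hw.2.2.1.monotoneOn, hw.2.2.2.1⟩

/-- The odd extension to `ℝ` of a function on `[0, ∞)` vanishing at `0`. -/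
noncomputable def oddExt (w : ℝ → ℝ) (x : ℝ) : ℝ := w (max x 0) - w (max (-x) 0)

lemma oddExt_neg (w : ℝ → ℝ) (x : ℝ) : oddExt w (-x) = - oddExt w x := by
  simp [oddExt]

/-- The negated second difference of the odd extension of `w`, at `ξ` with step `2 * η`. Up to
sign, this is the numerator of both integrals of the one-dimensional dissipation of `w`, the odd
extension accounting for the change of form at `η = ξ / 2`. -/
noncomputable def concavityDefect (w : ℝ → ℝ) (ξ η : ℝ) : ℝ :=
  2 * oddExt w ξ - oddExt w (ξ + 2 * η) - oddExt w (ξ - 2 * η)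

lemma concavityDefect_abs (w : ℝ → ℝ) (ξ η : ℝ) :
    concavityDefect w ξ |η| = concavityDefect w ξ η := by
  rcases abs_choice η with h | h <;> rw [h]
  simp only [concavityDefect, mul_neg, sub_neg_eq_add, ← sub_eq_add_neg]
  ring

/-- The contribution of the scales below `κ` to the dissipation of `w` at `ξ`. It is kept in
`ENNReal` because it may be infinite. -/
noncomputable def nearDefect (β κ : ℝ) (w : ℝ → ℝ) (ξ : ℝ) : ENNReal :=
  ∫⁻ η in Ioo 0 κ, ENNReal.ofReal (concavityDefect w ξ η / η ^ (1 + β))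

/-- The contribution of the scales above `κ` to the dissipation of `w` at `ξ`. -/
noncomputable def farDefect (β κ : ℝ) (w : ℝ → ℝ) (ξ : ℝ) : ℝ :=
  ∫ η in Ioi κ, concavityDefect w ξ η / η ^ (1 + β)

/-- The dissipation `D` of the modulus `w` at `ξ`, without its constant factor. -/
noncomputable def modulusDissipation (β : ℝ) (w : ℝ → ℝ) (ξ : ℝ) : ℝ :=
  (∫ η in Ioo 0 (ξ / 2), (w (ξ + 2 * η) + w (ξ - 2 * η) - 2 * w ξ) / η ^ (1 + β)) +
    ∫ η in Ioi (ξ / 2), (w (ξ + 2 * η) - w (2 * η - ξ) - 2 * w ξ) / η ^ (1 + β)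

lemma integrableOn_Ioi_const_div_rpow {β κ : ℝ} (hβ : 0 < β) (hκ : 0 < κ) (K : ℝ) :
    IntegrableOn (fun η : ℝ => K / η ^ (1 + β)) (Ioi κ) := by
  have hpow := integrableOn_Ioi_rpow_of_lt (by linarith : -(1 + β) < -1) hκ
  refine IntegrableOn.congr_fun (hpow.const_mul K) (fun η hη => ?_) measurableSet_Ioi
  simp only [Real.rpow_neg (hκ.trans hη).le, div_eq_mul_inv]

lemma mul_le_mul_of_concaveOn {s : Set ℝ} {w : ℝ → ℝ} (hw : ConcaveOn ℝ s w) (h0s : 0 ∈ s)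
    (h0 : w 0 = 0) {x y : ℝ} (hx : 0 ≤ x) (hxy : x ≤ y) (hys : y ∈ s) : x * w y ≤ y * w x := by
  rcases hx.eq_or_lt with rfl | hx
  · simp [h0]
  have hy : 0 < y := hx.trans_le hxy
  have h := hw.2 h0s hys (sub_nonneg.2 ((div_le_one hy).2 hxy)) (by positivity)
    (sub_add_cancel 1 (x / y))
  simp only [h0, smul_eq_mul, mul_zero, zero_add] at h
  rwa [div_mul_cancel₀ _ hy.ne', div_mul_eq_mul_div, div_le_iff₀ hy, mul_comm (w x)] at h

namespace IsConcaveModulus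

variable {w : ℝ → ℝ} (hw : IsConcaveModulus w)
include hw

lemma nonneg {x : ℝ} (hx : 0 ≤ x) : 0 ≤ w x :=
  hw.zero ▸ hw.monotoneOn self_mem_Ici hx hx

lemma mul_le_mul {x y : ℝ} (hx : 0 ≤ x) (hxy : x ≤ y) : x * w y ≤ y * w x :=
  mul_le_mul_of_concaveOn hw.concaveOn self_mem_Ici hw.zero hx hxy (hx.trans hxy)

lemma add_le {x y : ℝ} (hx : 0 ≤ x) (hy : 0 ≤ y) : w (x + y) ≤ w x + w y := by
  rcases (add_nonneg hx hy).eq_or_lt with h | h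
  · obtain ⟨rfl, rfl⟩ := (add_eq_zero_iff_of_nonneg hx hy).1 h.symm
    simp [hw.zero]
  · have hx' := hw.mul_le_mul hx (le_add_of_nonneg_right hy)
    have hy' := hw.mul_le_mul hy (le_add_of_nonneg_left hx)
    exact le_of_mul_le_mul_left (by linarith) h

lemma midpoint_le {x h : ℝ} (hh : 0 ≤ h) (hhx : h ≤ x) : w (x + h) + w (x - h) ≤ 2 * w x := by
  have := hw.concaveOn.2 (sub_nonneg.2 hhx) (add_nonneg (hh.trans hhx) hh)
    (by norm_num : (0 : ℝ) ≤ 1 / 2) (by norm_num : (0 : ℝ) ≤ 1 / 2) (by norm_num)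
  simp only [smul_eq_mul] at this
  rw [show 1 / 2 * (x - h) + 1 / 2 * (x + h) = x by ring] at this
  linarith

lemma const_mul {c : ℝ} (hc : 0 ≤ c) : IsConcaveModulus fun x => c * w x where
  zero := by simp [hw.zero]
  monotoneOn := fun _ hx _ hy hxy => mul_le_mul_of_nonneg_left (hw.monotoneOn hx hy hxy) hc
  concaveOn := hw.concaveOn.smul hc

lemma min_const {M : ℝ} (hM : 0 ≤ M) : IsConcaveModulus fun x => min (w x) M where
  zero := by simp [hw.zero, hM]
  monotoneOn := hw.monotoneOn.inf monotoneOn_const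
  concaveOn := hw.concaveOn.inf (concaveOn_const M (convex_Ici 0))

lemma exists_hasDerivWithinAt_supergradient {ξ : ℝ} (hξ : 0 < ξ) :
    ∃ b, HasDerivWithinAt w b (Ici ξ) ξ ∧ ∀ x, 0 ≤ x → w x ≤ w ξ + b * (x - ξ) := by
  have hcv : ConvexOn ℝ (Ici 0) (-w) := hw.concaveOn.neg
  have hint : ξ ∈ interior (Ici (0 : ℝ)) := by rwa [interior_Ici]
  refine ⟨-derivWithin (-w) (Ioi ξ) ξ, ?_, fun x hx => ?_⟩
  · rw [← hasDerivWithinAt_Ioi_iff_Ici]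
    simpa using (hcv.hasDerivWithinAt_rightDeriv_of_mem_interior hint).neg
  · rcases lt_trichotomy x ξ with h | rfl | h
    · have hslope := (hcv.slope_le_leftDeriv_of_mem_interior hx hint h).trans
        (hcv.leftDeriv_le_rightDeriv_of_mem_interior hint)
      rw [slope_def_field, div_le_iff₀ (sub_pos.2 h)] at hslope
      simp only [Pi.neg_apply] at hslope
      linarith
    · simp
    · have hslope := hcv.rightDeriv_le_slope_of_mem_interior hint hx h
      rw [slope_def_field, le_div_iff₀ (sub_pos.2 h)] at hslope
      simp only [Pi.neg_apply] at hslope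
      linarith

lemma le_add_mul_of_hasDerivWithinAt {ξ b : ℝ} (hξ : 0 < ξ) (hb : HasDerivWithinAt w b (Ici ξ) ξ)
    {x : ℝ} (hx : 0 ≤ x) : w x ≤ w ξ + b * (x - ξ) := by
  obtain ⟨b', hb', hsup⟩ := hw.exists_hasDerivWithinAt_supergradient hξ
  obtain rfl : b = b' := (uniqueDiffWithinAt_Ici ξ).eq_deriv _ hb hb'
  exact hsup x hx

lemma supergradient_nonneg {ξ b : ℝ} (hξ : 0 ≤ ξ) (hb : ∀ x, 0 ≤ x → w x ≤ w ξ + b * (x - ξ)) :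
    0 ≤ b := by
  have := hb (ξ + 1) (by linarith)
  have := hw.monotoneOn (a := ξ) hξ (show (0 : ℝ) ≤ ξ + 1 by linarith) (by linarith)
  linarith

lemma oddExt_of_nonneg {x : ℝ} (hx : 0 ≤ x) : oddExt w x = w x := by
  simp [oddExt, hx, hw.zero]

lemma oddExt_of_nonpos {x : ℝ} (hx : x ≤ 0) : oddExt w x = - w (-x) := by
  simp [oddExt, hx, hw.zero]

lemma slope_le_of_hasDerivWithinAt {ξ σ b : ℝ} (hξ : 0 < ξ) (hσ : 0 < σ)
    (hb : HasDerivWithinAt w b (Ici ξ) ξ) : (oddExt w (ξ + σ) - oddExt w ξ) / σ ≤ b := by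
  rw [hw.oddExt_of_nonneg hξ.le, hw.oddExt_of_nonneg (by linarith), div_le_iff₀ hσ]
  linarith [hw.le_add_mul_of_hasDerivWithinAt hξ hb (x := ξ + σ) (by linarith)]

lemma monotone_oddExt : Monotone (oddExt w) := fun x y hxy =>
  sub_le_sub
    (hw.monotoneOn (le_max_right x 0) (le_max_right y 0) (max_le_max_right 0 hxy))
    (hw.monotoneOn (le_max_right (-y) 0) (le_max_right (-x) 0)
      (max_le_max_right 0 (neg_le_neg hxy)))

lemma abs_oddExt_le {B : ℝ} (hB : ∀ x, 0 ≤ x → w x ≤ B) (x : ℝ) : |oddExt w x| ≤ B := by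
  rcases le_total 0 x with h | h
  · rw [hw.oddExt_of_nonneg h, abs_of_nonneg (hw.nonneg h)]
    exact hB x h
  · have h' : 0 ≤ -x := neg_nonneg.2 h
    rw [hw.oddExt_of_nonpos h, abs_neg, abs_of_nonneg (hw.nonneg h')]
    exact hB _ h'

lemma concavityDefect_of_le {ξ η : ℝ} (hη : 0 ≤ η) (h : 2 * η ≤ ξ) :
    concavityDefect w ξ η = 2 * w ξ - w (ξ + 2 * η) - w (ξ - 2 * η) := by
  rw [concavityDefect, hw.oddExt_of_nonneg (by linarith), hw.oddExt_of_nonneg (by linarith),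
    hw.oddExt_of_nonneg (by linarith)]

lemma concavityDefect_of_ge {ξ η : ℝ} (hξ : 0 ≤ ξ) (h : ξ ≤ 2 * η) :
    concavityDefect w ξ η = 2 * w ξ - w (ξ + 2 * η) + w (2 * η - ξ) := by
  rw [concavityDefect, hw.oddExt_of_nonneg hξ, hw.oddExt_of_nonneg (by linarith),
    hw.oddExt_of_nonpos (by linarith), neg_sub, sub_neg_eq_add]

lemma concavityDefect_nonneg {ξ : ℝ} (hξ : 0 ≤ ξ) (η : ℝ) : 0 ≤ concavityDefect w ξ η := by
  rw [← concavityDefect_abs]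
  have hη := abs_nonneg η
  rcases le_total (2 * |η|) ξ with h | h
  · rw [hw.concavityDefect_of_le hη h]
    have := hw.midpoint_le (by positivity) h
    linarith
  · rw [hw.concavityDefect_of_ge hξ h]
    have hstep := hw.add_le (sub_nonneg.2 h) (add_nonneg hξ hξ)
    have hdouble := hw.add_le hξ hξ
    rw [show 2 * |η| - ξ + (ξ + ξ) = ξ + 2 * |η| by ring] at hstep
    linarith

lemma concavityDefect_le {ξ : ℝ} (hξ : 0 ≤ ξ) (η : ℝ) : concavityDefect w ξ η ≤ 2 * w ξ := by
  have : oddExt w (-(ξ + 2 * η)) ≤ oddExt w (ξ - 2 * η) := hw.monotone_oddExt (by linarith)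
  rw [oddExt_neg] at this
  rw [concavityDefect, hw.oddExt_of_nonneg hξ]
  linarith

lemma measurable_concavityDefect (ξ : ℝ) : Measurable (concavityDefect w ξ) := by
  have := hw.monotone_oddExt.measurable
  unfold concavityDefect
  fun_prop

lemma concavityDefect_le_min_const {M ξ : ℝ} (hξ : 0 ≤ ξ) (hM : w ξ ≤ M) (η : ℝ) :
    concavityDefect w ξ η ≤ concavityDefect (fun x => min (w x) M) ξ η := by
  have hv := hw.min_const ((hw.nonneg hξ).trans hM)
  rw [← concavityDefect_abs w, ← concavityDefect_abs fun x => min (w x) M]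
  have hη := abs_nonneg η
  have hfar := min_le_left (w (ξ + 2 * |η|)) M
  rcases le_total (2 * |η|) ξ with h | h
  · rw [hw.concavityDefect_of_le hη h, hv.concavityDefect_of_le hη h, min_eq_left hM]
    have := min_le_left (w (ξ - 2 * |η|)) M
    linarith
  · rw [hw.concavityDefect_of_ge hξ h, hv.concavityDefect_of_ge hξ h, min_eq_left hM]
    have hmono : w (2 * |η| - ξ) ≤ w (ξ + 2 * |η|) :=
      hw.monotoneOn (sub_nonneg.2 h) (show (0 : ℝ) ≤ _ by positivity) (by linarith)
    rcases le_total (w (2 * |η| - ξ)) M with h' | h'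
    · rw [min_eq_left h']
      linarith
    · rw [min_eq_right h', min_eq_right (h'.trans hmono)]
      linarith

lemma concavityDefect_div_nonneg (β : ℝ) {ξ η : ℝ} (hξ : 0 ≤ ξ) (hη : 0 ≤ η) :
    0 ≤ concavityDefect w ξ η / η ^ (1 + β) :=
  div_nonneg (hw.concavityDefect_nonneg hξ η) (by positivity)

lemma measurable_concavityDefect_div (β ξ : ℝ) :
    Measurable fun η => concavityDefect w ξ η / η ^ (1 + β) := by
  have := hw.measurable_concavityDefect ξ
  fun_prop

lemma norm_concavityDefect_div_le (β : ℝ) {ξ η : ℝ} (hξ : 0 ≤ ξ) (hη : 0 ≤ η) :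
    ‖concavityDefect w ξ η / η ^ (1 + β)‖ ≤ 2 * w ξ / η ^ (1 + β) := by
  rw [Real.norm_of_nonneg (hw.concavityDefect_div_nonneg β hξ hη)]
  gcongr
  exact hw.concavityDefect_le hξ η

lemma integrableOn_concavityDefect_div {β κ ξ : ℝ} (hβ : 0 < β) (hκ : 0 < κ) (hξ : 0 ≤ ξ) :
    IntegrableOn (fun η : ℝ => concavityDefect w ξ η / η ^ (1 + β)) (Ioi κ) := by
  refine (integrableOn_Ioi_const_div_rpow hβ hκ (2 * w ξ)).mono'
    (hw.measurable_concavityDefect_div β ξ).aestronglyMeasurable ?_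
  filter_upwards [ae_restrict_mem measurableSet_Ioi] with η hη
  exact hw.norm_concavityDefect_div_le β hξ (hκ.trans hη).le

lemma farDefect_le_min_const {β κ ξ M : ℝ} (hβ : 0 < β) (hκ : 0 < κ) (hξ : 0 ≤ ξ) (hM : w ξ ≤ M) :
    farDefect β κ w ξ ≤ farDefect β κ (fun x => min (w x) M) ξ := by
  refine setIntegral_mono_on (hw.integrableOn_concavityDefect_div hβ hκ hξ)
    ((hw.min_const ((hw.nonneg hξ).trans hM)).integrableOn_concavityDefect_div hβ hκ hξ)
    measurableSet_Ioi fun η hη => ?_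
  have := hκ.trans hη
  gcongr
  exact hw.concavityDefect_le_min_const hξ hM η

lemma integral_Ioo_le_toReal_nearDefect_add {β κ ξ : ℝ} (hκ : 0 < κ) (hκξ : κ ≤ ξ / 2) :
    ∫ η in Ioo 0 (ξ / 2), concavityDefect w ξ η / η ^ (1 + β) ≤
      (nearDefect β κ w ξ).toReal +
        ∫ η in Ico κ (ξ / 2), concavityDefect w ξ η / η ^ (1 + β) := by
  have hnn : ∀ η, 0 < η → 0 ≤ concavityDefect w ξ η / η ^ (1 + β) := fun η hη =>
    hw.concavityDefect_div_nonneg β (by linarith) hη.le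
  by_cases hi : IntegrableOn (fun η => concavityDefect w ξ η / η ^ (1 + β)) (Ioo 0 (ξ / 2))
  · have hdisj : Disjoint (Ioo 0 κ) (Ico κ (ξ / 2)) :=
      disjoint_left.2 fun η hη hη' => hη.2.not_ge hη'.1
    rw [← Ioo_union_Ico_eq_Ioo hκ hκξ, setIntegral_union hdisj measurableSet_Ico
      (hi.mono_set (Ioo_subset_Ioo_right hκξ)) (hi.mono_set (Ico_subset_Ioo_left hκ)),
      integral_eq_lintegral_of_nonneg_ae _
        (hw.measurable_concavityDefect_div β ξ).aestronglyMeasurable, nearDefect]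
    filter_upwards [ae_restrict_mem measurableSet_Ioo] with η hη using hnn η hη.1
  · rw [integral_undef hi]
    exact add_nonneg ENNReal.toReal_nonneg
      (setIntegral_nonneg measurableSet_Ico fun η hη => hnn η (hκ.trans_le hη.1))

/-- Only an inequality, because the integral over `(0, ξ / 2)` is `0` when it diverges. -/
lemma neg_nearDefect_sub_farDefect_le {β κ ξ : ℝ} (hβ : 0 < β) (hκ : 0 < κ) (hκξ : κ ≤ ξ / 2) :
    -(nearDefect β κ w ξ).toReal - farDefect β κ w ξ ≤ modulusDissipation β w ξ := by
  have hξ : 0 < ξ := by linarith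
  have hnear : ∫ η in Ioo 0 (ξ / 2), (w (ξ + 2 * η) + w (ξ - 2 * η) - 2 * w ξ) / η ^ (1 + β) =
      - ∫ η in Ioo 0 (ξ / 2), concavityDefect w ξ η / η ^ (1 + β) := by
    rw [← integral_neg]
    refine setIntegral_congr_fun measurableSet_Ioo fun η hη => ?_
    simp only [hw.concavityDefect_of_le hη.1.le (by linarith [hη.2])]
    ring
  have hfar : ∫ η in Ioi (ξ / 2), (w (ξ + 2 * η) - w (2 * η - ξ) - 2 * w ξ) / η ^ (1 + β) =
      - ∫ η in Ioi (ξ / 2), concavityDefect w ξ η / η ^ (1 + β) := by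
    rw [← integral_neg]
    refine setIntegral_congr_fun measurableSet_Ioi fun η hη => ?_
    simp only [hw.concavityDefect_of_ge (η := η) hξ.le (by linarith [mem_Ioi.1 hη])]
    ring
  have hint : IntegrableOn (fun η => concavityDefect w ξ η / η ^ (1 + β)) (Ici κ) :=
    (integrableOn_Ici_iff_integrableOn_Ioi).2 (hw.integrableOn_concavityDefect_div hβ hκ hξ.le)
  have hsplit : farDefect β κ w ξ = (∫ η in Ico κ (ξ / 2), concavityDefect w ξ η / η ^ (1 + β)) +
      ∫ η in Ioi (ξ / 2), concavityDefect w ξ η / η ^ (1 + β) := by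
    rw [farDefect, ← integral_Ici_eq_integral_Ioi, ← integral_Ici_eq_integral_Ioi (x := ξ / 2),
      ← setIntegral_union (disjoint_left.2 fun η hη hη' => hη.2.not_ge hη') measurableSet_Ici
        (hint.mono_set Ico_subset_Ici_self) (hint.mono_set (Ici_subset_Ici.2 hκξ)),
      Ico_union_Ici_eq_Ici hκξ]
  have := hw.integral_Ioo_le_toReal_nearDefect_add (β := β) hκ hκξ
  rw [modulusDissipation]
  linarith

end IsConcaveModulus

/-! ### The truncated kernel of the fractional Laplacian -/

section Kernel

variable {E : Type*} [NormedAddCommGroup E] [InnerProductSpace ℝ E]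

/-- The kernel `‖z‖ ^ (-(dim E + β))` of the fractional Laplacian of order `β`, set to `0` on the
ball of radius `ε`. -/
noncomputable def truncatedKernel (β ε : ℝ) (z : E) : ℝ :=
  {z : E | ε < ‖z‖}.indicator (fun z => (‖z‖ ^ (Module.finrank ℝ E + β))⁻¹) z

variable {β ε : ℝ}

lemma truncatedKernel_of_lt {z : E} (hz : ε < ‖z‖) :
    truncatedKernel β ε z = (‖z‖ ^ (Module.finrank ℝ E + β))⁻¹ :=
  indicator_of_mem (s := {z : E | ε < ‖z‖}) hz _

lemma truncatedKernel_of_le {z : E} (hz : ‖z‖ ≤ ε) : truncatedKernel β ε z = 0 :=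
  indicator_of_notMem (s := {z : E | ε < ‖z‖}) hz.not_gt _

lemma truncatedKernel_nonneg (z : E) : 0 ≤ truncatedKernel β ε z :=
  indicator_nonneg (fun _ _ => by positivity) z

lemma truncatedKernel_congr {z z' : E} (h : ‖z‖ = ‖z'‖) :
    truncatedKernel β ε z = truncatedKernel β ε z' := by
  simp only [truncatedKernel, indicator, mem_ofPred_eq, h]

lemma truncatedKernel_le_rpow_inv {r : ℝ} (hr : 0 < r) (hβ : 0 ≤ β) {z : E} (hz : r ≤ ‖z‖) :
    truncatedKernel β ε z ≤ (r ^ (Module.finrank ℝ E + β))⁻¹ := by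
  refine (indicator_le_self' (fun _ _ => by positivity) z).trans ?_
  gcongr

lemma truncatedKernel_anti (hε : 0 < ε) (hβ : 0 ≤ β) {z z' : E} (hz : ε < ‖z‖) (h : ‖z‖ ≤ ‖z'‖) :
    truncatedKernel β ε z' ≤ truncatedKernel β ε z := by
  rw [truncatedKernel_of_lt hz]
  exact truncatedKernel_le_rpow_inv (hε.trans hz) hβ h

variable [MeasurableSpace E] [BorelSpace E]

lemma measurable_truncatedKernel : Measurable (truncatedKernel β ε : E → ℝ) :=
  Measurable.indicator (by fun_prop) (measurableSet_lt measurable_const measurable_norm)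

lemma setIntegral_div_norm_rpow_eq (μ : Measure E) (f : E → ℝ) :
    ∫ z in {z : E | ε < ‖z‖}, f z / ‖z‖ ^ (Module.finrank ℝ E + β) ∂μ =
      ∫ z, f z * truncatedKernel β ε z ∂μ := by
  rw [← integral_indicator (measurableSet_lt measurable_const measurable_norm)]
  refine integral_congr_ae (ae_of_all _ fun z => ?_)
  simp only [truncatedKernel, indicator_apply, div_eq_mul_inv, mul_ite, mul_zero]

variable [FiniteDimensional ℝ E]

lemma integrable_truncatedKernel (hβ : 0 < β) (hε : 0 < ε) :
    Integrable (truncatedKernel β ε : E → ℝ) := by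
  set q : ℝ := Module.finrank ℝ E + β
  have hbound : Integrable fun z : E => (1 / ε + 1) ^ q * (1 + ‖z‖) ^ (-q) :=
    (integrable_one_add_norm (lt_add_of_pos_right _ hβ)).const_mul _
  refine hbound.mono' measurable_truncatedKernel.aestronglyMeasurable (ae_of_all _ fun z => ?_)
  rw [Real.norm_of_nonneg (truncatedKernel_nonneg z)]
  rcases lt_or_ge ε ‖z‖ with hz | hz
  · have hz0 : 0 < ‖z‖ := hε.trans hz
    have hscale : 1 + ‖z‖ ≤ (1 / ε + 1) * ‖z‖ := by
      have : 1 ≤ 1 / ε * ‖z‖ := by rw [one_div_mul_eq_div, one_le_div hε]; exact hz.le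
      linarith
    rw [truncatedKernel_of_lt hz, Real.rpow_neg (by positivity), ← div_eq_mul_inv, inv_eq_one_div,
      div_le_div_iff₀ (by positivity) (by positivity), one_mul,
      ← Real.mul_rpow (by positivity) (by positivity)]
    gcongr
  · rw [truncatedKernel_of_le hz]
    positivity

lemma integrable_mul_truncatedKernel (hβ : 0 < β) (hε : 0 < ε) {f : E → ℝ} (hf : Measurable f)
    {B : ℝ} (hB : ∀ z, |f z| ≤ B) (x : E) :
    Integrable fun z => f z * truncatedKernel β ε (z - x) :=
  ((integrable_truncatedKernel hβ hε).comp_sub_right x).bdd_mul hf.aestronglyMeasurable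
    (ae_of_all _ hB)

end Kernel

section Slice

variable {E : Type*} [NormedAddCommGroup E] [InnerProductSpace ℝ E] [FiniteDimensional ℝ E]
  [MeasurableSpace E] [BorelSpace E]

lemma exists_measurePreserving_inner_prod {n : ℕ} (hn : Module.finrank ℝ E = n + 1) {e : E}
    (he : ‖e‖ = 1) :
    ∃ Φ : E → ℝ × (Fin n → ℝ), MeasurePreserving Φ volume volume ∧
      (∀ z, (Φ z).1 = inner ℝ e z) ∧ ∀ z, ‖z‖ ^ 2 = (Φ z).1 ^ 2 + ∑ i, (Φ z).2 i ^ 2 := by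
  have hunit : Orthonormal ℝ (({0} : Set (Fin (n + 1))).domRestrict fun _ => e) :=
    ⟨fun _ => he, fun i j hij => absurd (Subsingleton.elim i j) hij⟩
  obtain ⟨b, hb⟩ := hunit.exists_orthonormalBasis_extension_of_card_eq (by simpa using hn)
  refine ⟨fun z => MeasurableEquiv.piFinSuccAbove (fun _ => ℝ) 0 (WithLp.ofLp (b.repr z)),
    (volume_preserving_piFinSuccAbove (fun _ => ℝ) 0).comp
      ((PiLp.volume_preserving_ofLp (Fin (n + 1))).comp b.measurePreserving_repr),
    fun z => ?_, fun z => ?_⟩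
  · simp only [MeasurableEquiv.piFinSuccAbove_apply, ← hb 0 rfl]
    exact b.repr_apply_apply z 0
  · rw [← b.repr.norm_map z, EuclideanSpace.norm_sq_eq, Fin.sum_univ_succ]
    simp [MeasurableEquiv.piFinSuccAbove_apply]
    rfl

/-- Bound the fibre integral from below by that over the cube `(0, η)ⁿ`. -/
lemma ofReal_le_lintegral_sqrt_rpow_inv {n : ℕ} {q η : ℝ} (hq : 0 ≤ q) (hη : 0 < η) :
    ENNReal.ofReal ((√((n : ℝ) + 1) ^ q)⁻¹ * (η ^ (q - n))⁻¹) ≤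
      ∫⁻ y : Fin n → ℝ, ENNReal.ofReal ((√(η ^ 2 + ∑ i, y i ^ 2) ^ q)⁻¹) := by
  have hcube : ∀ y ∈ univ.pi fun _ : Fin n => Ioo (0 : ℝ) η,
      ENNReal.ofReal ((√((n : ℝ) + 1) ^ q)⁻¹ * (η ^ q)⁻¹) ≤
        ENNReal.ofReal ((√(η ^ 2 + ∑ i, y i ^ 2) ^ q)⁻¹) := by
    intro y hy
    have hsum : ∑ i, y i ^ 2 ≤ n * η ^ 2 := by
      simpa using Finset.sum_le_sum fun i (_ : i ∈ Finset.univ) =>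
        pow_le_pow_left₀ (hy i trivial).1.le (hy i trivial).2.le 2
    rw [← mul_inv, ← Real.mul_rpow (by positivity) hη.le]
    have hsqrt : √(η ^ 2 + ∑ i, y i ^ 2) ≤ √((n : ℝ) + 1) * η := by
      rw [Real.sqrt_le_left (by positivity), mul_pow, Real.sq_sqrt (by positivity)]
      linarith
    gcongr
  calc ENNReal.ofReal ((√((n : ℝ) + 1) ^ q)⁻¹ * (η ^ (q - n))⁻¹)
      = ENNReal.ofReal ((√((n : ℝ) + 1) ^ q)⁻¹ * (η ^ q)⁻¹) *
          volume (univ.pi fun _ : Fin n => Ioo (0 : ℝ) η) := by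
        rw [Real.volume_pi_Ioo]
        simp only [sub_zero, Finset.prod_const, Finset.card_univ, Fintype.card_fin]
        rw [← ENNReal.ofReal_pow hη.le, ← ENNReal.ofReal_mul (by positivity), mul_assoc,
          Real.rpow_sub hη, Real.rpow_natCast, inv_div, div_eq_inv_mul]
    _ = ∫⁻ _ in univ.pi fun _ : Fin n => Ioo (0 : ℝ) η,
          ENNReal.ofReal ((√((n : ℝ) + 1) ^ q)⁻¹ * (η ^ q)⁻¹) := (setLIntegral_const _ _).symm
    _ ≤ ∫⁻ y in univ.pi fun _ : Fin n => Ioo (0 : ℝ) η,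
          ENNReal.ofReal ((√(η ^ 2 + ∑ i, y i ^ 2) ^ q)⁻¹) :=
        setLIntegral_mono' (MeasurableSet.univ_pi fun _ => measurableSet_Ioo) hcube
    _ ≤ _ := setLIntegral_le_lintegral _ _

lemma setLIntegral_le_lintegral_inner_mul_norm_rpow_inv {β : ℝ} (hβ : 0 ≤ β) {e : E} (he : ‖e‖ = 1)
    {F : ℝ → ENNReal} (hF : Measurable F) :
    ∫⁻ η in Ioi 0, F η * ENNReal.ofReal
        ((√(Module.finrank ℝ E) ^ (Module.finrank ℝ E + β))⁻¹ * (η ^ (1 + β))⁻¹) ≤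
      ∫⁻ z, F (inner ℝ e z) * ENNReal.ofReal ((‖z‖ ^ (Module.finrank ℝ E + β))⁻¹) := by
  have : Nontrivial E := nontrivial_of_ne e 0 (norm_ne_zero_iff.1 (by simp [he]))
  obtain ⟨n, hn⟩ := Nat.exists_eq_succ_of_ne_zero (Module.finrank_pos (R := ℝ) (M := E)).ne'
  obtain ⟨Φ, hΦ, hfst, hnorm⟩ := exists_measurePreserving_inner_prod hn he
  have hmeas : Measurable fun y : ℝ × (Fin n → ℝ) => F y.1 *
      ENNReal.ofReal ((√(y.1 ^ 2 + ∑ i, y.2 i ^ 2) ^ (Module.finrank ℝ E + β))⁻¹) :=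
    (hF.comp measurable_fst).mul (ENNReal.measurable_ofReal.comp (by fun_prop))
  have hcoord : ∫⁻ z, F (inner ℝ e z) * ENNReal.ofReal ((‖z‖ ^ (Module.finrank ℝ E + β))⁻¹) =
      ∫⁻ y : ℝ × (Fin n → ℝ), F y.1 *
        ENNReal.ofReal ((√(y.1 ^ 2 + ∑ i, y.2 i ^ 2) ^ (Module.finrank ℝ E + β))⁻¹) := by
    rw [← hΦ.lintegral_comp hmeas]
    refine lintegral_congr fun z => ?_
    rw [← hnorm, Real.sqrt_sq (norm_nonneg z), hfst]
  rw [hcoord, Measure.volume_eq_prod, lintegral_prod _ hmeas.aemeasurable]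
  refine (setLIntegral_mono' measurableSet_Ioi fun η hη => ?_).trans
    (setLIntegral_le_lintegral (Ioi 0) _)
  have hfibre := ofReal_le_lintegral_sqrt_rpow_inv (n := n) (q := Module.finrank ℝ E + β)
    (by positivity) hη
  have hexp : (Module.finrank ℝ E + β : ℝ) - n = 1 + β := by rw [hn]; push_cast; ring
  have hsucc : (n : ℝ) + 1 = Module.finrank ℝ E := by rw [hn]; push_cast; rfl
  rw [hexp, hsucc] at hfibre
  exact (mul_le_mul_right hfibre (F η)).trans (lintegral_const_mul _ (by fun_prop)).ge

end Slice

/-! ### The dissipation at a contact pair -/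

/-- The pair `x`, `y` saturates the modulus `w` that `g` respects. -/
structure IsContactPair {X : Type*} [PseudoMetricSpace X] (g : X → ℝ) (w : ℝ → ℝ) (x y : X) :
    Prop where
  ne : x ≠ y
  abs_sub_le : ∀ a b, |g a - g b| ≤ w (dist a b)
  sub_eq : g x - g y = w (dist x y)

lemma IsContactPair.min_const {X : Type*} [PseudoMetricSpace X] {g : X → ℝ} {w : ℝ → ℝ} {x y : X}
    {M : ℝ} (h : IsContactPair g w x y) (hM : ∀ p, |g p| ≤ M) :
    IsContactPair g (fun s => min (w s) (M + M)) x y where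
  ne := h.ne
  abs_sub_le a b := le_min (h.abs_sub_le a b) ((abs_sub _ _).trans (add_le_add (hM a) (hM b)))
  sub_eq := by
    rw [min_eq_left, h.sub_eq]
    rw [← h.sub_eq]
    exact (le_abs_self _).trans ((abs_sub _ _).trans (add_le_add (hM x) (hM y)))

section Dissipation

variable {E : Type*} [NormedAddCommGroup E] [InnerProductSpace ℝ E]

/-- The signed distance to `p` from its mirror image in the perpendicular bisector of `x` and `y`,
positive on the side of `x`. -/
noncomputable def bisectorGap (x y p : E) : ℝ := (dist p y ^ 2 - dist p x ^ 2) / dist x y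

lemma bisectorGap_eq_add_inner {x y : E} (hxy : x ≠ y) (p : E) :
    bisectorGap x y p = dist x y + 2 * inner ℝ ((dist x y)⁻¹ • (x - y)) (p - x) := by
  have hξ : dist x y ≠ 0 := (dist_pos.2 hxy).ne'
  have hy : dist p y ^ 2 = dist p x ^ 2 + 2 * inner ℝ (x - y) (p - x) + dist x y ^ 2 := by
    rw [dist_eq_norm p y, ← sub_add_sub_cancel p x y, norm_add_sq_real, ← dist_eq_norm,
      ← dist_eq_norm, real_inner_comm]
  rw [bisectorGap, hy, real_inner_smul_left]
  field_simp
  ring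

lemma neg_indicator_add_le_mul_sub_truncatedKernel {β ε B c : ℝ} (hβ : 0 < β) (hε : 0 < ε)
    {x y p : E} (hc : |c| ≤ B) (hx : dist p x < dist p y → 0 ≤ c)
    (hy : dist p y < dist p x → c ≤ 0) :
    -((Metric.closedBall x ε).indicator
          (fun _ => B * ((dist x y / 2) ^ (Module.finrank ℝ E + β))⁻¹) p +
        (Metric.closedBall y ε).indicator
          (fun _ => B * ((dist x y / 2) ^ (Module.finrank ℝ E + β))⁻¹) p) ≤
      c * (truncatedKernel β ε (p - x) - truncatedKernel β ε (p - y)) := by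
  wlog hxy : dist p x ≤ dist p y generalizing x y c
  · have := this (c := -c) (by rwa [abs_neg]) (fun h => neg_nonneg.2 (hy h))
      (fun h => neg_nonpos.2 (hx h)) (le_of_not_ge hxy)
    rw [dist_comm y x] at this
    linarith
  have hB : 0 ≤ B := (abs_nonneg c).trans hc
  have hnonneg : ∀ z : E, 0 ≤ (Metric.closedBall z ε).indicator
      (fun _ => B * ((dist x y / 2) ^ (Module.finrank ℝ E + β))⁻¹) p :=
    fun z => indicator_nonneg (fun _ _ => by positivity) p
  have hnx := hnonneg x
  have hny := hnonneg y
  rcases hxy.eq_or_lt with heq | hlt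
  · rw [truncatedKernel_congr (by rwa [← dist_eq_norm, ← dist_eq_norm] : ‖p - x‖ = ‖p - y‖)]
    linarith
  rcases lt_or_ge ε (dist p x) with hpx | hpx
  · have hanti : truncatedKernel β ε (p - y) ≤ truncatedKernel β ε (p - x) :=
      truncatedKernel_anti hε hβ.le (by rwa [← dist_eq_norm])
        (by rw [← dist_eq_norm, ← dist_eq_norm]; exact hxy)
    linarith [mul_nonneg (hx hlt) (sub_nonneg.2 hanti)]
  · have hfar : dist x y / 2 ≤ ‖p - y‖ := by
      rw [← dist_eq_norm]
      linarith [dist_triangle_left x y p]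
    have hk0 : truncatedKernel β ε (p - x) = 0 :=
      truncatedKernel_of_le (by rwa [← dist_eq_norm])
    have hbound : c * truncatedKernel β ε (p - y) ≤
        B * ((dist x y / 2) ^ (Module.finrank ℝ E + β))⁻¹ := by
      have hpos : 0 < dist x y := dist_pos.2 fun h => hlt.ne (h ▸ rfl)
      exact mul_le_mul ((le_abs_self c).trans hc)
        (truncatedKernel_le_rpow_inv (half_pos hpos) hβ.le hfar) (truncatedKernel_nonneg _) hB
    rw [indicator_of_mem (Metric.mem_closedBall.2 hpx), hk0]
    linarith

instance nonempty_perpBisector (x y : E) : Nonempty (AffineSubspace.perpBisector x y) :=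
  AffineSubspace.perpBisector_nonempty.to_subtype

variable [FiniteDimensional ℝ E]

/-- The reflection of the space across the perpendicular bisector of `x` and `y`. -/
noncomputable def bisectorReflection (x y : E) : E ≃ᵃⁱ[ℝ] E :=
  EuclideanGeometry.reflection (AffineSubspace.perpBisector x y)

lemma bisectorReflection_apply (x y p : E) :
    bisectorReflection x y p =
      ((ℝ ∙ (y - x))ᗮ).reflection (p - midpoint ℝ x y) + midpoint ℝ x y := by
  have h := EuclideanGeometry.reflection_apply_of_mem (AffineSubspace.perpBisector x y) p
    (AffineSubspace.midpoint_mem_perpBisector x y)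
  simp only [AffineSubspace.direction_perpBisector, vsub_eq_sub, vadd_eq_add] at h
  exact h

lemma bisectorReflection_bisectorReflection (x y p : E) :
    bisectorReflection x y (bisectorReflection x y p) = p :=
  EuclideanGeometry.reflection_reflection _ p

lemma bisectorReflection_left (x y : E) : bisectorReflection x y x = y := by
  have hnorm : ‖y - midpoint ℝ x y‖ = ‖x - midpoint ℝ x y‖ := by
    rw [← dist_eq_norm, ← dist_eq_norm, dist_right_midpoint, dist_left_midpoint]
  have h := Submodule.reflection_sub hnorm
  rw [sub_sub_sub_cancel_right] at h
  rw [bisectorReflection_apply, ← h, Submodule.reflection_reflection, sub_add_cancel]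

lemma dist_bisectorReflection_right (x y p : E) : dist (bisectorReflection x y p) y = dist p x := by
  simpa only [bisectorReflection_left] using (bisectorReflection x y).dist_map p x

lemma dist_bisectorReflection_left (x y p : E) : dist (bisectorReflection x y p) x = dist p y := by
  rw [← dist_bisectorReflection_right, bisectorReflection_bisectorReflection]

lemma bisectorGap_bisectorReflection (x y p : E) :
    bisectorGap x y (bisectorReflection x y p) = -bisectorGap x y p := by
  rw [bisectorGap, bisectorGap, dist_bisectorReflection_left, dist_bisectorReflection_right]
  ring

lemma dist_bisectorReflection_self {x y : E} (hxy : x ≠ y) (p : E) :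
    dist p (bisectorReflection x y p) = |bisectorGap x y p| := by
  obtain ⟨v, hv⟩ : ∃ v, v = p - midpoint ℝ x y := ⟨_, rfl⟩
  have hinner : 2 * inner ℝ (y - x) v = dist p x ^ 2 - dist p y ^ 2 := by
    have hx : p - x = v + (2⁻¹ : ℝ) • (y - x) := by
      rw [hv, ← invOf_eq_inv, ← midpoint_sub_left, sub_add_sub_cancel]
    have hy : p - y = v - (2⁻¹ : ℝ) • (y - x) := by
      rw [hv, ← invOf_eq_inv, ← right_sub_midpoint, sub_sub_sub_cancel_right]
    rw [dist_eq_norm, dist_eq_norm, hx, hy, norm_add_sq_real, norm_sub_sq_real, inner_smul_right,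
      real_inner_comm]
    ring
  have hdisp : p - bisectorReflection x y p =
      (2 * inner ℝ (y - x) v / ‖y - x‖ ^ 2) • (y - x) := by
    rw [bisectorReflection_apply, ← hv, Submodule.reflection_orthogonal_apply,
      Submodule.reflection_singleton_apply, RCLike.ofReal_real_eq_id, id,
      sub_eq_iff_eq_add.1 hv.symm]
    module
  rw [dist_eq_norm, hdisp, hinner, norm_smul, bisectorGap, dist_comm x y, dist_eq_norm y x,
    Real.norm_eq_abs, abs_div, abs_div, abs_norm, abs_sub_comm, abs_pow, abs_norm]
  have := norm_pos_iff.2 (sub_ne_zero.2 hxy.symm)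
  field_simp

variable [MeasurableSpace E] [BorelSpace E]

lemma measurePreserving_bisectorReflection (x y : E) :
    MeasurePreserving (bisectorReflection x y) := by
  rw [funext (bisectorReflection_apply x y)]
  exact (measurePreserving_add_right volume (midpoint ℝ x y)).comp
    (((ℝ ∙ (y - x))ᗮ).reflection.measurePreserving.comp
      (measurePreserving_sub_right volume (midpoint ℝ x y)))

lemma integral_bisectorReflection (x y : E) (f : E → ℝ) :
    ∫ p, f (bisectorReflection x y p) = ∫ p, f p :=
  (measurePreserving_bisectorReflection x y).integral_comp
    (bisectorReflection x y).toHomeomorph.measurableEmbedding f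

lemma const_mul_setIntegral_le_integral_inner_mul_truncatedKernel {β κ ε B : ℝ} (hβ : 0 < β)
    (hε : 0 < ε) (hκ : ε < κ) {e : E} (he : ‖e‖ = 1) {f : ℝ → ℝ} (hf : Measurable f)
    (hf0 : ∀ η, 0 ≤ f η) (hB : ∀ η, f η ≤ B) :
    (√(Module.finrank ℝ E) ^ (Module.finrank ℝ E + β))⁻¹ * ∫ η in Ioi κ, f η / η ^ (1 + β) ≤
      ∫ z, f (inner ℝ e z) * truncatedKernel β ε z := by
  set C := (√(Module.finrank ℝ E) ^ (Module.finrank ℝ E + β))⁻¹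
  have : 0 ≤ C := by positivity
  have hint : Integrable fun z => f (inner ℝ e z) * truncatedKernel β ε z :=
    (integrable_truncatedKernel hβ hε).bdd_mul
      (hf.comp (by fun_prop : Measurable fun z : E => inner ℝ e z)).aestronglyMeasurable
      (ae_of_all _ fun z => (Real.norm_of_nonneg (hf0 _)).trans_le (hB _))
  have hnonneg : ∀ z : E, 0 ≤ f (inner ℝ e z) * truncatedKernel β ε z :=
    fun z => mul_nonneg (hf0 _) (truncatedKernel_nonneg z)
  have hκ0 : 0 < κ := hε.trans hκ
  have hpos : 0 ≤ᵐ[volume.restrict (Ioi κ)] fun η => C * (f η / η ^ (1 + β)) := by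
    filter_upwards [ae_restrict_mem measurableSet_Ioi] with η hη
    have := hf0 η
    have : 0 < η := hκ0.trans hη
    simp only [Pi.zero_apply]
    positivity
  rw [← integral_const_mul, integral_eq_lintegral_of_nonneg_ae hpos
    (Measurable.const_mul (by fun_prop) C).aestronglyMeasurable]
  refine ENNReal.toReal_le_of_le_ofReal (integral_nonneg hnonneg) ?_
  rw [ofReal_integral_eq_lintegral_ofReal hint (ae_of_all _ hnonneg)]
  calc ∫⁻ η in Ioi κ, ENNReal.ofReal (C * (f η / η ^ (1 + β)))
      = ∫⁻ η in Ioi 0, (Ioi κ).indicator (fun η => ENNReal.ofReal (f η)) η *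
          ENNReal.ofReal (C * (η ^ (1 + β))⁻¹) := by
        rw [← inter_eq_left.2 (Ioi_subset_Ioi hκ0.le),
          ← Measure.restrict_restrict measurableSet_Ioi,
          ← lintegral_indicator (s := Ioi κ) measurableSet_Ioi,
          inter_eq_left.2 (Ioi_subset_Ioi hκ0.le)]
        refine lintegral_congr fun η => ?_
        simp only [indicator_apply, ite_mul, zero_mul, ← ENNReal.ofReal_mul (hf0 _), div_eq_mul_inv,
          mul_left_comm C]
    _ ≤ ∫⁻ z : E, (Ioi κ).indicator (fun η => ENNReal.ofReal (f η)) (inner ℝ e z) *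
          ENNReal.ofReal ((‖z‖ ^ (Module.finrank ℝ E + β))⁻¹) :=
        setLIntegral_le_lintegral_inner_mul_norm_rpow_inv hβ.le he
          ((ENNReal.measurable_ofReal.comp hf).indicator measurableSet_Ioi)
    _ ≤ ∫⁻ z : E, ENNReal.ofReal (f (inner ℝ e z) * truncatedKernel β ε z) := by
        refine lintegral_mono fun z => ?_
        by_cases hz : κ < inner ℝ e z
        · have hεz : ε < ‖z‖ := by
            have := real_inner_le_norm e z
            rw [he, one_mul] at this
            exact hκ.trans (hz.trans_le this)
          rw [indicator_of_mem (show inner ℝ e z ∈ Ioi κ from hz), truncatedKernel_of_lt hεz,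
            ENNReal.ofReal_mul (hf0 _)]
        · rw [indicator_of_notMem (show inner ℝ e z ∉ Ioi κ from hz), zero_mul]
          exact zero_le

lemma neg_const_mul_closedBall_le_integral_mul_truncatedKernel {β ε B : ℝ} (hβ : 0 < β)
    (hε : 0 < ε) {x y : E} {Q : E → ℝ} (hQ : Measurable Q) (hB : ∀ p, |Q p| ≤ B)
    (hodd : ∀ p, Q (bisectorReflection x y p) = -Q p)
    (hpos : ∀ p, dist p x < dist p y → 0 ≤ Q p) :
    -(B * ((dist x y / 2) ^ (Module.finrank ℝ E + β))⁻¹ *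
        volume.real (Metric.closedBall (0 : E) ε)) ≤
      ∫ p, Q p * truncatedKernel β ε (p - x) := by
  set A := B * ((dist x y / 2) ^ (Module.finrank ℝ E + β))⁻¹
  have hrefl : ∫ p, Q p * truncatedKernel β ε (p - y) =
      -∫ p, Q p * truncatedKernel β ε (p - x) := by
    rw [← integral_bisectorReflection x y, ← integral_neg]
    refine integral_congr_ae (ae_of_all _ fun p => ?_)
    simp only [hodd, neg_mul]
    rw [truncatedKernel_congr (z' := p - x)]
    rw [← dist_eq_norm, ← dist_eq_norm, dist_bisectorReflection_right]
  have hneg : ∀ p, dist p y < dist p x → Q p ≤ 0 := fun p hp => by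
    have := hpos (bisectorReflection x y p)
      (by rwa [dist_bisectorReflection_left, dist_bisectorReflection_right])
    rwa [hodd, neg_nonneg] at this
  have hball : ∀ z : E, Integrable ((Metric.closedBall z ε).indicator fun _ => A) := fun z =>
    (integrable_indicator_iff Metric.isClosed_closedBall.measurableSet).2
      (integrableOn_const measure_closedBall_lt_top.ne)
  have hballInt : ∀ z : E, ∫ p, (Metric.closedBall z ε).indicator (fun _ => A) p =
      A * volume.real (Metric.closedBall (0 : E) ε) := fun z => by
    rw [integral_indicator Metric.isClosed_closedBall.measurableSet, setIntegral_const,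
      smul_eq_mul, mul_comm, measureReal_def, measureReal_def, Measure.addHaar_closedBall_center]
  have hQx := integrable_mul_truncatedKernel hβ hε hQ hB x
  have hQy := integrable_mul_truncatedKernel hβ hε hQ hB y
  have hmono := integral_mono ((hball x).add (hball y)).neg (hQx.sub hQy) fun p => by
    simpa only [Pi.neg_apply, Pi.add_apply, Pi.sub_apply, mul_sub] using
      neg_indicator_add_le_mul_sub_truncatedKernel hβ hε (hB p) (hpos p) (hneg p)
  simp only [Pi.neg_apply, Pi.add_apply, Pi.sub_apply] at hmono
  rw [integral_neg, integral_add (hball x) (hball y), integral_sub hQx hQy, hrefl, hballInt,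
    hballInt] at hmono
  linarith

/-- `L` is the value at `x` of the fractional Laplacian of order `β` of `g`, without its
normalizing constant, as a principal value. -/
def HasFractionalLaplacianAt (β : ℝ) (g : E → ℝ) (x : E) (L : ℝ) : Prop :=
  Tendsto (fun ε => ∫ y in {y : E | ε < ‖y‖},
    (g x - g (x + y)) / ‖y‖ ^ (Module.finrank ℝ E + β)) (𝓝[>] 0) (𝓝 L)

lemma HasFractionalLaplacianAt.tendsto_integral {β L : ℝ} {g : E → ℝ} {x : E}
    (h : HasFractionalLaplacianAt β g x L) :
    Tendsto (fun ε => ∫ p, (g x - g p) * truncatedKernel β ε (p - x)) (𝓝[>] 0) (𝓝 L) := by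
  refine h.congr fun ε => ?_
  rw [setIntegral_div_norm_rpow_eq,
    ← integral_add_left_eq_self (fun p => (g x - g p) * truncatedKernel β ε (p - x)) x]
  simp only [add_sub_cancel_left]

lemma IsConcaveModulus.integral_concavityDefect_inner_mul_truncatedKernel {β ε B : ℝ} (hβ : 0 < β)
    (hε : 0 < ε) {w : ℝ → ℝ} (hw : IsConcaveModulus w) (hB : ∀ s, 0 ≤ s → w s ≤ B) (e : E)
    (ξ : ℝ) :
    ∫ z, concavityDefect w ξ (inner ℝ e z) * truncatedKernel β ε z =
      2 * ∫ z, (oddExt w ξ - oddExt w (ξ + 2 * inner ℝ e z)) * truncatedKernel β ε z := by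
  set f : E → ℝ := fun z =>
    (oddExt w ξ - oddExt w (ξ + 2 * inner ℝ e z)) * truncatedKernel β ε z with hf
  have hmeas := hw.monotone_oddExt.measurable
  have hbound : ∀ z : E, |oddExt w ξ - oddExt w (ξ + 2 * inner ℝ e z)| ≤ B + B := fun z =>
    (abs_sub _ _).trans (add_le_add (hw.abs_oddExt_le hB _) (hw.abs_oddExt_le hB _))
  have hint : Integrable f := by
    simpa only [sub_zero] using integrable_mul_truncatedKernel hβ hε
      (f := fun z : E => oddExt w ξ - oddExt w (ξ + 2 * inner ℝ e z)) (by fun_prop) hbound 0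
  have hsplit : ∀ z, concavityDefect w ξ (inner ℝ e z) * truncatedKernel β ε z = f z + f (-z) := by
    intro z
    simp only [hf, concavityDefect, truncatedKernel_congr (norm_neg z), inner_neg_right, mul_neg,
      ← sub_eq_add_neg]
    ring
  simp only [hsplit]
  rw [integral_add hint hint.comp_neg, integral_neg_eq_self, two_mul]

lemma integral_sub_integral_eq_integral_bisectorReflection {β ε M : ℝ} (hβ : 0 < β) (hε : 0 < ε)
    {g : E → ℝ} (hg : Measurable g) (hM : ∀ p, |g p| ≤ M) (x y : E) :
    (∫ p, (g x - g p) * truncatedKernel β ε (p - x)) -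
        ∫ p, (g y - g p) * truncatedKernel β ε (p - y) =
      ∫ p, (g x - g y - (g p - g (bisectorReflection x y p))) * truncatedKernel β ε (p - x) := by
  have hbound : ∀ a b, |g a - g b| ≤ M + M := fun a b =>
    (abs_sub _ _).trans (add_le_add (hM a) (hM b))
  have hcont := (bisectorReflection x y).continuous.measurable
  have hrefl : ∫ p, (g y - g p) * truncatedKernel β ε (p - y) =
      ∫ p, (g y - g (bisectorReflection x y p)) * truncatedKernel β ε (p - x) := by
    rw [← integral_bisectorReflection x y]
    refine integral_congr_ae (ae_of_all _ fun p => ?_)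
    simp only
    rw [truncatedKernel_congr (z' := p - x)]
    rw [← dist_eq_norm, ← dist_eq_norm, dist_bisectorReflection_right]
  rw [hrefl, ← integral_sub
    (integrable_mul_truncatedKernel hβ hε (by fun_prop) (hbound x) x)
    (integrable_mul_truncatedKernel hβ hε (by fun_prop) (fun p => hbound y _) x)]
  refine integral_congr_ae (ae_of_all _ fun p => ?_)
  ring

/-- The factor lost between the fractional Laplacian in dimension `d` and its one-dimensional
counterpart: `√d ^ (d + β)` from bounding the kernel below on cubes when it is integrated over
hyperplanes, and `2` from symmetrizing. -/
noncomputable def dissipationConstant (d : ℕ) (β : ℝ) : ℝ := (√d ^ (d + β))⁻¹ / 2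

lemma dissipationConstant_nonneg (d : ℕ) (β : ℝ) : 0 ≤ dissipationConstant d β := by
  unfold dissipationConstant
  positivity

lemma measurable_bisectorGap (x y : E) : Measurable (bisectorGap x y) := by
  unfold bisectorGap
  fun_prop

lemma IsConcaveModulus.const_mul_farDefect_le_integral_bisectorGap {β κ ε B : ℝ} (hβ : 0 < β)
    (hε : 0 < ε) (hκ : ε < κ) {w : ℝ → ℝ} (hw : IsConcaveModulus w) (hB : ∀ s, 0 ≤ s → w s ≤ B)
    {x y : E} (hxy : x ≠ y) :
    dissipationConstant (Module.finrank ℝ E) β * farDefect β κ w (dist x y) ≤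
      ∫ p, (w (dist x y) - oddExt w (bisectorGap x y p)) * truncatedKernel β ε (p - x) := by
  have hξ : 0 < dist x y := dist_pos.2 hxy
  have he : ‖(dist x y)⁻¹ • (x - y)‖ = 1 := by
    rw [norm_smul, ← dist_eq_norm, Real.norm_of_nonneg (by positivity), inv_mul_cancel₀ hξ.ne']
  have hslice := const_mul_setIntegral_le_integral_inner_mul_truncatedKernel hβ hε hκ he
    (hw.measurable_concavityDefect (dist x y)) (hw.concavityDefect_nonneg hξ.le)
    (hw.concavityDefect_le hξ.le)
  rw [hw.integral_concavityDefect_inner_mul_truncatedKernel hβ hε hB,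
    ← integral_sub_right_eq_self _ x] at hslice
  simp only [← bisectorGap_eq_add_inner hxy, hw.oddExt_of_nonneg hξ.le] at hslice
  rw [farDefect, dissipationConstant]
  linarith

namespace IsContactPair

variable {β κ M : ℝ} {g : E → ℝ} {w : ℝ → ℝ} {x y : E}

/-- Compare `g p - g (σ p)`, where `σ` is the reflection exchanging `x` and `y`, with its bound
`w` at `dist p (σ p)`. The difference is odd under `σ` and nonnegative on the side of `x`, where
the kernel centred at `x` dominates its mirror image. -/
lemma neg_const_mul_closedBall_le_integral_bisectorGap_sub (h : IsContactPair g w x y)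
    (hβ : 0 < β) (hw : IsConcaveModulus w) {B : ℝ} (hB : ∀ s, 0 ≤ s → w s ≤ B) (hg : Measurable g)
    (hM : ∀ p, |g p| ≤ M) {ε : ℝ} (hε : 0 < ε) :
    -((B + (M + M)) * ((dist x y / 2) ^ (Module.finrank ℝ E + β))⁻¹ *
        volume.real (Metric.closedBall (0 : E) ε)) ≤
      ∫ p, (oddExt w (bisectorGap x y p) - (g p - g (bisectorReflection x y p))) *
        truncatedKernel β ε (p - x) := by
  have hmeas : Measurable fun p =>
      oddExt w (bisectorGap x y p) - (g p - g (bisectorReflection x y p)) := by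
    have := hw.monotone_oddExt.measurable
    have := measurable_bisectorGap x y
    have := (bisectorReflection x y).continuous.measurable
    fun_prop
  refine neg_const_mul_closedBall_le_integral_mul_truncatedKernel hβ hε hmeas
    (fun p => (abs_sub _ _).trans
      (add_le_add (hw.abs_oddExt_le hB _) ((abs_sub _ _).trans (add_le_add (hM _) (hM _)))))
    (fun p => ?_) fun p hp => ?_
  · simp only [bisectorGap_bisectorReflection, oddExt_neg, bisectorReflection_bisectorReflection]
    ring
  · have hgap : 0 ≤ bisectorGap x y p :=
      div_nonneg (sub_nonneg.2 (pow_le_pow_left₀ dist_nonneg hp.le 2)) dist_nonneg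
    have := (le_abs_self _).trans (h.abs_sub_le p (bisectorReflection x y p))
    rw [dist_bisectorReflection_self h.ne, abs_of_nonneg hgap] at this
    rwa [hw.oddExt_of_nonneg hgap, sub_nonneg]

lemma farDefect_sub_le_integral_sub (h : IsContactPair g w x y) (hβ : 0 < β)
    (hw : IsConcaveModulus w) {B : ℝ} (hB : ∀ s, 0 ≤ s → w s ≤ B) (hg : Measurable g)
    (hM : ∀ p, |g p| ≤ M) {ε : ℝ} (hε : 0 < ε) (hκ : ε < κ) :
    dissipationConstant (Module.finrank ℝ E) β * farDefect β κ w (dist x y) -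
        (B + (M + M)) * ((dist x y / 2) ^ (Module.finrank ℝ E + β))⁻¹ *
          volume.real (Metric.closedBall (0 : E) ε) ≤
      (∫ p, (g x - g p) * truncatedKernel β ε (p - x)) -
        ∫ p, (g y - g p) * truncatedKernel β ε (p - y) := by
  have hmodulus := hw.const_mul_farDefect_le_integral_bisectorGap hβ hε hκ hB h.ne
  have hexcess := h.neg_const_mul_closedBall_le_integral_bisectorGap_sub hβ hw hB hg hM hε
  have hrefl := (bisectorReflection x y).continuous.measurable
  have hodd := hw.monotone_oddExt.measurable
  have hgap := measurable_bisectorGap x y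
  have habs : ∀ s, |oddExt w s| ≤ B := hw.abs_oddExt_le hB
  have hsplit : ∫ p, (g x - g y - (g p - g (bisectorReflection x y p))) *
        truncatedKernel β ε (p - x) =
      (∫ p, (w (dist x y) - oddExt w (bisectorGap x y p)) * truncatedKernel β ε (p - x)) +
        ∫ p, (oddExt w (bisectorGap x y p) - (g p - g (bisectorReflection x y p))) *
          truncatedKernel β ε (p - x) := by
    rw [← hw.oddExt_of_nonneg dist_nonneg, ← integral_add
      (integrable_mul_truncatedKernel hβ hε (by fun_prop) (fun p =>
        (abs_sub _ _).trans (add_le_add (habs _) (habs _))) x)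
      (integrable_mul_truncatedKernel hβ hε (by fun_prop) (fun p =>
        (abs_sub _ _).trans
          (add_le_add (habs _) ((abs_sub _ _).trans (add_le_add (hM _) (hM _))))) x)]
    refine integral_congr_ae (ae_of_all _ fun p => ?_)
    simp only [h.sub_eq, hw.oddExt_of_nonneg dist_nonneg]
    ring
  rw [integral_sub_integral_eq_integral_bisectorReflection hβ hε hg hM, hsplit]
  linarith

/-- Truncating `w` at the oscillation of `g` only increases the dissipation of `w`. -/
theorem farDefect_le_sub (h : IsContactPair g w x y) (hβ : 0 < β) (hw : IsConcaveModulus w)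
    (hg : Measurable g) (hM : ∀ p, |g p| ≤ M) {Lx Ly : ℝ}
    (hLx : HasFractionalLaplacianAt β g x Lx) (hLy : HasFractionalLaplacianAt β g y Ly)
    (hκ : 0 < κ) :
    dissipationConstant (Module.finrank ℝ E) β * farDefect β κ w (dist x y) ≤
      Lx - Ly := by
  have hwξ : w (dist x y) ≤ M + M := by
    rw [← h.sub_eq]
    exact (le_abs_self _).trans ((abs_sub _ _).trans (add_le_add (hM x) (hM y)))
  have hM0 : 0 ≤ M + M := (hw.nonneg dist_nonneg).trans hwξ
  have : Nontrivial E := nontrivial_of_ne x y h.ne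
  have hvol : Tendsto (fun ε => volume.real (Metric.closedBall (0 : E) ε)) (𝓝[>] 0) (𝓝 0) := by
    have hpow : Tendsto (fun ε : ℝ => ε ^ Module.finrank ℝ E *
        volume.real (Metric.ball (0 : E) 1)) (𝓝[>] 0) (𝓝 0) :=
      (Continuous.tendsto' (by fun_prop) 0 0 (by simp [Module.finrank_pos.ne'])).mono_left
        nhdsWithin_le_nhds
    refine hpow.congr' ?_
    filter_upwards [self_mem_nhdsWithin] with ε hε
    exact (Measure.addHaar_real_closedBall _ _ (le_of_lt hε)).symm
  refine (mul_le_mul_of_nonneg_left (hw.farDefect_le_min_const hβ hκ dist_nonneg hwξ)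
    (dissipationConstant_nonneg _ _)).trans ?_
  refine le_of_tendsto_of_tendsto (b := 𝓝[>] 0)
    (f := fun ε => dissipationConstant (Module.finrank ℝ E) β *
      farDefect β κ (fun s => min (w s) (M + M)) (dist x y) -
        (M + M + (M + M)) * ((dist x y / 2) ^ (Module.finrank ℝ E + β))⁻¹ *
          volume.real (Metric.closedBall (0 : E) ε))
    ?_ (hLx.tendsto_integral.sub hLy.tendsto_integral) ?_
  · simpa only [mul_zero, sub_zero] using tendsto_const_nhds.sub (hvol.const_mul _)
  · filter_upwards [Ioo_mem_nhdsGT hκ] with ε hε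
    exact (h.min_const hM).farDefect_sub_le_integral_sub hβ (hw.min_const hM0)
      (fun _ _ => min_le_right _ _) hg hM hε.1 hε.2

end IsContactPair

end Dissipation

/-! ### First-order conditions at a contact pair, and contact near the diagonal -/

lemma isContactPair_or_swap {X : Type*} [PseudoMetricSpace X] {g : X → ℝ} {w : ℝ → ℝ} {x y : X}
    (hne : x ≠ y) (hle : ∀ a b, |g a - g b| ≤ w (dist a b)) (heq : |g x - g y| = w (dist x y)) :
    IsContactPair g w x y ∨ IsContactPair g w y x := by
  rcases abs_choice (g x - g y) with h | h
  · exact .inl ⟨hne, hle, h ▸ heq⟩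
  · exact .inr ⟨hne.symm, hle, by rw [dist_comm, ← heq, h, neg_sub]⟩

section ContactGradient

variable {E : Type*} [NormedAddCommGroup E] [InnerProductSpace ℝ E]

lemma hasDerivAt_dist_add_smul {x y : E} (hxy : x ≠ y) (v₁ v₂ : E) :
    HasDerivAt (fun s : ℝ => dist (x + s • v₁) (y + s • v₂))
      (inner ℝ (x - y) (v₁ - v₂) / dist x y) 0 := by
  have hline : HasDerivAt (fun s : ℝ => x + s • v₁ - (y + s • v₂)) (v₁ - v₂) 0 := by
    simpa using (((hasDerivAt_id (0 : ℝ)).smul_const v₁).const_add x).fun_sub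
      (((hasDerivAt_id (0 : ℝ)).smul_const v₂).const_add y)
  have hsqrt := hline.norm_sq.sqrt (by simp [sub_eq_zero, hxy])
  simp only [Real.sqrt_sq (norm_nonneg _), zero_smul, add_zero] at hsqrt
  simpa only [dist_eq_norm, mul_div_mul_left _ _ (two_ne_zero' ℝ)] using hsqrt

namespace IsContactPair

variable {g : E → ℝ} {w : ℝ → ℝ} {x y : E} {B : ℝ}

/-- The function `(a, b) ↦ g a - g b - B * dist a b` has a maximum at `(x, y)`. -/
lemma fderiv_sub_fderiv (h : IsContactPair g w x y)
    (hB : ∀ s, 0 ≤ s → w s ≤ w (dist x y) + B * (s - dist x y)) (hx : DifferentiableAt ℝ g x)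
    (hy : DifferentiableAt ℝ g y) (v₁ v₂ : E) :
    fderiv ℝ g x v₁ - fderiv ℝ g y v₂ = B * (inner ℝ (x - y) (v₁ - v₂) / dist x y) := by
  have hline : ∀ {z : E} (v : E), DifferentiableAt ℝ g z →
      HasDerivAt (fun s : ℝ => g (z + s • v)) (fderiv ℝ g z v) 0 := fun v hz =>
    hz.hasFDerivAt.hasLineDerivAt v
  have hmax : IsLocalMax (fun s : ℝ =>
      g (x + s • v₁) - g (y + s • v₂) - B * dist (x + s • v₁) (y + s • v₂)) 0 := by
    refine Eventually.of_forall fun s => ?_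
    have hle := (le_abs_self _).trans (h.abs_sub_le (x + s • v₁) (y + s • v₂))
    have hsup := hB (dist (x + s • v₁) (y + s • v₂)) dist_nonneg
    simp only [zero_smul, add_zero, h.sub_eq]
    linarith
  have hzero := hmax.hasDerivAt_eq_zero
    (((hline v₁ hx).sub (hline v₂ hy)).sub ((hasDerivAt_dist_add_smul h.ne v₁ v₂).const_mul B))
  linarith

lemma fderiv_sub_fderiv_le (h : IsContactPair g w x y)
    (hB : ∀ s, 0 ≤ s → w s ≤ w (dist x y) + B * (s - dist x y)) (hw : IsConcaveModulus w)
    (hx : DifferentiableAt ℝ g x) (hy : DifferentiableAt ℝ g y) (v₁ v₂ : E) :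
    fderiv ℝ g x v₁ - fderiv ℝ g y v₂ ≤ B * dist v₁ v₂ := by
  rw [h.fderiv_sub_fderiv hB hx hy]
  refine mul_le_mul_of_nonneg_left ?_ (hw.supergradient_nonneg dist_nonneg hB)
  rw [div_le_iff₀ (dist_pos.2 h.ne), dist_eq_norm, dist_eq_norm, mul_comm]
  exact real_inner_le_norm _ _

lemma not_isLocalMax (h : IsContactPair g w x y) (hw : IsConcaveModulus w)
    (hmono : StrictMonoOn w (Ici 0)) (hx : DifferentiableAt ℝ g x) (hy : DifferentiableAt ℝ g y) :
    ¬ IsLocalMax g x := by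
  intro hmax
  have hξ : 0 < dist x y := dist_pos.2 h.ne
  obtain ⟨B, -, hB⟩ := hw.exists_hasDerivWithinAt_supergradient hξ
  have hgrad := h.fderiv_sub_fderiv hB hx hy (y - x) 0
  rw [hmax.fderiv_eq_zero, sub_zero, ← neg_sub x y, inner_neg_right, real_inner_self_eq_norm_sq,
    ← dist_eq_norm, map_zero, neg_div, sq, mul_div_cancel_right₀ _ hξ.ne'] at hgrad
  have hB0 : B = 0 := by simpa [hξ.ne'] using hgrad
  have hlt := hmono hξ.le (by positivity : 0 ≤ dist x y + 1) (lt_add_one _)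
  have hle := hB (dist x y + 1) (by positivity)
  simp only [hB0, zero_mul, add_zero] at hle
  exact hlt.not_ge hle

lemma exists_lt_two_mul_abs (h : IsContactPair g w x y) (hw : IsConcaveModulus w)
    (hmono : StrictMonoOn w (Ici 0)) (hx : DifferentiableAt ℝ g x) (hy : DifferentiableAt ℝ g y) :
    ∃ z, w (dist x y) < 2 * |g z| := by
  by_contra! hle
  refine h.not_isLocalMax hw hmono hx hy (Eventually.of_forall fun z => ?_)
  have hz := hle z
  have hy := hle y
  rw [← h.sub_eq] at hz hy
  linarith [le_abs_self (g z), neg_abs_le (g y)]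

end IsContactPair

end ContactGradient

lemma exists_taylor_bound {V : Type*} [NormedAddCommGroup V] [NormedSpace ℝ V]
    {F : V → ℝ} {p₀ : V} (hF : ContDiffAt ℝ 2 F p₀) :
    ∃ C > (0 : ℝ), ∃ r > (0 : ℝ), ∀ p v, p ∈ Metric.ball p₀ r → p + v ∈ Metric.ball p₀ r →
      |F (p + v) - F p - fderiv ℝ F p v| ≤ C * ‖v‖ ^ 2 := by
  have hfderiv : ContDiffAt ℝ 1 (fderiv ℝ F) p₀ := hF.fderiv_right (by norm_num)
  obtain ⟨K, s, hs, hK⟩ := hfderiv.exists_lipschitzOnWith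
  have hdiff : ∀ᶠ p in 𝓝 p₀, DifferentiableAt ℝ F p :=
    (hF.eventually (by simp)).mono fun p hp => hp.differentiableAt (by norm_num)
  obtain ⟨r, hr, hrs⟩ := Metric.mem_nhds_iff.1 (inter_mem hs hdiff)
  refine ⟨K + 1, by positivity, r, hr, fun p v hp hpv => ?_⟩
  have hseg : segment ℝ p (p + v) ⊆ Metric.ball p₀ r := (convex_ball p₀ r).segment_subset hp hpv
  have hbound : ∀ q ∈ segment ℝ p (p + v), ‖fderiv ℝ F q - fderiv ℝ F p‖ ≤ (K + 1) * ‖v‖ := by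
    intro q hq
    have hLip := hK.norm_sub_le (hrs (hseg hq)).1 (hrs hp).1
    have hdist : ‖q - p‖ ≤ ‖v‖ := by
      simpa [dist_eq_norm] using segment_subset_closedBall_left p (p + v) hq
    refine hLip.trans ?_
    gcongr
    linarith
  have hmvt := (convex_segment p (p + v)).norm_image_sub_le_of_norm_hasFDerivWithin_le'
    (fun q hq => (hrs (hseg hq)).2.hasFDerivAt.hasFDerivWithinAt) hbound
    (left_mem_segment ℝ p (p + v)) (right_mem_segment ℝ p (p + v))
  rwa [add_sub_cancel_left, Real.norm_eq_abs, mul_assoc, ← sq] at hmvt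

lemma exists_sub_sq_le_modulus {E : Type*} [NormedAddCommGroup E] [InnerProductSpace ℝ E]
    [CompleteSpace E] {g : E → ℝ} {w : ℝ → ℝ} {x₀ : E} (hg : ContDiffAt ℝ 2 g x₀)
    (hw : ∀ s, 0 ≤ s → 0 ≤ w s) (hgw : ∀ x y, |g x - g y| ≤ w (dist x y)) :
    ∃ C, ∀ᶠ s in 𝓝[>] (0 : ℝ), ‖fderiv ℝ g x₀‖ * s - C * s ^ 2 ≤ w s := by
  obtain ⟨C, hC, r, hr, hT⟩ := exists_taylor_bound hg
  refine ⟨C, ?_⟩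
  filter_upwards [Ioo_mem_nhdsGT hr] with s hs
  rcases eq_or_ne (fderiv ℝ g x₀) 0 with h0 | h0
  · have := hw s hs.1.le
    rw [h0, norm_zero, zero_mul, zero_sub]
    linarith [mul_nonneg hC.le (sq_nonneg s)]
  obtain ⟨v, hv⟩ : ∃ v, v = (InnerProductSpace.toDual ℝ E).symm (fderiv ℝ g x₀) := ⟨_, rfl⟩
  have hnorm : ‖v‖ = ‖fderiv ℝ g x₀‖ := by rw [hv, LinearIsometryEquiv.norm_map]
  have happly : fderiv ℝ g x₀ v = ‖v‖ ^ 2 := by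
    rw [← real_inner_self_eq_norm_sq, hv, InnerProductSpace.toDual_symm_apply]
  have hvpos : 0 < ‖v‖ := hnorm ▸ norm_pos_iff.2 h0
  have hstep : ‖(s / ‖v‖) • v‖ = s := by
    rw [norm_smul, Real.norm_of_nonneg (div_nonneg hs.1.le hvpos.le), div_mul_cancel₀ _ hvpos.ne']
  have htaylor := hT x₀ ((s / ‖v‖) • v) (Metric.mem_ball_self hr) (by simpa [hstep] using hs.2)
  have hmodulus := hgw (x₀ + (s / ‖v‖) • v) x₀
  rw [dist_self_add_left, hstep] at hmodulus
  have hgrad : fderiv ℝ g x₀ ((s / ‖v‖) • v) = ‖v‖ * s := by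
    rw [map_smul, happly, smul_eq_mul]
    field_simp
  rw [hstep, hgrad] at htaylor
  rw [← hnorm]
  linarith [(abs_le.1 htaylor).1, (abs_le.1 hmodulus).2]

lemma IsConcaveModulus.exists_hasDerivWithinAt_zero {w : ℝ → ℝ} (hw : IsConcaveModulus w) {A : ℝ}
    (hA : ∀ x, 0 < x → w x ≤ A * x) : ∃ m, HasDerivWithinAt w m (Ici 0) 0 := by
  have hanti : AntitoneOn (fun x => x⁻¹ * w x) (Ioo 0 1) := by
    intro x hx y hy hxy
    have := hw.mul_le_mul hx.1.le hxy
    simp only [inv_mul_eq_div]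
    rw [div_le_div_iff₀ hy.1 hx.1]
    linarith
  have hbdd : BddAbove ((fun x => x⁻¹ * w x) '' Ioo 0 1) :=
    ⟨A, forall_mem_image.2 fun x hx => by
      rw [inv_mul_le_iff₀ hx.1, mul_comm]
      exact hA x hx.1⟩
  have hlim := hanti.tendsto_nhdsWithin_Ioo_right (nonempty_Ioo.2 one_pos) hbdd
  refine ⟨_, hasDerivWithinAt_Ioi_iff_Ici.1
    ((hasDerivWithinAt_iff_tendsto_slope' self_notMem_Ioi).2 (hlim.congr fun x => ?_))⟩
  simp [slope_def_field, hw.zero, inv_mul_eq_div]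

lemma concaveOn_Icc_add_sq {w : ℝ → ℝ} {b K : ℝ} (hw : ContinuousOn w (Icc 0 b))
    (hd : ∀ x ∈ Ioo 0 b, DifferentiableAt ℝ w x)
    (hdd : ∀ x ∈ Ioo 0 b, DifferentiableAt ℝ (deriv w) x)
    (hK : ∀ x ∈ Ioo 0 b, deriv (deriv w) x ≤ -(2 * K)) :
    ConcaveOn ℝ (Icc 0 b) fun x => w x + K * x ^ 2 := by
  refine concaveOn_of_hasDerivWithinAt2_nonpos (f' := fun x => deriv w x + K * (2 * x))
    (f'' := fun x => deriv (deriv w) x + K * 2) (convex_Icc 0 b) (hw.add (by fun_prop)) ?_ ?_ ?_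
  all_goals rw [interior_Icc]
  · intro x hx
    simpa using ((hd x hx).hasDerivAt.fun_add
      (((hasDerivAt_id x).pow 2).const_mul K)).hasDerivWithinAt
  · intro x hx
    simpa using ((hdd x hx).hasDerivAt.fun_add
      (((hasDerivAt_id x).const_mul 2).const_mul K)).hasDerivWithinAt
  · intro x hx
    linarith [hK x hx]

lemma le_mul_of_concaveOn_add_sq {w : ℝ → ℝ} {b A K : ℝ} (h0 : w 0 = 0)
    (hA : ∀ x, 0 < x → w x ≤ A * x) (hK : ConcaveOn ℝ (Icc 0 b) fun x => w x + K * x ^ 2)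
    {s : ℝ} (hs : s ∈ Ioc 0 b) : w s + K * s ^ 2 ≤ A * s := by
  have hsecant : ∀ x ∈ Ioc 0 s, w s + K * s ^ 2 ≤ s * (A + K * x) := by
    intro x hx
    have hconc := mul_le_mul_of_concaveOn hK ⟨le_rfl, hs.1.le.trans hs.2⟩ (by simp [h0]) hx.1.le
      hx.2 ⟨hs.1.le, hs.2⟩
    refine le_of_mul_le_mul_left (hconc.trans ?_) hx.1
    have := mul_le_mul_of_nonneg_left (hA x hx.1) hs.1.le
    linarith
  have hlim : Tendsto (fun x => s * (A + K * x)) (𝓝[>] 0) (𝓝 (A * s)) :=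
    (Continuous.tendsto' (by fun_prop) 0 _ (by ring)).mono_left nhdsWithin_le_nhds
  refine ge_of_tendsto hlim ?_
  filter_upwards [Ioc_mem_nhdsGT hs.1] with x hx using hsecant x hx

/-- This is where `w''(0) = -∞` enters: `w` eventually drops below any parabola which is tangent
to a line dominating `w`. -/
lemma IsModulusOfContinuity.eventually_add_sq_le {w : ℝ → ℝ} (hw : IsModulusOfContinuity w)
    (h2 : (∃ b, HasDerivWithinAt w b (Ici 0) 0) → Tendsto (deriv (deriv w)) (𝓝[>] 0) atBot)
    {A : ℝ} (hA : ∀ x, 0 < x → w x ≤ A * x) (K : ℝ) :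
    ∀ᶠ s in 𝓝[>] (0 : ℝ), w s + K * s ^ 2 ≤ A * s := by
  have hbot := h2 (hw.isConcaveModulus.exists_hasDerivWithinAt_zero hA)
  obtain ⟨h0, hcont, -, -, S, hS, -⟩ := hw
  have hoff : ∀ᶠ x in 𝓝[>] (0 : ℝ), x ∉ S := by
    have : ((S : Set ℝ) \ {0})ᶜ ∈ 𝓝 (0 : ℝ) :=
      (S.finite_toSet.subset sdiff_subset).isClosed.isOpen_compl.mem_nhds (by simp)
    filter_upwards [mem_nhdsWithin_of_mem_nhds this, self_mem_nhdsWithin] with x hx hx0 hxS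
    exact hx ⟨hxS, (mem_Ioi.1 hx0).ne'⟩
  obtain ⟨b, hb, hbI⟩ := mem_nhdsGT_iff_exists_Ioo_subset.1
    ((hbot.eventually_lt_atBot (min (-(2 * K)) 0)).and hoff)
  filter_upwards [Ioc_mem_nhdsGT hb] with s hs
  refine le_mul_of_concaveOn_add_sq h0 hA (concaveOn_Icc_add_sq
    (hcont.mono Icc_subset_Ici_self) (fun x hx => hS x ⟨hx.1, (hbI hx).2⟩) (fun x hx => ?_)
    fun x hx => ((hbI hx).1.le.trans (min_le_left _ _))) hs
  exact differentiableAt_of_deriv_ne_zero ((hbI hx).1.trans_le (min_le_right _ _)).ne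

lemma exists_norm_fderiv_mul_lt {E : Type*} [NormedAddCommGroup E] [InnerProductSpace ℝ E]
    [CompleteSpace E] {g : E → ℝ} {w : ℝ → ℝ} {x₀ : E} {lam : ℝ} (hlam : 0 < lam)
    (hg : ContDiffAt ℝ 2 g x₀) (hw : IsModulusOfContinuity w)
    (h2 : (∃ b, HasDerivWithinAt w b (Ici 0) 0) → Tendsto (deriv (deriv w)) (𝓝[>] 0) atBot)
    (hgw : ∀ x y, |g x - g y| ≤ lam * w (dist x y)) :
    ∃ s > 0, ‖fderiv ℝ g x₀‖ * s < lam * w s := by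
  by_contra! hle
  obtain ⟨C, hC⟩ := exists_sub_sq_le_modulus hg
    (fun s hs => mul_nonneg hlam.le (hw.isConcaveModulus.nonneg hs)) hgw
  have hupper := hw.eventually_add_sq_le h2 (A := ‖fderiv ℝ g x₀‖ / lam)
    (fun x hx => by
      rw [div_mul_eq_mul_div, le_div_iff₀' hlam]
      exact hle x hx) ((C + 1) / lam)
  obtain ⟨s, ⟨hlow, hup⟩, hs⟩ := ((hC.and hupper).and self_mem_nhdsWithin).exists
  have hs0 : 0 < s ^ 2 := pow_pos hs 2
  have hup' := mul_le_mul_of_nonneg_left hup hlam.le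
  rw [mul_add, ← mul_assoc, ← mul_assoc, mul_div_cancel₀ _ hlam.ne', mul_div_cancel₀ _ hlam.ne']
    at hup'
  linarith

/-! ### Compactness and the first contact -/

section Slices

variable {E : Type*} [NormedAddCommGroup E] [NormedSpace ℝ E] {θ : E → ℝ → ℝ}

lemma contDiff_slice {n : WithTop ℕ∞}
    (hθ : ContDiffOn ℝ n (fun p : E × ℝ => θ p.1 p.2) (univ ×ˢ Ici 0)) {t : ℝ} (ht : 0 ≤ t) :
    ContDiff ℝ n (fun x => θ x t) := by
  rw [← contDiffOn_univ]
  exact hθ.comp (f := fun x => (x, t)) (by fun_prop) fun x _ => ⟨mem_univ _, ht⟩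

lemma continuousOn_fderiv_slice
    (hθ : ContDiffOn ℝ 1 (fun p : E × ℝ => θ p.1 p.2) (univ ×ˢ Ici 0)) :
    ContinuousOn (fun p : E × ℝ => fderiv ℝ (fun x => θ x p.2) p.1) (univ ×ˢ Ici 0) := by
  have hfull := hθ.continuousOn_fderivWithin (uniqueDiffOn_univ.prod (uniqueDiffOn_Ici 0)) le_rfl
  refine ((hfull.clm_comp (continuousOn_const (c := ContinuousLinearMap.inl ℝ E ℝ)))).congr ?_
  rintro ⟨x, t⟩ hp
  refine HasFDerivAt.fderiv ?_
  rw [← hasFDerivWithinAt_univ]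
  exact HasFDerivWithinAt.comp (g := fun p : E × ℝ => θ p.1 p.2) (f := fun x' => (x', t))
    (t := univ ×ˢ Ici 0) x (hθ.differentiableOn one_ne_zero _ hp).hasFDerivWithinAt
    (hasFDerivAt_prodMk_left x t).hasFDerivWithinAt fun _ _ => ⟨mem_univ _, hp.2⟩

lemma eventually_abs_sub_le_mul_dist
    (hθ : ContDiffOn ℝ 1 (fun p : E × ℝ => θ p.1 p.2) (univ ×ˢ Ici 0)) {ts : ℝ} (hts : 0 ≤ ts)
    {a : E} {K : ℝ} (hK : ‖fderiv ℝ (fun x => θ x ts) a‖ < K) :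
    ∀ᶠ q : (E × E) × ℝ in 𝓝 (a, a) ×ˢ 𝓝[Ici 0] ts,
      |θ q.1.1 q.2 - θ q.1.2 q.2| ≤ K * dist q.1.1 q.1.2 := by
  have hbound : ∀ᶠ p : E × ℝ in 𝓝 a ×ˢ 𝓝[Ici 0] ts, ‖fderiv ℝ (fun x => θ x p.2) p.1‖ < K := by
    rw [← nhdsWithin_univ, ← nhdsWithin_prod_eq]
    exact (continuousOn_fderiv_slice hθ (a, ts) ⟨mem_univ _, hts⟩).norm.eventually_lt_const hK
  obtain ⟨P, hP, Q, hQ, hPQ⟩ := eventually_prod_iff.1 hbound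
  obtain ⟨r, hr, hball⟩ := Metric.eventually_nhds_iff_ball.1 hP
  have hpair : ∀ᶠ q : E × E in 𝓝 (a, a), q.1 ∈ Metric.ball a r ∧ q.2 ∈ Metric.ball a r :=
    prod_mem_nhds (Metric.ball_mem_nhds a hr) (Metric.ball_mem_nhds a hr)
  filter_upwards [hpair.prod_mk (hQ.and self_mem_nhdsWithin)] with q hq
  have hdiff := (contDiff_slice hθ hq.2.2).differentiable one_ne_zero
  simpa only [dist_eq_norm, Real.norm_eq_abs] using
    (convex_ball a r).norm_image_sub_le_of_norm_fderiv_le (𝕜 := ℝ)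
      (fun x _ => hdiff x) (fun x hx => (hPQ (hball x hx) hq.2.1).le) hq.1.2 hq.1.1

end Slices

/-- A scalar `θ(x,t)` and a moving modulus `ω(ξ,t)` to which the first-contact argument applies.
The field `representatives` is what is needed of spatial periodicity: the values of `θ` at any two
points are attained in a fixed compact set, at points that are no farther apart. -/
structure IsAdmissiblePair {E : Type*} [NormedAddCommGroup E] [NormedSpace ℝ E]
    (θ : E → ℝ → ℝ) (ω : ℝ → ℝ → ℝ) : Prop where
  contDiffOn : ContDiffOn ℝ 2 (fun p : E × ℝ => θ p.1 p.2) (univ ×ˢ Ici 0)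
  representatives : ∃ K : Set E, IsCompact K ∧ ∀ x y, ∃ x' ∈ K, ∃ y' ∈ K, dist x' y' ≤ dist x y ∧
    ∀ t, θ x' t = θ x t ∧ θ y' t = θ y t
  continuousOn : ContinuousOn (fun p : ℝ × ℝ => ω p.1 p.2) (Ici 0 ×ˢ Ici 0)
  modulus : ∀ t ∈ Ici (0 : ℝ), IsModulusOfContinuity (fun ξ => ω ξ t)
  second_deriv : ∀ t ∈ Ici (0 : ℝ), (∃ b, HasDerivWithinAt (fun r => ω r t) b (Ici 0) 0) →
    Tendsto (fun ξ => deriv (deriv (fun r => ω r t)) ξ) (𝓝[>] 0) atBot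

namespace IsAdmissiblePair

variable {E : Type*} [NormedAddCommGroup E] [InnerProductSpace ℝ E] {θ : E → ℝ → ℝ}
  {ω : ℝ → ℝ → ℝ} {ts lams T : ℝ} (h : IsAdmissiblePair θ ω)
include h

lemma isConcaveModulus {t : ℝ} (ht : 0 ≤ t) : IsConcaveModulus (fun ξ => ω ξ t) :=
  (h.modulus t ht).isConcaveModulus

lemma modulus_pos {ξ t : ℝ} (hξ : 0 < ξ) (ht : 0 ≤ t) : 0 < ω ξ t := by
  obtain ⟨hzero, -, hmono, -⟩ := h.modulus t ht
  simpa only [hzero] using hmono self_mem_Ici (mem_Ici.2 hξ.le) hξ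

lemma continuousOn_time (x : E) : ContinuousOn (fun t => θ x t) (Ici 0) :=
  h.contDiffOn.continuousOn.comp (f := fun t => (x, t)) (by fun_prop)
    fun _ ht => ⟨mem_univ _, ht⟩

lemma modulus_continuousOn_time {ξ : ℝ} (hξ : 0 ≤ ξ) : ContinuousOn (fun t => ω ξ t) (Ici 0) :=
  h.continuousOn.comp (f := fun t => (ξ, t)) (by fun_prop) fun _ ht => ⟨hξ, ht⟩

lemma tendsto_sub (hts : 0 ≤ ts) (a b : E) :
    Tendsto (fun q : (E × E) × ℝ => θ q.1.1 q.2 - θ q.1.2 q.2) (𝓝 (a, b) ×ˢ 𝓝[Ici 0] ts)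
      (𝓝 (θ a ts - θ b ts)) := by
  have hslice : ∀ x : E, Tendsto (fun p : E × ℝ => θ p.1 p.2) (𝓝 x ×ˢ 𝓝[Ici 0] ts)
      (𝓝 (θ x ts)) := fun x => by
    have := h.contDiffOn.continuousOn (x, ts) ⟨mem_univ _, hts⟩
    rwa [ContinuousWithinAt, nhdsWithin_prod_eq, nhdsWithin_univ] at this
  exact ((hslice a).comp ((continuous_fst.tendsto (a, b)).prodMap tendsto_id)).sub
    ((hslice b).comp ((continuous_snd.tendsto (a, b)).prodMap tendsto_id))

lemma tendsto_modulus (hts : 0 ≤ ts) (a b : E) :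
    Tendsto (fun q : (E × E) × ℝ => ω (dist q.1.1 q.1.2) q.2) (𝓝 (a, b) ×ˢ 𝓝[Ici 0] ts)
      (𝓝 (ω (dist a b) ts)) := by
  have hω := h.continuousOn (dist a b, ts) ⟨dist_nonneg, hts⟩
  rw [ContinuousWithinAt, nhdsWithin_prod_eq] at hω
  have hdist : Tendsto (fun q : E × E => dist q.1 q.2) (𝓝 (a, b)) (𝓝[Ici 0] (dist a b)) :=
    tendsto_nhdsWithin_iff.2 ⟨continuous_dist.tendsto _, .of_forall fun _ => dist_nonneg⟩
  exact hω.comp (hdist.prodMap tendsto_id)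

lemma eventually_lt_near_diagonal [CompleteSpace E] (hts : 0 ≤ ts) (hlams : 0 < lams)
    (hle : ∀ x y, |θ x ts - θ y ts| ≤ lams * ω (dist x y) ts) (a : E) :
    ∀ᶠ q : (E × E) × ℝ × ℝ in 𝓝 (a, a) ×ˢ (𝓝[Ici 0] ts ×ˢ 𝓝 lams), q.1.1 ≠ q.1.2 →
      |θ q.1.1 q.2.1 - θ q.1.2 q.2.1| < q.2.2 * ω (dist q.1.1 q.1.2) q.2.1 := by
  obtain ⟨s, hs, hgrad⟩ := exists_norm_fderiv_mul_lt hlams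
    (contDiff_slice h.contDiffOn hts).contDiffAt (x₀ := a) (h.modulus ts hts)
    (h.second_deriv ts hts) hle
  obtain ⟨K, hK, hKs⟩ := exists_between ((lt_div_iff₀ hs).2 hgrad)
  rw [lt_div_iff₀ hs] at hKs
  have hlip := eventually_abs_sub_le_mul_dist (h.contDiffOn.of_le one_le_two) hts hK
  have hω : Tendsto (fun t => ω s t) (𝓝[Ici 0] ts) (𝓝 (ω s ts)) :=
    h.modulus_continuousOn_time hs.le ts hts
  have hmul : ∀ᶠ p : ℝ × ℝ in 𝓝[Ici 0] ts ×ˢ 𝓝 lams, 0 ≤ p.1 ∧ 0 < p.2 ∧ K * s < p.2 * ω s p.1 :=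
    (tendsto_fst.eventually self_mem_nhdsWithin).and
      ((tendsto_snd.eventually (lt_mem_nhds hlams)).and
        ((tendsto_snd.mul (hω.comp tendsto_fst)).eventually (lt_mem_nhds hKs)))
  have hdist : ∀ᶠ q : E × E in 𝓝 (a, a), dist q.1 q.2 < s :=
    continuous_dist.continuousAt.eventually_lt_const (by simpa using hs)
  filter_upwards [(tendsto_id.prodMap tendsto_fst).eventually hlip, hdist.prod_mk hmul]
    with ⟨⟨x, y⟩, t, lam⟩ hlip ⟨hdist, ht, hlam, hKs⟩ hne
  refine lt_of_mul_lt_mul_right (a := s) ?_ hs.le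
  calc |θ x t - θ y t| * s ≤ K * dist x y * s := mul_le_mul_of_nonneg_right hlip hs.le
    _ = dist x y * (K * s) := by ring
    _ < dist x y * (lam * ω s t) := mul_lt_mul_of_pos_left hKs (dist_pos.2 hne)
    _ = lam * (dist x y * ω s t) := by ring
    _ ≤ lam * (s * ω (dist x y) t) := mul_le_mul_of_nonneg_left
        ((h.isConcaveModulus ht).mul_le_mul dist_nonneg hdist.le) hlam.le
    _ = lam * ω (dist x y) t * s := by ring

lemma eventually_lt_or_near [CompleteSpace E] (hts : 0 ≤ ts) (hlams : 0 < lams)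
    (hle : ∀ x y, |θ x ts - θ y ts| ≤ lams * ω (dist x y) ts) {Q : ℝ → ℝ × ℝ → Prop}
    (hQ : ∀ a b, a ≠ b → |θ a ts - θ b ts| = lams * ω (dist a b) ts →
      ∀ᶠ q in 𝓝 (θ a ts - θ b ts) ×ˢ (𝓝[Ici 0] ts ×ˢ 𝓝 lams), Q q.1 q.2) (a b : E) :
    ∀ᶠ q : (E × E) × ℝ × ℝ in 𝓝 (a, b) ×ˢ (𝓝[Ici 0] ts ×ˢ 𝓝 lams), q.1.1 ≠ q.1.2 →
      |θ q.1.1 q.2.1 - θ q.1.2 q.2.1| < q.2.2 * ω (dist q.1.1 q.1.2) q.2.1 ∨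
        Q (θ q.1.1 q.2.1 - θ q.1.2 q.2.1) q.2 := by
  rcases eq_or_ne a b with rfl | hab
  · filter_upwards [h.eventually_lt_near_diagonal hts hlams hle a] with q hq hne using .inl (hq hne)
  have hforget : Tendsto (fun q : (E × E) × ℝ × ℝ => (q.1, q.2.1))
      (𝓝 (a, b) ×ˢ (𝓝[Ici 0] ts ×ˢ 𝓝 lams)) (𝓝 (a, b) ×ˢ 𝓝[Ici 0] ts) :=
    tendsto_id.prodMap tendsto_fst
  have hsub := (h.tendsto_sub hts a b).comp hforget
  rcases (hle a b).lt_or_eq with hlt | heq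
  · have hω := (tendsto_snd.comp tendsto_snd).mul ((h.tendsto_modulus hts a b).comp hforget)
    filter_upwards [hsub.abs.eventually_lt hω hlt] with q hq _ using .inl hq
  · filter_upwards [(hsub.prodMk tendsto_snd).eventually (hQ a b hab heq)] with q hq _ using .inr hq

lemma eventually_forall_lt_or [CompleteSpace E] (hts : 0 ≤ ts) (hlams : 0 < lams)
    (hle : ∀ x y, |θ x ts - θ y ts| ≤ lams * ω (dist x y) ts) {Q : ℝ → ℝ × ℝ → Prop}
    (hQ : ∀ a b, a ≠ b → |θ a ts - θ b ts| = lams * ω (dist a b) ts →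
      ∀ᶠ q in 𝓝 (θ a ts - θ b ts) ×ˢ (𝓝[Ici 0] ts ×ˢ 𝓝 lams), Q q.1 q.2) :
    ∀ᶠ s in 𝓝[Ici 0] ts ×ˢ 𝓝 lams, ∀ x y, x ≠ y →
      |θ x s.1 - θ y s.1| < s.2 * ω (dist x y) s.1 ∨ Q (θ x s.1 - θ y s.1) s := by
  obtain ⟨K, hK, hrep⟩ := h.representatives
  have htube := (eventually_prod_iff.1 ((hK.prod hK).mem_nhdsSet_prod_of_forall
    fun q _ => h.eventually_lt_or_near hts hlams hle hQ q.1 q.2))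
  obtain ⟨P, hP, P', hP', hPP'⟩ := htube
  have hpos : ∀ᶠ s in 𝓝[Ici 0] ts ×ˢ 𝓝 lams, 0 ≤ s.1 ∧ 0 < s.2 :=
    (eventually_mem_nhdsWithin).prod_mk (lt_mem_nhds hlams)
  filter_upwards [hP', hpos] with s hs ⟨ht, hlam⟩ x y hxy
  obtain ⟨x', hx', y', hy', hdist, hθ⟩ := hrep x y
  rw [← (hθ s.1).1, ← (hθ s.1).2]
  have hmono : ω (dist x' y') s.1 ≤ ω (dist x y) s.1 :=
    (h.isConcaveModulus ht).monotoneOn dist_nonneg dist_nonneg hdist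
  rcases eq_or_ne x' y' with rfl | hne
  · left
    rw [sub_self, abs_zero]
    exact mul_pos hlam (h.modulus_pos (dist_pos.2 hxy) ht)
  · exact (hPP' (hP.self_of_nhdsSet (x', y') ⟨hx', hy'⟩) hs hne).imp_left fun hlt =>
      hlt.trans_le (mul_le_mul_of_nonneg_left hmono hlam.le)

lemma eventually_obeys [CompleteSpace E] (hts : 0 ≤ ts) (hlams : 0 < lams)
    (hlt : ∀ x y, x ≠ y → |θ x ts - θ y ts| < lams * ω (dist x y) ts) :
    ∀ᶠ s in 𝓝[Ici 0] ts ×ˢ 𝓝 lams, ∀ x y, x ≠ y →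
      |θ x s.1 - θ y s.1| < s.2 * ω (dist x y) s.1 := by
  have hle : ∀ x y, |θ x ts - θ y ts| ≤ lams * ω (dist x y) ts := fun x y => by
    rcases eq_or_ne x y with rfl | hxy
    · simp [(h.isConcaveModulus hts).zero]
    · exact (hlt x y hxy).le
  simpa only [or_false] using h.eventually_forall_lt_or (Q := fun _ _ => False) hts hlams hle
    fun a b hab heq => absurd heq (hlt a b hab).ne

/-- At a contact `ω < 2 sup |θ|` strictly, for otherwise the contact would be at a maximum of `θ`;
by compactness the strict inequality persists at contacts with slightly deformed moduli. -/
lemma eventually_lt_or_exists [CompleteSpace E] (hts : 0 ≤ ts)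
    (hle : ∀ x y, |θ x ts - θ y ts| ≤ ω (dist x y) ts) :
    ∀ᶠ s in 𝓝[Ici 0] ts ×ˢ 𝓝 1, ∀ x y, x ≠ y → |θ x s.1 - θ y s.1| < s.2 * ω (dist x y) s.1 ∨
      ∃ z, |θ x s.1 - θ y s.1| < s.2 * (2 * |θ z s.1|) := by
  refine h.eventually_forall_lt_or (Q := fun δ s => ∃ z, |δ| < s.2 * (2 * |θ z s.1|)) hts one_pos
    (by simpa only [one_mul] using hle) fun a b hab heq => ?_
  rw [one_mul] at heq
  have hdiff : Differentiable ℝ (fun x => θ x ts) :=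
    (contDiff_slice h.contDiffOn hts).differentiable two_ne_zero
  have hmono := (h.modulus ts hts).2.2.1
  obtain ⟨z, hz⟩ : ∃ z, ω (dist a b) ts < 2 * |θ z ts| := by
    rcases isContactPair_or_swap (g := fun x => θ x ts) (w := fun ξ => ω ξ ts) hab hle heq
      with hc | hc
    · exact hc.exists_lt_two_mul_abs (h.isConcaveModulus hts) hmono (hdiff a) (hdiff b)
    · rw [dist_comm]
      exact hc.exists_lt_two_mul_abs (h.isConcaveModulus hts) hmono (hdiff b) (hdiff a)
  have hθ : Tendsto (fun t => θ z t) (𝓝[Ici 0] ts) (𝓝 (θ z ts)) :=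
    h.continuousOn_time z ts hts
  have hright : Tendsto (fun q : ℝ × ℝ × ℝ => q.2.2 * (2 * |θ z q.2.1|))
      (𝓝 (θ a ts - θ b ts) ×ˢ (𝓝[Ici 0] ts ×ˢ 𝓝 1)) (𝓝 (1 * (2 * |θ z ts|))) :=
    (tendsto_snd.comp tendsto_snd).mul
      ((hθ.comp (tendsto_fst.comp tendsto_snd)).abs.const_mul 2)
  filter_upwards [tendsto_fst.abs.eventually_lt hright (by linarith)] with q hq using ⟨z, hq⟩

lemma isClosed_violationTimes [CompleteSpace E] {lam : ℝ → ℝ} (hlamc : Continuous lam)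
    (hlam0 : ∀ t, 0 < lam t) :
    IsClosed (Icc 0 T ∩ {t | ∃ x y, x ≠ y ∧ lam t * ω (dist x y) t ≤ |θ x t - θ y t|}) := by
  refine isClosed_iff_frequently.2 fun ts hfreq => ?_
  have hts : ts ∈ Icc 0 T := isClosed_Icc.mem_of_frequently_of_tendsto
    (hfreq.mono fun t ht => ht.1) tendsto_id
  refine ⟨hts, by_contra fun hobeys => ?_⟩
  simp only [mem_ofPred_eq, not_exists, not_and, not_le] at hobeys
  have hcurve : Tendsto (fun t => (t, lam t)) (𝓝[Ici 0] ts) (𝓝[Ici 0] ts ×ˢ 𝓝 (lam ts)) :=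
    tendsto_id.prodMk hlamc.continuousWithinAt
  have hev := eventually_nhdsWithin_iff.1
    (hcurve.eventually (h.eventually_obeys hts.1 (hlam0 ts) hobeys))
  obtain ⟨t, ⟨htI, x, y, hxy, hge⟩, ht⟩ := (hfreq.and_eventually hev).exists
  exact (ht htI.1 x y hxy).not_ge hge

lemma exists_first_contact [CompleteSpace E] (hT : 0 ≤ T) {lam : ℝ → ℝ} (hlamc : Continuous lam)
    (hlam0 : ∀ t, 0 < lam t) (hinit : ∀ x y, x ≠ y → |θ x 0 - θ y 0| < lam 0 * ω (dist x y) 0)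
    (hviol : ∃ x y, x ≠ y ∧ lam T * ω (dist x y) T ≤ |θ x T - θ y T|) :
    ∃ t₀ ∈ Ioc 0 T, (∀ t ∈ Icc 0 t₀, ∀ x y, |θ x t - θ y t| ≤ lam t * ω (dist x y) t) ∧
      ∃ x y, IsContactPair (fun p => θ p t₀) (fun ξ => lam t₀ * ω ξ t₀) x y := by
  obtain ⟨t₀, ⟨ht₀, x, y, hxy, hge⟩, hleast⟩ :=
    (isCompact_Icc.of_isClosed_subset (h.isClosed_violationTimes hlamc hlam0)
      inter_subset_left).exists_isLeast ⟨T, right_mem_Icc.2 hT, hviol⟩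
  have hpos : 0 < t₀ := ht₀.1.lt_of_ne fun h0 => by
    subst h0
    exact (hinit x y hxy).not_ge hge
  have hbefore : ∀ t ∈ Ico 0 t₀, ∀ x y, |θ x t - θ y t| ≤ lam t * ω (dist x y) t := by
    intro t ht x y
    by_contra! hlt
    refine ht.2.not_ge (hleast ⟨⟨ht.1, ht.2.le.trans ht₀.2⟩, x, y, ?_, hlt.le⟩)
    rintro rfl
    simp [(h.isConcaveModulus ht.1).zero] at hlt
  have hupto : ∀ t ∈ Icc 0 t₀, ∀ x y, |θ x t - θ y t| ≤ lam t * ω (dist x y) t := by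
    intro t ht x y
    have hmem : t ∈ closure (Ico 0 t₀) := by rwa [closure_Ico hpos.ne]
    have hsub : Ico 0 t₀ ⊆ Ici 0 := fun s hs => hs.1
    exact ContinuousWithinAt.closure_le hmem
      (((h.continuousOn_time x).sub (h.continuousOn_time y)).abs t ht.1 |>.mono hsub)
      ((hlamc.continuousOn.mul (h.modulus_continuousOn_time dist_nonneg)) t ht.1 |>.mono hsub)
      fun s hs => hbefore s hs x y
  have hle := hupto t₀ (right_mem_Icc.2 hpos.le)
  refine ⟨t₀, ⟨hpos, ht₀.2⟩, hupto, ?_⟩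
  rcases isContactPair_or_swap (g := fun p => θ p t₀) (w := fun ξ => lam t₀ * ω ξ t₀) hxy hle
    (le_antisymm (hle x y) hge) with hc | hc
  exacts [⟨x, y, hc⟩, ⟨y, x, hc⟩]

lemma isCompact_obeyedTimes (T : ℝ) :
    IsCompact {t ∈ Icc 0 T | ∀ x y, |θ x t - θ y t| ≤ ω (dist x y) t} := by
  refine isCompact_Icc.of_isClosed_subset ?_ (sep_subset _ _)
  have hsub : Icc 0 T ⊆ Ici 0 := fun t ht => ht.1
  have hpair : ∀ x y, IsClosed {t ∈ Icc 0 T | |θ x t - θ y t| ≤ ω (dist x y) t} := fun x y =>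
    isClosed_Icc.isClosed_le (((h.continuousOn_time x).sub (h.continuousOn_time y)).abs.mono hsub)
      ((h.modulus_continuousOn_time dist_nonneg).mono hsub)
  convert isClosed_iInter fun x => isClosed_iInter (hpair x) using 1
  ext t
  simp only [mem_ofPred_eq, mem_iInter]
  exact ⟨fun ht x y => ⟨ht.1, ht.2 x y⟩, fun ht => ⟨(ht 0 0).1, fun x y => (ht x y).2⟩⟩

lemma eventually_forall_lt_or_exists [CompleteSpace E] (T T' : ℝ) :
    ∀ᶠ ε in 𝓝 (0 : ℝ), ∀ t ∈ Icc 0 T, (∀ x y, |θ x t - θ y t| ≤ ω (dist x y) t) → ∀ x y, x ≠ y →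
      |θ x t - θ y t| < Real.exp (ε * (t - T')) * ω (dist x y) t ∨
        ∃ z, |θ x t - θ y t| < Real.exp (ε * (t - T')) * (2 * |θ z t|) := by
  let P : ℝ → ℝ → Prop := fun ε t => ∀ x y, x ≠ y →
    |θ x t - θ y t| < Real.exp (ε * (t - T')) * ω (dist x y) t ∨
      ∃ z, |θ x t - θ y t| < Real.exp (ε * (t - T')) * (2 * |θ z t|)
  suffices hP : ∀ᶠ ε in 𝓝 (0 : ℝ),
      ∀ t ∈ {t ∈ Icc 0 T | ∀ x y, |θ x t - θ y t| ≤ ω (dist x y) t}, P ε t from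
    hP.mono fun ε hε t ht hobeys => hε t ⟨ht, hobeys⟩
  refine (h.isCompact_obeyedTimes T).induction_on (p := fun C => ∀ᶠ ε in 𝓝 (0 : ℝ), ∀ t ∈ C, P ε t)
    (.of_forall fun _ _ => False.elim) (fun C C' hCC' hC' => hC'.mono fun ε hε t ht =>
      hε t (hCC' ht)) (fun C C' hC hC' => ?_) fun ts ⟨hts, hobeys⟩ => ?_
  · filter_upwards [hC, hC'] with ε hε hε' t ht using ht.elim (hε t) (hε' t)
  · have hfactor : Tendsto (fun p : ℝ × ℝ => (p.1, Real.exp (p.2 * (p.1 - T'))))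
        (𝓝[Ici 0] ts ×ˢ 𝓝 0) (𝓝[Ici 0] ts ×ˢ 𝓝 1) := by
      refine tendsto_fst.prodMk (Tendsto.mono_left ?_
        (prod_mono_left _ (nhdsWithin_le_nhds (s := Ici 0))))
      rw [← nhds_prod_eq]
      exact Continuous.tendsto' (by fun_prop) _ _ (by simp)
    obtain ⟨A, hA, B, hB, hAB⟩ := eventually_prod_iff.1
      (hfactor.eventually (h.eventually_lt_or_exists hts.1 hobeys))
    exact ⟨{t | A t}, nhdsWithin_mono _ (fun t ht => ht.1.1) hA,
      hB.mono fun ε hε t ht => hAB ht hε⟩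

/-- The modulus is contracted by a factor growing in time, which makes the key inequality strict. -/
lemma exists_contact [CompleteSpace E]
    (hinit : ∀ x y, x ≠ y → |θ x 0 - θ y 0| < ω (dist x y) 0) (hT : 0 < T)
    (hviol : ∃ x y, x ≠ y ∧ ω (dist x y) T ≤ |θ x T - θ y T|) :
    ∃ ε > 0, ∃ t₀ ∈ Ioc 0 T,
      (∀ t ∈ Icc 0 t₀, ∀ x y, |θ x t - θ y t| ≤ Real.exp (ε * (t - 2 * T)) * ω (dist x y) t) ∧
      ∃ x₀ y₀, IsContactPair (fun x => θ x t₀)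
          (fun ξ => Real.exp (ε * (t₀ - 2 * T)) * ω ξ t₀) x₀ y₀ ∧
        ∃ z, ω (dist x₀ y₀) t₀ < 2 * |θ z t₀| := by
  have hstart : ∀ᶠ ε in 𝓝 (0 : ℝ), ∀ x y, x ≠ y →
      |θ x 0 - θ y 0| < Real.exp (ε * (0 - 2 * T)) * ω (dist x y) 0 := by
    have hfactor : Tendsto (fun ε : ℝ => ((0 : ℝ), Real.exp (ε * (0 - 2 * T)))) (𝓝 0)
        (𝓝[Ici 0] 0 ×ˢ 𝓝 1) :=
      (tendsto_const_nhdsWithin self_mem_Ici).prodMk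
        (Continuous.tendsto' (by fun_prop) _ _ (by simp))
    exact hfactor.eventually (h.eventually_obeys le_rfl one_pos (by simpa only [one_mul]))
  obtain ⟨ε, ⟨hstart, hgood⟩, hε⟩ := (((hstart.and
    (h.eventually_forall_lt_or_exists T (2 * T))).filter_mono nhdsWithin_le_nhds).and
      (self_mem_nhdsWithin (s := Ioi 0))).exists
  have hle_one : ∀ t ≤ T, Real.exp (ε * (t - 2 * T)) ≤ 1 := fun t ht =>
    Real.exp_le_one_iff.2 (mul_nonpos_of_nonneg_of_nonpos (le_of_lt hε) (by linarith))
  have hmul_le : ∀ t ∈ Icc 0 T, ∀ x y : E,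
      Real.exp (ε * (t - 2 * T)) * ω (dist x y) t ≤ ω (dist x y) t := fun t ht x y =>
    mul_le_of_le_one_left ((h.isConcaveModulus ht.1).nonneg dist_nonneg) (hle_one t ht.2)
  obtain ⟨a, b, hab, hge⟩ := hviol
  obtain ⟨t₀, ht₀, hle, x₀, y₀, hc⟩ := h.exists_first_contact hT.le
    (lam := fun t => Real.exp (ε * (t - 2 * T))) (by fun_prop) (fun t => Real.exp_pos _) hstart
    ⟨a, b, hab, (hmul_le T ⟨hT.le, le_rfl⟩ a b).trans hge⟩
  have ht₀' : t₀ ∈ Icc 0 T := ⟨ht₀.1.le, ht₀.2⟩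
  have heq : |θ x₀ t₀ - θ y₀ t₀| = Real.exp (ε * (t₀ - 2 * T)) * ω (dist x₀ y₀) t₀ := by
    rw [hc.sub_eq, abs_of_nonneg]
    exact mul_nonneg (Real.exp_pos _).le ((h.isConcaveModulus ht₀'.1).nonneg dist_nonneg)
  refine ⟨ε, hε, t₀, ht₀, hle, x₀, y₀, hc, ?_⟩
  obtain hlt | ⟨z, hz⟩ := hgood t₀ ht₀' (fun x y =>
    (hle t₀ (right_mem_Icc.2 ht₀'.1) x y).trans (hmul_le t₀ ht₀' x y)) x₀ y₀ hc.ne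
  · exact absurd heq hlt.ne
  · exact ⟨z, lt_of_mul_lt_mul_left (heq ▸ hz) (Real.exp_pos _).le⟩

end IsAdmissiblePair

lemma exists_translates_dist_le {E : Type*} [SeminormedAddCommGroup E] {Λ : Set E} {R : ℝ}
    (hΛ : ∀ x, ∃ v ∈ Λ, ‖x + v‖ ≤ R) (x y : E) :
    ∃ v ∈ Λ, ∃ v' ∈ Λ, ‖x + v‖ ≤ 3 * R ∧ ‖y + v'‖ ≤ 3 * R ∧ dist (x + v) (y + v') ≤ dist x y := by
  obtain ⟨v, hv, hxv⟩ := hΛ x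
  obtain ⟨v', hv', hyv'⟩ := hΛ y
  have hR : 0 ≤ R := (norm_nonneg _).trans hxv
  rcases le_total (dist x y) (2 * R) with hnear | hfar
  · refine ⟨v', hv', v', hv', ?_, by linarith, (dist_add_right x y v').le⟩
    calc ‖x + v'‖ = ‖(x - y) + (y + v')‖ := congrArg _ (by abel)
      _ ≤ dist x y + ‖y + v'‖ := (norm_add_le _ _).trans_eq (by rw [← dist_eq_norm])
      _ ≤ 3 * R := by linarith
  · exact ⟨v, hv, v', hv', by linarith, by linarith,
      (dist_le_norm_add_norm _ _).trans (by linarith)⟩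

lemma exists_lattice_translate_norm_le (d : ℕ) {L : ℝ} (hL : 0 < L)
    (x : EuclideanSpace ℝ (Fin d)) : ∃ v : Fin d → ℤ,
      ‖x + (WithLp.equiv 2 (Fin d → ℝ)).symm (fun i => L * (v i : ℝ))‖ ≤
        √(∑ _i : Fin d, L ^ 2) := by
  refine ⟨fun i => -toIcoDiv hL 0 (x i), ?_⟩
  rw [EuclideanSpace.norm_eq]
  refine Real.sqrt_le_sqrt (Finset.sum_le_sum fun i _ => ?_)
  have hcoord : (x + (WithLp.equiv 2 (Fin d → ℝ)).symm
      (fun i => L * ((-toIcoDiv hL 0 (x i) : ℤ) : ℝ))) i = toIcoMod hL 0 (x i) := by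
    simp [toIcoMod, mul_comm, sub_eq_add_neg]
  obtain ⟨hnonneg, hlt⟩ := toIcoMod_mem_Ico hL 0 (x i)
  rw [hcoord, Real.norm_eq_abs, sq_abs]
  gcongr
  linarith

lemma exists_compact_representatives (d : ℕ) {L : ℝ} (hL : 0 < L)
    {θ : EuclideanSpace ℝ (Fin d) → ℝ → ℝ} (hθ : ∀ v : Fin d → ℤ, ∀ x t,
      θ (x + (WithLp.equiv 2 (Fin d → ℝ)).symm (fun i => L * (v i : ℝ))) t = θ x t) :
    ∃ K : Set (EuclideanSpace ℝ (Fin d)), IsCompact K ∧ ∀ x y, ∃ x' ∈ K, ∃ y' ∈ K,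
      dist x' y' ≤ dist x y ∧ ∀ t, θ x' t = θ x t ∧ θ y' t = θ y t := by
  refine ⟨Metric.closedBall 0 (3 * √(∑ _i : Fin d, L ^ 2)), isCompact_closedBall _ _, fun x y => ?_⟩
  obtain ⟨-, ⟨v, rfl⟩, -, ⟨v', rfl⟩, hx, hy, hdist⟩ := exists_translates_dist_le
    (Λ := range fun v : Fin d → ℤ => (WithLp.equiv 2 (Fin d → ℝ)).symm fun i => L * (v i : ℝ))
    (fun x => exists_range_iff.2 (exists_lattice_translate_norm_le d hL x)) x y
  exact ⟨_, mem_closedBall_zero_iff.2 hx, _, mem_closedBall_zero_iff.2 hy, hdist,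
    fun t => ⟨hθ v x t, hθ v' y t⟩⟩

/-! ### Averages against a truncated cosine -/

/-- One arch of the cosine, extended by zero. It serves as a weight because its second differences
are bounded below by a multiple of itself. -/
noncomputable def cosArch (z : ℝ) : ℝ := Real.cos (min |z| (Real.pi / 2))

lemma continuous_cosArch : Continuous cosArch := by unfold cosArch; fun_prop

lemma cosArch_nonneg (z : ℝ) : 0 ≤ cosArch z :=
  Real.cos_nonneg_of_neg_pi_div_two_le_of_le
    (by linarith [le_min (abs_nonneg z) Real.pi_div_two_pos.le, Real.pi_pos]) (min_le_right _ _)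

lemma cosArch_eq_zero {z : ℝ} (hz : Real.pi / 2 ≤ |z|) : cosArch z = 0 := by
  rw [cosArch, min_eq_right hz, Real.cos_pi_div_two]

lemma cosArch_eq_cos {z : ℝ} (hz : |z| ≤ Real.pi / 2) : cosArch z = Real.cos z := by
  rw [cosArch, min_eq_left hz, Real.cos_abs]

lemma cosArch_zero : cosArch 0 = 1 := by
  rw [cosArch_eq_cos (by simpa using Real.pi_div_two_pos.le), Real.cos_zero]

lemma cos_le_cosArch {z : ℝ} (hz : |z| ≤ Real.pi + Real.pi / 2) : Real.cos z ≤ cosArch z := by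
  rcases le_total |z| (Real.pi / 2) with h | h
  · rw [cosArch_eq_cos h]
  · rw [cosArch_eq_zero h, ← Real.cos_abs]
    exact Real.cos_nonpos_of_pi_div_two_le_of_le h hz

lemma cosArch_second_difference_le (z s : ℝ) :
    2 * cosArch z - cosArch (z + s) - cosArch (z - s) ≤ s ^ 2 * cosArch z := by
  have hp := cosArch_nonneg (z + s)
  have hm := cosArch_nonneg (z - s)
  rcases le_total (Real.pi / 2) |z| with hz | hz
  · rw [cosArch_eq_zero hz]
    linarith
  rcases le_total Real.pi |s| with hs | hs
  · have hs2 : 2 ≤ s ^ 2 := by rw [← sq_abs]; nlinarith [Real.pi_gt_three]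
    linarith [mul_le_mul_of_nonneg_right hs2 (cosArch_nonneg z)]
  · have hsum : Real.cos (z + s) + Real.cos (z - s) = 2 * Real.cos z * Real.cos s := by
      rw [Real.cos_add, Real.cos_sub]
      ring
    have hp' := cos_le_cosArch (z := z + s) ((abs_add_le z s).trans (by linarith))
    have hm' := cos_le_cosArch (z := z - s) ((abs_sub z s).trans (by linarith))
    have hcos := mul_le_mul_of_nonneg_left (Real.one_sub_sq_div_two_le_cos (x := s))
      (cosArch_nonneg z)
    rw [cosArch_eq_cos hz] at hcos ⊢
    linarith

/-- The measure with density `z ↦ cosArch (z / r)`, which is concentrated on `|z| < 2 * r`. -/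
noncomputable def archMeasure (r : ℝ) : Measure ℝ :=
  volume.withDensity fun z => ENNReal.ofReal (cosArch (z / r))

lemma cosArch_div_eq_zero {r : ℝ} (hr : 0 < r) {z : ℝ} (hz : 2 * r ≤ |z|) :
    cosArch (z / r) = 0 := by
  refine cosArch_eq_zero ?_
  rw [abs_div, abs_of_pos hr, le_div_iff₀ hr]
  nlinarith [Real.pi_le_four]

lemma continuous_cosArch_div (r : ℝ) : Continuous fun z : ℝ => cosArch (z / r) :=
  continuous_cosArch.comp (by fun_prop)

lemma integrable_cosArch_div_mul {r : ℝ} (hr : 0 < r) {f : ℝ → ℝ} (hf : Continuous f) (a : ℝ) :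
    Integrable fun z => cosArch ((z + a) / r) * f z := by
  refine Continuous.integrable_of_hasCompactSupport
    ((continuous_cosArch.comp (by fun_prop)).mul hf) ?_
  refine HasCompactSupport.intro (isCompact_closedBall (-a) (2 * r)) fun z hz => ?_
  rw [Metric.mem_closedBall, Real.dist_eq, sub_neg_eq_add] at hz
  rw [cosArch_div_eq_zero hr (not_le.1 hz).le, zero_mul]

lemma integral_archMeasure (r : ℝ) (f : ℝ → ℝ) :
    ∫ z, f z ∂archMeasure r = ∫ z, cosArch (z / r) * f z := by
  rw [archMeasure, integral_withDensity_eq_integral_toReal_smul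
    (continuous_cosArch_div r).measurable.ennreal_ofReal
    (Eventually.of_forall fun _ => ENNReal.ofReal_lt_top)]
  simp only [ENNReal.toReal_ofReal (cosArch_nonneg _), smul_eq_mul]

lemma integrable_archMeasure {r : ℝ} (hr : 0 < r) {f : ℝ → ℝ} (hf : Continuous f) :
    Integrable f (archMeasure r) := by
  rw [archMeasure, integrable_withDensity_iff
    (continuous_cosArch_div r).measurable.ennreal_ofReal
    (Eventually.of_forall fun _ => ENNReal.ofReal_lt_top)]
  simpa only [ENNReal.toReal_ofReal (cosArch_nonneg _), mul_comm, add_zero]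
    using integrable_cosArch_div_mul hr hf 0

lemma isFiniteMeasure_archMeasure {r : ℝ} (hr : 0 < r) : IsFiniteMeasure (archMeasure r) := by
  have h := integrable_archMeasure hr (continuous_const (y := (1 : ℝ)))
  exact (integrable_const_iff_isFiniteMeasure one_ne_zero).1 h

lemma ae_archMeasure_abs_lt {r : ℝ} (hr : 0 < r) : ∀ᵐ z ∂archMeasure r, |z| < 2 * r := by
  rw [archMeasure, ae_withDensity_iff (continuous_cosArch_div r).measurable.ennreal_ofReal]
  refine Eventually.of_forall fun z => not_imp_comm.1 fun hz => ?_
  rw [cosArch_div_eq_zero hr (not_lt.1 hz), ENNReal.ofReal_zero]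

lemma archMeasure_real_univ_pos {r : ℝ} (hr : 0 < r) : 0 < (archMeasure r).real univ := by
  have hmass : (archMeasure r).real univ = ∫ z, cosArch (z / r) * 1 := by
    rw [← integral_archMeasure, integral_const, smul_eq_mul, mul_one]
  have hint := integrable_cosArch_div_mul hr (continuous_const (y := (1 : ℝ))) 0
  simp only [add_zero, mul_one] at hint hmass
  rw [hmass]
  refine integral_pos_of_integrable_nonneg_nonzero (x := 0) (continuous_cosArch_div r) hint
    (fun z => cosArch_nonneg _) (by simp [cosArch_zero])

lemma integral_archMeasure_add {r : ℝ} (f : ℝ → ℝ) (s : ℝ) :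
    ∫ z, f (z + s) ∂archMeasure r = ∫ z, cosArch ((z + -s) / r) * f z := by
  rw [integral_archMeasure,
    ← integral_add_right_eq_self (fun z => cosArch ((z + -s) / r) * f z) s]
  simp only [add_neg_cancel_right]

/-- Discrete integration by parts. -/
lemma integral_second_difference_eq {r : ℝ} (hr : 0 < r) {f : ℝ → ℝ} (hf : Continuous f) (s : ℝ) :
    ∫ z, (2 * f z - f (z + s) - f (z - s)) ∂archMeasure r =
      ∫ z, (2 * cosArch (z / r) - cosArch ((z + s) / r) - cosArch ((z - s) / r)) * f z := by
  have hf0 := (integrable_archMeasure hr hf).const_mul 2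
  have hfs : ∀ a, Integrable (fun z => f (z + a)) (archMeasure r) := fun a =>
    integrable_archMeasure hr (by fun_prop)
  have hbs : ∀ a, Integrable fun z => cosArch ((z + a) / r) * f z :=
    integrable_cosArch_div_mul hr hf
  have hb0 : Integrable fun z => 2 * (cosArch (z / r) * f z) := by
    simpa using (hbs 0).const_mul 2
  have hfdiff : Integrable (fun z => 2 * f z - f (z + s)) (archMeasure r) := hf0.sub (hfs s)
  have hbdiff : Integrable fun z => 2 * (cosArch (z / r) * f z) - cosArch ((z + s) / r) * f z :=
    hb0.sub (hbs s)
  simp only [sub_eq_add_neg _ s, sub_mul]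
  rw [integral_sub hfdiff (hfs (-s)), integral_sub hf0 (hfs s),
    integral_const_mul, integral_archMeasure, integral_archMeasure_add, integral_archMeasure_add]
  simp only [mul_assoc, neg_neg]
  rw [integral_sub hbdiff (hbs (-s)), integral_sub hb0 (hbs s), integral_const_mul]
  ring

lemma integral_second_difference_le {r s : ℝ} (hr : 0 < r) {f : ℝ → ℝ} (hf : Continuous f)
    (hf0 : ∀ z, |z| ≤ 2 * r + |s| → 0 ≤ f z) :
    ∫ z, (2 * f z - f (z + s) - f (z - s)) ∂archMeasure r ≤
      (s / r) ^ 2 * ∫ z, f z ∂archMeasure r := by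
  have hb0 : Integrable fun z => cosArch (z / r) * f z := by
    simpa using integrable_cosArch_div_mul hr hf 0
  have hbs := integrable_cosArch_div_mul hr hf s
  have hbs' := integrable_cosArch_div_mul hr hf (-s)
  simp only [← sub_eq_add_neg] at hbs'
  rw [integral_second_difference_eq hr hf, integral_archMeasure, ← integral_const_mul]
  refine integral_mono ?_ (hb0.const_mul _) fun z => ?_
  · simp only [sub_mul, mul_assoc]
    exact ((hb0.const_mul 2).sub hbs).sub hbs'
  rcases le_or_gt |z| (2 * r + |s|) with hz | hz
  · dsimp only
    rw [← mul_assoc, add_div, sub_div]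
    exact mul_le_mul_of_nonneg_right (cosArch_second_difference_le _ _) (hf0 z hz)
  · have hs := abs_nonneg s
    have h0 := cosArch_div_eq_zero hr (z := z) (by linarith)
    have h1 := cosArch_div_eq_zero hr (z := z + s) (by linarith [abs_sub_abs_le_abs_add z s])
    have h2 := cosArch_div_eq_zero hr (z := z - s) (by linarith [abs_sub_abs_le_abs_sub z s])
    simp [h0, h1, h2]

lemma continuous_integral_archMeasure {r : ℝ} (hr : 0 < r) {h : ℝ → ℝ → ℝ}
    (hh : Continuous fun q : ℝ × ℝ => h q.1 q.2) :
    Continuous fun t => ∫ z, h z t ∂archMeasure r := by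
  have hball : ∀ t, ∫ z, h z t ∂archMeasure r =
      ∫ z in Metric.closedBall 0 (2 * r), cosArch (z / r) * h z t := fun t => by
    rw [integral_archMeasure, setIntegral_eq_integral_of_forall_compl_eq_zero]
    intro z hz
    rw [mem_closedBall_zero_iff, Real.norm_eq_abs] at hz
    rw [cosArch_div_eq_zero hr (not_le.1 hz).le, zero_mul]
  simp only [hball]
  refine continuous_parametric_integral_of_continuous ?_ (isCompact_closedBall 0 (2 * r))
  exact ((continuous_cosArch_div r).comp continuous_snd).mul (hh.comp continuous_swap)

lemma lintegral_Ioo_ofReal_const_mul_rpow {K q κ : ℝ} (hK : 0 ≤ K) (hq : -1 < q) (hκ : 0 < κ) :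
    ∫⁻ η in Ioo 0 κ, ENNReal.ofReal (K * η ^ q) =
      ENNReal.ofReal (K * (κ ^ (q + 1) / (q + 1))) := by
  have hint : IntegrableOn (fun η : ℝ => K * η ^ q) (Ioo 0 κ) :=
    (intervalIntegrable_iff_integrableOn_Ioo_of_le hκ.le).1
      ((intervalIntegral.intervalIntegrable_rpow' hq).const_mul K)
  rw [← ofReal_integral_eq_lintegral_ofReal hint, integral_const_mul,
    ← integral_Ioc_eq_integral_Ioo, ← intervalIntegral.integral_of_le hκ.le,
    integral_rpow (Or.inl hq), Real.zero_rpow (by linarith), sub_zero]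
  filter_upwards [ae_restrict_mem measurableSet_Ioo] with η hη
  exact mul_nonneg hK (Real.rpow_nonneg hη.1.le q)

lemma integral_second_difference_le_of_le {r s C : ℝ} (hr : 0 < r) {f p : ℝ → ℝ}
    (hf : Continuous f) (hp : Continuous p) (hle : ∀ z, |z| ≤ 2 * r + |s| → p z ≤ f z)
    (hp2 : ∀ z, |z| < 2 * r → 2 * p z - p (z + s) - p (z - s) ≤ C * s ^ 2) :
    ∫ z, (2 * f z - f (z + s) - f (z - s)) ∂archMeasure r ≤
      (s / r) ^ 2 * (∫ z, (f z - p z) ∂archMeasure r) +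
        (archMeasure r).real univ * (C * s ^ 2) := by
  have := isFiniteMeasure_archMeasure hr
  have hgap : Integrable (fun z => 2 * (f z - p z) - (f (z + s) - p (z + s)) -
      (f (z - s) - p (z - s))) (archMeasure r) := integrable_archMeasure hr (by fun_prop)
  have hsplit : ∀ᵐ z ∂archMeasure r, 2 * f z - f (z + s) - f (z - s) ≤
      (2 * (f z - p z) - (f (z + s) - p (z + s)) - (f (z - s) - p (z - s))) + C * s ^ 2 := by
    filter_upwards [ae_archMeasure_abs_lt hr] with z hz
    linarith [hp2 z hz]
  refine (integral_mono_ae (integrable_archMeasure hr (by fun_prop))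
    (hgap.add (integrable_const _)) hsplit).trans ?_
  rw [integral_add' hgap (integrable_const _), integral_const, smul_eq_mul]
  gcongr
  exact integral_second_difference_le hr (hf.sub hp) fun z hz => sub_nonneg.2 (hle z hz)

lemma integral_concavityDefect_le {w : ℝ → ℝ} (hwc : Continuous (oddExt w)) {r ξ η C : ℝ}
    (hr : 0 < r) {p : ℝ → ℝ} (hp : Continuous p)
    (hle : ∀ z, |z| ≤ 2 * r + |2 * η| → p z ≤ oddExt w (ξ + z))
    (hp2 : ∀ z, |z| < 2 * r → 2 * p z - p (z + 2 * η) - p (z - 2 * η) ≤ C * (2 * η) ^ 2) :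
    ∫ z, concavityDefect w (ξ + z) η ∂archMeasure r ≤
      (4 / r ^ 2 * (∫ z, (oddExt w (ξ + z) - p z) ∂archMeasure r) +
        4 * C * (archMeasure r).real univ) * η ^ 2 := by
  have h := integral_second_difference_le_of_le hr (f := fun z => oddExt w (ξ + z))
    (by fun_prop) hp hle hp2
  simp only [← add_assoc, ← add_sub_assoc] at h
  exact h.trans_eq (by ring)

/-- If `w` lies above `p`, and `p` has quadratically bounded second differences, then by discrete
integration by parts the averaged near defect of `w` is controlled by the averaged gap `w - p`. -/
lemma IsConcaveModulus.lintegral_nearDefect_le {w : ℝ → ℝ} (hw : IsConcaveModulus w)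
    (hwc : Continuous (oddExt w)) {β κ r ξ C : ℝ} (hβ : β < 2) (hκ : 0 < κ) (hr : 0 < r)
    (hC : 0 ≤ C) (hrξ : 2 * r ≤ ξ) {p : ℝ → ℝ} (hp : Continuous p)
    (hle : ∀ z, |z| ≤ 2 * r + 2 * κ → p z ≤ oddExt w (ξ + z))
    (hp2 : ∀ z s, |z| < 2 * r → 0 ≤ s → s ≤ 2 * κ →
      2 * p z - p (z + s) - p (z - s) ≤ C * s ^ 2) :
    ∫⁻ z, nearDefect β κ w (ξ + z) ∂archMeasure r ≤
      ENNReal.ofReal ((4 / r ^ 2 * (∫ z, (oddExt w (ξ + z) - p z) ∂archMeasure r) +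
        4 * C * (archMeasure r).real univ) * (κ ^ (2 - β) / (2 - β))) := by
  have := isFiniteMeasure_archMeasure hr
  set K := 4 / r ^ 2 * (∫ z, (oddExt w (ξ + z) - p z) ∂archMeasure r) +
    4 * C * (archMeasure r).real univ
  have hgap : 0 ≤ ∫ z, (oddExt w (ξ + z) - p z) ∂archMeasure r := by
    refine integral_nonneg_of_ae ?_
    filter_upwards [ae_archMeasure_abs_lt hr] with z hz
    exact sub_nonneg.2 (hle z (by linarith))
  have hdefect : Continuous fun q : ℝ × ℝ => concavityDefect w (ξ + q.1) q.2 := by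
    unfold concavityDefect
    fun_prop
  calc ∫⁻ z, nearDefect β κ w (ξ + z) ∂archMeasure r
      = ∫⁻ η in Ioo 0 κ, ∫⁻ z,
          ENNReal.ofReal (concavityDefect w (ξ + z) η / η ^ (1 + β)) ∂archMeasure r := by
        refine lintegral_lintegral_swap (Measurable.aemeasurable ?_)
        have hpow : Measurable fun q : ℝ × ℝ => q.2 ^ (1 + β) := by fun_prop
        exact (hdefect.measurable.div hpow).ennreal_ofReal
    _ ≤ ∫⁻ η in Ioo 0 κ, ENNReal.ofReal (K * η ^ (1 - β)) := by
        refine setLIntegral_mono' measurableSet_Ioo fun η ⟨hη, hηκ⟩ => ?_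
        have hslice : Continuous fun z => concavityDefect w (ξ + z) η :=
          hdefect.comp (continuous_id.prodMk continuous_const)
        rw [← ofReal_integral_eq_lintegral_ofReal
          ((integrable_archMeasure hr hslice).div_const _), integral_div]
        · refine ENNReal.ofReal_le_ofReal ?_
          rw [div_le_iff₀ (by positivity), mul_assoc, ← Real.rpow_add hη,
            show 1 - β + (1 + β) = 2 by ring, Real.rpow_two]
          have habs : |2 * η| = 2 * η := abs_of_pos (by linarith)
          exact integral_concavityDefect_le hwc hr hp (fun z hz => hle z (by linarith))
            fun z hz => hp2 z _ hz (by linarith) (by linarith)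
        · filter_upwards [ae_archMeasure_abs_lt hr] with z hz
          have hz := (abs_lt.1 hz).1
          exact div_nonneg (hw.concavityDefect_nonneg (by linarith) η) (by positivity)
    _ = _ := by
        rw [lintegral_Ioo_ofReal_const_mul_rpow (by positivity) (by linarith) hκ,
          show 1 - β + 1 = 2 - β by ring]

/-! ### Growth of averages -/

lemma integral_le_sub_of_hasDerivAt_off_finset (S : Finset ℝ) {g φ : ℝ → ℝ} {a b : ℝ}
    (hab : a ≤ b) (hg : ContinuousOn g (Icc a b)) (hφ : IntegrableOn φ (Icc a b))
    (hd : ∀ t ∈ Ioo a b, t ∉ S → ∃ g', φ t ≤ g' ∧ HasDerivAt g g' t) :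
    ∫ t in a..b, φ t ≤ g b - g a := by
  induction S using Finset.induction_on generalizing a b with
  | empty =>
    have hd' : ∀ t ∈ Ioo a b, φ t ≤ deriv g t ∧ HasDerivAt g (deriv g t) t := fun t ht => by
      obtain ⟨g', hle, h⟩ := hd t ht (Finset.notMem_empty t)
      rw [h.deriv]
      exact ⟨hle, h⟩
    exact intervalIntegral.integral_le_sub_of_hasDeriv_right_of_le hab hg
      (fun t ht => (hd' t ht).2.hasDerivWithinAt) hφ fun t ht => (hd' t ht).1
  | insert c S _ ih =>
    by_cases hc : c ∈ Ioo a b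
    · have hac : Icc a c ⊆ Icc a b := Icc_subset_Icc_right hc.2.le
      have hcb : Icc c b ⊆ Icc a b := Icc_subset_Icc_left hc.1.le
      have hleft := ih hc.1.le (hg.mono hac) (hφ.mono_set hac) fun t ht htS =>
        hd t ⟨ht.1, ht.2.trans hc.2⟩ (by simp [ht.2.ne, htS])
      have hright := ih hc.2.le (hg.mono hcb) (hφ.mono_set hcb) fun t ht htS =>
        hd t ⟨hc.1.trans ht.1, ht.2⟩ (by simp [ht.1.ne', htS])
      rw [← intervalIntegral.integral_add_adjacent_intervals (b := c)
        ((intervalIntegrable_iff_integrableOn_Icc_of_le hc.1.le).2 (hφ.mono_set hac))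
        ((intervalIntegrable_iff_integrableOn_Icc_of_le hc.2.le).2 (hφ.mono_set hcb))]
      linarith
    · refine ih hab hg hφ fun t ht htS => hd t ht ?_
      rw [Finset.mem_insert, not_or]
      exact ⟨fun h => hc (h ▸ ht), htS⟩

lemma mul_sub_toReal_lintegral_le_sub {g : ℝ → ℝ} {N : ℝ → ENNReal} {δ a b : ℝ} (hab : a ≤ b)
    (hg : ContinuousOn g (Icc a b)) (hN : Measurable N) (hN_top : ∫⁻ t in Ioo a b, N t ≠ ⊤)
    (hd : ∃ S : Finset ℝ, ∀ t ∈ Ioo a b, t ∉ S →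
      ∃ g', δ - (N t).toReal ≤ g' ∧ HasDerivAt g g' t) :
    δ * (b - a) - (∫⁻ t in Ioo a b, N t).toReal ≤ g b - g a := by
  obtain ⟨S, hS⟩ := hd
  have hint : IntegrableOn (fun t => (N t).toReal) (Icc a b) :=
    (integrableOn_Icc_iff_integrableOn_Ioo).2
      (integrable_toReal_of_lintegral_ne_top hN.aemeasurable hN_top)
  have hftc := integral_le_sub_of_hasDerivAt_off_finset S hab hg
    (Integrable.sub (integrable_const δ) hint) hS
  simp only [Pi.sub_apply] at hftc
  rwa [intervalIntegral.integral_sub intervalIntegrable_const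
    ((intervalIntegrable_iff_integrableOn_Icc_of_le hab).2 hint),
    intervalIntegral.integral_const, intervalIntegral.integral_of_le hab,
    integral_Ioc_eq_integral_Ioo,
    integral_toReal hN.aemeasurable (ae_lt_top hN hN_top), smul_eq_mul, mul_comm] at hftc

/-- The exceptional times of the derivative bound may depend on `z`, so the bound is integrated in
time first. -/
lemma mul_sub_le_integral_sub_integral {Z : Type*} [MeasurableSpace Z] {μ : Measure Z}
    [IsFiniteMeasure μ] {h : Z → ℝ → ℝ} {N : Z → ℝ → ENNReal} {δ M a b : ℝ} (hab : a ≤ b)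
    (hM : 0 ≤ M) (hcont : ∀ z, ContinuousOn (h z) (Icc a b))
    (hint : ∀ t, Integrable (fun z => h z t) μ) (hN : Measurable fun q : Z × ℝ => N q.1 q.2)
    (hd : ∀ᵐ z ∂μ, ∃ S : Finset ℝ, ∀ t ∈ Ioo a b, t ∉ S →
      ∃ g', δ - (N z t).toReal ≤ g' ∧ HasDerivAt (h z) g' t)
    (hNM : ∀ t ∈ Ioo a b, ∫⁻ z, N z t ∂μ ≤ ENNReal.ofReal M) :
    (δ * μ.real univ - M) * (b - a) ≤ (∫ z, h z b ∂μ) - ∫ z, h z a ∂μ := by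
  set J : Z → ENNReal := fun z => ∫⁻ t in Ioo a b, N z t
  have hJm : Measurable J := hN.lintegral_prod_right'
  have hJ : ∫⁻ z, J z ∂μ ≤ ENNReal.ofReal (M * (b - a)) := by
    calc ∫⁻ z, J z ∂μ = ∫⁻ t in Ioo a b, ∫⁻ z, N z t ∂μ :=
          lintegral_lintegral_swap hN.aemeasurable
      _ ≤ ∫⁻ _ in Ioo a b, ENNReal.ofReal M := setLIntegral_mono' measurableSet_Ioo hNM
      _ = ENNReal.ofReal (M * (b - a)) := by
          rw [setLIntegral_const, Real.volume_Ioo, ← ENNReal.ofReal_mul hM]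
  have hJ_ne_top : ∫⁻ z, J z ∂μ ≠ ⊤ := (hJ.trans_lt ENNReal.ofReal_lt_top).ne
  have hJfin : ∀ᵐ z ∂μ, J z < ⊤ := ae_lt_top hJm hJ_ne_top
  have hJint : Integrable (fun z => (J z).toReal) μ :=
    integrable_toReal_of_lintegral_ne_top hJm.aemeasurable hJ_ne_top
  have hJle : ∫ z, (J z).toReal ∂μ ≤ M * (b - a) := by
    rw [integral_toReal hJm.aemeasurable hJfin]
    exact ENNReal.toReal_le_of_le_ofReal (mul_nonneg hM (sub_nonneg.2 hab)) hJ
  have hpointwise : ∀ᵐ z ∂μ, δ * (b - a) - (J z).toReal ≤ h z b - h z a := by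
    filter_upwards [hJfin, hd] with z hz hdz
    exact mul_sub_toReal_lintegral_le_sub hab (hcont z)
      (hN.comp measurable_prodMk_left) hz.ne hdz
  have hmono := integral_mono_ae ((integrable_const _).sub hJint) ((hint b).sub (hint a)) hpointwise
  rw [integral_sub' (integrable_const _) hJint, integral_sub' (hint b) (hint a), integral_const,
    smul_eq_mul] at hmono
  linarith

lemma lt_of_growth {A : ℝ → ℝ} {t₀ s k m : ℝ} (hs : 0 < s) (hm : 0 < m)
    (hA : Continuous A) (hA0 : 0 ≤ A (t₀ - s)) (hk : 2 * m < k * s)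
    (hgrow : ∀ a b, t₀ - s ≤ a → a ≤ b → b ≤ t₀ → (∀ t ∈ Ioo a b, A t ≤ 2 * m) →
      k * (b - a) ≤ A b - A a) : m < A t₀ := by
  by_contra! hAm
  have : 0 < k := by
    by_contra! hk0
    nlinarith
  obtain ⟨t₁, ht₁, hmin⟩ := isCompact_Icc.exists_isMinOn
    (nonempty_Icc.2 (by linarith : t₀ - s ≤ t₀)) (f := fun t => A t - k / 2 * (t - t₀))
    (by fun_prop)
  have hend : A t₁ - k / 2 * (t₁ - t₀) ≤ A t₀ - k / 2 * (t₀ - t₀) := hmin ⟨by linarith, le_rfl⟩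
  have hlt : t₀ - s < t₁ := by
    refine ht₁.1.lt_of_ne fun h => ?_
    rw [← h] at hend
    linarith
  have hsmall : A t₁ < 2 * m := by nlinarith [ht₁.2]
  obtain ⟨ε, hε, hball⟩ := Metric.eventually_nhds_iff.1 (hA.continuousAt.eventually_lt_const hsmall)
  obtain ⟨a, ha, hat⟩ := exists_between (max_lt (show t₁ - ε < t₁ by linarith) hlt)
  rw [max_lt_iff] at ha
  have hgrow' := hgrow a t₁ ha.2.le hat.le ht₁.2 fun t ht => (hball (by
    rw [Real.dist_eq, abs_lt]
    constructor <;> linarith [ht.1, ht.2, ha.1])).le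
  have hmin' : A t₁ - k / 2 * (t₁ - t₀) ≤ A a - k / 2 * (a - t₀) :=
    hmin ⟨ha.2.le, hat.le.trans ht₁.2⟩
  nlinarith

/-! ### The local contact argument -/

/-- A family of concave moduli `V(·, t)` whose odd extensions depend continuously on the point and
on the time. -/
structure IsModulusFamily (V : ℝ → ℝ → ℝ) : Prop where
  isConcaveModulus : ∀ t, IsConcaveModulus (V · t)
  continuous_oddExt : Continuous fun q : ℝ × ℝ => oddExt (V · q.2) q.1

namespace IsModulusFamily

variable {V : ℝ → ℝ → ℝ} (hV : IsModulusFamily V)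
include hV

lemma continuous_comp {X : Type*} [TopologicalSpace X] {x t : X → ℝ} (hx : Continuous x)
    (ht : Continuous t) : Continuous fun q => oddExt (V · (t q)) (x q) :=
  hV.continuous_oddExt.comp (hx.prodMk ht)

lemma continuous_concavityDefect {X : Type*} [TopologicalSpace X] {x η t : X → ℝ}
    (hx : Continuous x) (hη : Continuous η) (ht : Continuous t) :
    Continuous fun q => concavityDefect (V · (t q)) (x q) (η q) :=
  ((continuous_const.mul (hV.continuous_comp hx ht)).sub
    (hV.continuous_comp (by fun_prop : Continuous fun q => x q + 2 * η q) ht)).sub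
    (hV.continuous_comp (by fun_prop : Continuous fun q => x q - 2 * η q) ht)

lemma measurable_nearDefect (β κ : ℝ) :
    Measurable fun q : ℝ × ℝ => nearDefect β κ (V · q.2) q.1 := by
  have hdefect : Continuous fun y : (ℝ × ℝ) × ℝ => concavityDefect (V · y.1.2) y.1.1 y.2 :=
    hV.continuous_concavityDefect (by fun_prop) (by fun_prop) (by fun_prop)
  exact Measurable.lintegral_prod_right'
    (f := fun y : (ℝ × ℝ) × ℝ =>
      ENNReal.ofReal (concavityDefect (V · y.1.2) y.1.1 y.2 / y.2 ^ (1 + β)))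
    (by have := hdefect.measurable; fun_prop)

lemma continuousAt_farDefect {β κ ξ : ℝ} (hβ : 0 < β) (hκ : 0 < κ) (hξ : 0 < ξ) (t : ℝ) :
    ContinuousAt (fun q : ℝ × ℝ => farDefect β κ (V · q.2) q.1) (ξ, t) := by
  have hpos : ∀ᶠ q : ℝ × ℝ in 𝓝 (ξ, t), 0 < q.1 := continuousAt_fst.eventually_const_lt hξ
  have hbdd : ∀ᶠ q : ℝ × ℝ in 𝓝 (ξ, t), oddExt (V · q.2) q.1 < oddExt (V · t) ξ + 1 :=
    hV.continuous_oddExt.continuousAt.eventually_lt_const (by simp)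
  refine continuousAt_of_dominated
    (bound := fun η => 2 * (oddExt (V · t) ξ + 1) / η ^ (1 + β)) ?_ ?_
    (integrableOn_Ioi_const_div_rpow hβ hκ _) (Eventually.of_forall fun η => ?_)
  · exact Eventually.of_forall fun q =>
      ((hV.isConcaveModulus q.2).measurable_concavityDefect_div β q.1).aestronglyMeasurable
  · filter_upwards [hpos, hbdd] with q hq hqb
    filter_upwards [ae_restrict_mem measurableSet_Ioi] with η hη
    have hη : 0 < η := hκ.trans hη
    refine ((hV.isConcaveModulus q.2).norm_concavityDefect_div_le β hq.le hη.le).trans ?_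
    rw [← (hV.isConcaveModulus q.2).oddExt_of_nonneg hq.le]
    gcongr
  · exact ((hV.continuous_concavityDefect continuous_fst continuous_const
      continuous_snd).div_const _).continuousAt

end IsModulusFamily

lemma exists_second_difference_le {p : ℝ → ℝ → ℝ} {t₀ : ℝ}
    (hp : ContDiffAt ℝ 2 (fun q : ℝ × ℝ => p q.1 q.2) (0, t₀)) :
    ∃ C > 0, ∃ r > 0, ∀ z s t, |z| + |s| < r → |t - t₀| < r →
      2 * p z t - p (z + s) t - p (z - s) t ≤ C * s ^ 2 := by
  obtain ⟨C, hC, r, hr, hT⟩ := exists_taylor_bound hp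
  refine ⟨2 * C, by positivity, r, hr, fun z s t hz ht => ?_⟩
  have hmem : ∀ {z'}, |z'| ≤ |z| + |s| → ((z', t) : ℝ × ℝ) ∈ Metric.ball ((0 : ℝ), t₀) r :=
    fun hz' => by
      rw [Metric.mem_ball, Prod.dist_eq]
      simpa only [Real.dist_eq, sub_zero, max_lt_iff] using ⟨hz'.trans_lt hz, ht⟩
  have htaylor : ∀ σ, |σ| = |s| →
      |p (z + σ) t - p z t - fderiv ℝ (fun q : ℝ × ℝ => p q.1 q.2) (z, t) (σ, 0)| ≤ C * s ^ 2 := by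
    intro σ hσ
    have hz₀ : |z| ≤ |z| + |s| := le_add_of_nonneg_right (abs_nonneg s)
    have hzσ : |z + σ| ≤ |z| + |s| := hσ ▸ abs_add_le z σ
    simpa [Prod.norm_def, hσ, sq_abs] using hT (z, t) (σ, 0) (hmem hz₀) (by simpa using hmem hzσ)
  have hplus := (abs_le.1 (htaylor s rfl)).1
  have hminus := (abs_le.1 (htaylor (-s) (abs_neg s))).1
  rw [show ((-s, 0) : ℝ × ℝ) = -(s, 0) by simp, map_neg, ← sub_eq_add_neg] at hminus
  linarith

lemma exists_pos_mul_rpow_le {q ε R : ℝ} (hq : 0 < q) (hε : 0 < ε) (hR : 0 < R) (K : ℝ) :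
    ∃ κ > 0, κ < R ∧ K * κ ^ q ≤ ε := by
  have h : Tendsto (fun κ : ℝ => K * κ ^ q) (𝓝[>] 0) (𝓝 0) := by
    have := (Real.continuousAt_rpow_const 0 q (Or.inr hq.le)).tendsto.const_mul K
    rw [Real.zero_rpow hq.ne', mul_zero] at this
    exact this.mono_left nhdsWithin_le_nhds
  obtain ⟨κ, ⟨hκε, hκR⟩, hκ⟩ := (((h.eventually_lt_const hε).and
    (nhdsWithin_le_nhds (Iio_mem_nhds hR))).and self_mem_nhdsWithin).exists
  exact ⟨κ, hκ, hκR, hκε.le⟩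

/-- A function `p(z, t)` touching a modulus `V(ξ₀ + z, t)` from below at `z = 0` and at the end
`t₀` of a time interval, where `p` is subject to a drift of size `U` and to the dissipation of
`V(·, t₀)`, and `V` is, up to a margin `m`, a supersolution of the same law. -/
structure IsLocalContact (β c m ξ₀ t₀ ρ : ℝ) (V p U : ℝ → ℝ → ℝ) : Prop where
  family : IsModulusFamily V
  continuous : Continuous fun q : ℝ × ℝ => p q.1 q.2
  contDiffAt : ContDiffAt ℝ 2 (fun q : ℝ × ℝ => p q.1 q.2) (0, t₀)
  speed_continuousAt : ContinuousAt (fun q : ℝ × ℝ => U q.1 q.2) (0, t₀)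
  speed_nonneg : ∀ z t, 0 ≤ U z t
  le : ∀ z t, |z| < ρ → t ∈ Icc (t₀ - ρ) t₀ → p z t ≤ V (ξ₀ + z) t
  eq : p 0 t₀ = V ξ₀ t₀
  time_deriv_le : ∀ κ > 0, ∀ b, HasDerivWithinAt (V · t₀) b (Ici ξ₀) ξ₀ →
    fderiv ℝ (fun q : ℝ × ℝ => p q.1 q.2) (0, t₀) (0, 1) ≤
      U 0 t₀ * b - c * farDefect β κ (V · t₀) ξ₀
  supersolution : ∀ z, |z| < ρ → ∃ S : Finset ℝ, ∀ t ∈ Ioo (t₀ - ρ) t₀, t ∉ S →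
    ∃ a, HasDerivAt (V (ξ₀ + z)) a t ∧ ∀ κ b, 0 < κ → 2 * κ ≤ ξ₀ + z →
      HasDerivWithinAt (V · t) b (Ici (ξ₀ + z)) (ξ₀ + z) →
      m + U z t * b - c * ((nearDefect β κ (V · t) (ξ₀ + z)).toReal +
        farDefect β κ (V · t) (ξ₀ + z)) ≤ a

namespace IsLocalContact

variable {β c m ξ₀ t₀ ρ : ℝ} {V p U : ℝ → ℝ → ℝ} (h : IsLocalContact β c m ξ₀ t₀ ρ V p U)
include h

lemma mono {ρ' : ℝ} (hρ : ρ' ≤ ρ) : IsLocalContact β c m ξ₀ t₀ ρ' V p U where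
  __ := h
  le z t hz ht := h.le z t (hz.trans_le hρ) ⟨by linarith [ht.1], ht.2⟩
  supersolution z hz :=
    (h.supersolution z (hz.trans_le hρ)).imp fun _ hS t ht => hS t ⟨by linarith [ht.1], ht.2⟩

lemma continuous_gap : Continuous fun q : ℝ × ℝ => oddExt (V · q.2) (ξ₀ + q.1) - p q.1 q.2 :=
  (h.family.continuous_comp (by fun_prop) continuous_snd).sub h.continuous

lemma gap_nonneg (hρξ : ρ ≤ ξ₀) {z t : ℝ} (hz : |z| < ρ) (ht : t ∈ Icc (t₀ - ρ) t₀) :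
    0 ≤ oddExt (V · t) (ξ₀ + z) - p z t := by
  rw [(h.family.isConcaveModulus t).oddExt_of_nonneg (by linarith [(abs_lt.1 hz).1])]
  exact sub_nonneg.2 (h.le z t hz ht)

/-- The right derivative of `V` need not be continuous, so it is replaced by a difference quotient,
which lies below it by concavity. -/
lemma exists_slope_drift_lt (hξ₀ : 0 < ξ₀) (hm : 0 < m) {κ : ℝ} (hκ : 0 < κ) :
    ∃ σ > 0, fderiv ℝ (fun q : ℝ × ℝ => p q.1 q.2) (0, t₀) (0, 1) <
      U 0 t₀ * ((oddExt (V · t₀) (ξ₀ + σ) - oddExt (V · t₀) ξ₀) / σ) -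
        c * farDefect β κ (V · t₀) ξ₀ + m / 2 := by
  have hmod := h.family.isConcaveModulus t₀
  obtain ⟨b, hb, -⟩ := hmod.exists_hasDerivWithinAt_supergradient hξ₀
  have hslope : Tendsto (slope (V · t₀) ξ₀) (𝓝[>] ξ₀) (𝓝 b) := by
    have := hasDerivWithinAt_iff_tendsto_slope.1 hb
    rwa [Ici_sdiff_left] at this
  have hlim := (((hslope.const_mul (U 0 t₀)).sub_const (c * farDefect β κ (V · t₀) ξ₀)).add_const
    (m / 2)).eventually_const_lt
    ((h.time_deriv_le κ hκ b hb).trans_lt (lt_add_of_pos_right _ (half_pos hm)))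
  obtain ⟨y, hy, hξy⟩ := (hlim.and self_mem_nhdsWithin).exists
  have hξy : ξ₀ < y := hξy
  refine ⟨y - ξ₀, sub_pos.2 hξy, ?_⟩
  rwa [add_sub_cancel, hmod.oddExt_of_nonneg hξ₀.le, hmod.oddExt_of_nonneg (hξ₀.trans hξy).le,
    ← slope_def_field (V · t₀)]

lemma exists_time_deriv_le (hβ : 0 < β) (hξ₀ : 0 < ξ₀) (hm : 0 < m) {κ : ℝ} (hκ : 0 < κ) :
    ∃ r > 0, ∀ z t, |z| < r → |t - t₀| < r →
      DifferentiableAt ℝ (fun q : ℝ × ℝ => p q.1 q.2) (z, t) ∧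
      ∀ b, HasDerivWithinAt (V · t) b (Ici (ξ₀ + z)) (ξ₀ + z) →
        fderiv ℝ (fun q : ℝ × ℝ => p q.1 q.2) (z, t) (0, 1) ≤
          U z t * b - c * farDefect β κ (V · t) (ξ₀ + z) + m / 2 := by
  obtain ⟨σ, hσ, hlt⟩ := h.exists_slope_drift_lt hξ₀ hm hκ
  have hderiv : ContinuousAt
      (fun q => fderiv ℝ (fun q : ℝ × ℝ => p q.1 q.2) q (0, 1)) (0, t₀) :=
    (h.contDiffAt.fderiv_right (m := 1) (by norm_num)).continuousAt.clm_apply continuousAt_const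
  have hslope : Continuous fun q : ℝ × ℝ =>
      (oddExt (V · q.2) (ξ₀ + q.1 + σ) - oddExt (V · q.2) (ξ₀ + q.1)) / σ :=
    ((h.family.continuous_comp (by fun_prop) continuous_snd).sub
      (h.family.continuous_comp (by fun_prop) continuous_snd)).div_const σ
  have hfar : ContinuousAt (fun q : ℝ × ℝ => farDefect β κ (V · q.2) (ξ₀ + q.1)) (0, t₀) :=
    (h.family.continuousAt_farDefect hβ hκ hξ₀ t₀).comp_of_eq
      (f := fun q : ℝ × ℝ => (ξ₀ + q.1, q.2)) (by fun_prop) (by simp)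
  have hnear : ∀ᶠ q : ℝ × ℝ in 𝓝 (0, t₀),
      fderiv ℝ (fun q : ℝ × ℝ => p q.1 q.2) q (0, 1) < U q.1 q.2 *
        ((oddExt (V · q.2) (ξ₀ + q.1 + σ) - oddExt (V · q.2) (ξ₀ + q.1)) / σ) -
          c * farDefect β κ (V · q.2) (ξ₀ + q.1) + m / 2 :=
    hderiv.eventually_lt (((h.speed_continuousAt.mul hslope.continuousAt).sub
      (continuousAt_const.mul hfar)).add continuousAt_const) (by simpa using hlt)
  have hdiff : ∀ᶠ q in 𝓝 ((0 : ℝ), t₀), DifferentiableAt ℝ (fun q : ℝ × ℝ => p q.1 q.2) q :=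
    (h.contDiffAt.eventually (by simp)).mono fun q hq => hq.differentiableAt (by norm_num)
  have hpos : ∀ᶠ q : ℝ × ℝ in 𝓝 (0, t₀), 0 < ξ₀ + q.1 :=
    (by fun_prop : ContinuousAt (fun q : ℝ × ℝ => ξ₀ + q.1) (0, t₀)).eventually_const_lt
      (by simpa using hξ₀)
  obtain ⟨r, hr, hball⟩ := Metric.eventually_nhds_iff_ball.1 ((hnear.and hdiff).and hpos)
  refine ⟨r, hr, fun z t hz ht => ?_⟩
  obtain ⟨⟨hz_lt, hz_diff⟩, hz_pos⟩ := hball (z, t) (by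
    rw [Metric.mem_ball, Prod.dist_eq]
    simpa only [Real.dist_eq, sub_zero, max_lt_iff] using ⟨hz, ht⟩)
  refine ⟨hz_diff, fun b hb => hz_lt.le.trans ?_⟩
  have hmod := h.family.isConcaveModulus t
  have hU := h.speed_nonneg z t
  gcongr
  exact hmod.slope_le_of_hasDerivWithinAt hz_pos hσ hb

lemma exists_gap_deriv_ge (hβ : 0 < β) (hξ₀ : 0 < ξ₀) (hρ : 0 < ρ) (hm : 0 < m) (hc : 0 ≤ c)
    {κ : ℝ} (hκ : 0 < κ) (hκξ : 4 * κ ≤ ξ₀) :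
    ∃ r > 0, ∀ z, |z| < r → ∃ S : Finset ℝ, ∀ t ∈ Ioo (t₀ - r) t₀, t ∉ S → ∃ g',
      m / 2 - (ENNReal.ofReal c * nearDefect β κ (V · t) (ξ₀ + z)).toReal ≤ g' ∧
        HasDerivAt (fun t => oddExt (V · t) (ξ₀ + z) - p z t) g' t := by
  obtain ⟨r, hr, hdrift⟩ := h.exists_time_deriv_le hβ hξ₀ hm hκ
  refine ⟨min r (min ρ (ξ₀ / 2)), by positivity, fun z hz => ?_⟩
  simp only [lt_min_iff] at hz
  obtain ⟨hzr, hzρ, hzξ⟩ := hz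
  have hξz : 2 * κ ≤ ξ₀ + z := by linarith [(abs_lt.1 hzξ).1]
  obtain ⟨S, hS⟩ := h.supersolution z hzρ
  refine ⟨S, fun t ht htS => ?_⟩
  have hr' : min r (min ρ (ξ₀ / 2)) ≤ r := min_le_left _ _
  have hρ' : min r (min ρ (ξ₀ / 2)) ≤ ρ := (min_le_right _ _).trans (min_le_left _ _)
  obtain ⟨a, ha, hsuper⟩ := hS t ⟨by linarith [ht.1], ht.2⟩ htS
  obtain ⟨hdiff, hle⟩ := hdrift z t hzr
    (by rw [abs_lt]; constructor <;> linarith [ht.1, ht.2])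
  obtain ⟨b, hb, -⟩ := (h.family.isConcaveModulus t).exists_hasDerivWithinAt_supergradient
    (by linarith : 0 < ξ₀ + z)
  have hp : HasDerivAt (p z) (fderiv ℝ (fun q : ℝ × ℝ => p q.1 q.2) (z, t) (0, 1)) t :=
    hdiff.hasFDerivAt.comp_hasDerivAt t ((hasDerivAt_const t z).prodMk (hasDerivAt_id t))
  have hodd : (fun t => oddExt (V · t) (ξ₀ + z)) = V (ξ₀ + z) :=
    funext fun t => (h.family.isConcaveModulus t).oddExt_of_nonneg (by linarith)
  refine ⟨_, ?_, (hodd ▸ ha).fun_sub hp⟩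
  rw [ENNReal.toReal_mul, ENNReal.toReal_ofReal hc]
  linarith [hle b hb, hsuper κ b hκ hξz hb]

lemma gap_le_sq (hρξ : ρ ≤ ξ₀) {C z : ℝ} (hz : |z| < ρ)
    (hC : 2 * p 0 t₀ - p z t₀ - p (-z) t₀ ≤ C * z ^ 2) :
    oddExt (V · t₀) (ξ₀ + z) - p z t₀ ≤ C * z ^ 2 := by
  have hmod := h.family.isConcaveModulus t₀
  obtain ⟨hz₁, hz₂⟩ := abs_lt.1 hz
  have hmid : 0 ≤ concavityDefect (V · t₀) ξ₀ (z / 2) := hmod.concavityDefect_nonneg (by linarith) _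
  have hneg := h.gap_nonneg hρξ (z := -z) (by rwa [abs_neg])
    ⟨by linarith [abs_nonneg z], le_rfl⟩
  rw [concavityDefect, mul_div_cancel₀ z two_ne_zero, hmod.oddExt_of_nonneg (x := ξ₀) (by linarith),
    ← h.eq] at hmid
  rw [← sub_eq_add_neg] at hneg
  linarith

lemma integral_gap_le (hρξ : ρ ≤ ξ₀) {C r : ℝ} (hC : 0 ≤ C) (hr : 0 < r) (hrρ : 2 * r ≤ ρ)
    (hp2 : ∀ z, |z| < 2 * r → 2 * p 0 t₀ - p z t₀ - p (-z) t₀ ≤ C * z ^ 2) :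
    ∫ z, (oddExt (V · t₀) (ξ₀ + z) - p z t₀) ∂archMeasure r ≤
      4 * C * r ^ 2 * (archMeasure r).real univ := by
  have := isFiniteMeasure_archMeasure hr
  have hint : Integrable (fun z => oddExt (V · t₀) (ξ₀ + z) - p z t₀) (archMeasure r) :=
    integrable_archMeasure hr (h.continuous_gap.comp (Continuous.prodMk_left t₀))
  calc ∫ z, (oddExt (V · t₀) (ξ₀ + z) - p z t₀) ∂archMeasure r
      ≤ ∫ _, 4 * C * r ^ 2 ∂archMeasure r := by
        refine integral_mono_ae hint (integrable_const _) ?_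
        filter_upwards [ae_archMeasure_abs_lt hr] with z hz
        refine (h.gap_le_sq hρξ (hz.trans_le hrρ) (hp2 z hz)).trans ?_
        have hsq : z ^ 2 ≤ (2 * r) ^ 2 := by
          rw [← sq_abs z]
          gcongr
        nlinarith
    _ = 4 * C * r ^ 2 * (archMeasure r).real univ := by
        rw [integral_const, smul_eq_mul, mul_comm]

lemma lintegral_nearDefect_le (hβ : β < 2) (hc : 0 ≤ c) (hρξ : ρ ≤ ξ₀) {κ C r t : ℝ} (hκ : 0 < κ)
    (hr : 0 < r) (hC : 0 ≤ C) (hρ : 2 * r + 2 * κ < ρ) (ht : t ∈ Icc (t₀ - ρ) t₀)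
    (hp2 : ∀ z s, |z| < 2 * r → 0 ≤ s → s ≤ 2 * κ →
      2 * p z t - p (z + s) t - p (z - s) t ≤ C * s ^ 2)
    (hgap : ∫ z, (oddExt (V · t) (ξ₀ + z) - p z t) ∂archMeasure r ≤
      2 * (4 * C * r ^ 2 * (archMeasure r).real univ)) :
    ∫⁻ z, ENNReal.ofReal c * nearDefect β κ (V · t) (ξ₀ + z) ∂archMeasure r ≤
      ENNReal.ofReal (36 * c * C * (κ ^ (2 - β) / (2 - β)) * (archMeasure r).real univ) := by
  have hβ' : 0 < 2 - β := sub_pos.2 hβ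
  have hnear := (h.family.isConcaveModulus t).lintegral_nearDefect_le
    (h.family.continuous_comp continuous_id continuous_const) hβ hκ hr hC (ξ := ξ₀) (by linarith)
    (h.continuous.comp (Continuous.prodMk_left t))
    (fun z hz => sub_nonneg.1 (h.gap_nonneg hρξ (hz.trans_lt hρ) ht)) hp2
  rw [lintegral_const_mul' _ _ ENNReal.ofReal_ne_top]
  calc ENNReal.ofReal c * ∫⁻ z, nearDefect β κ (V · t) (ξ₀ + z) ∂archMeasure r
      ≤ ENNReal.ofReal c * ENNReal.ofReal ((4 / r ^ 2 *
          (2 * (4 * C * r ^ 2 * (archMeasure r).real univ)) + 4 * C * (archMeasure r).real univ) *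
            (κ ^ (2 - β) / (2 - β))) := by
        refine mul_le_mul_right (hnear.trans (ENNReal.ofReal_le_ofReal ?_)) _
        gcongr
        exact hgap
    _ = _ := by
        rw [← ENNReal.ofReal_mul hc]
        congr 1
        field_simp
        ring

/-- As long as the average of the gap `V - p` is of order `r ^ 2`, it grows at a definite rate. -/
lemma growth (hβ₀ : 0 < β) (hβ : β < 2) (hc : 0 ≤ c) (hρ : 0 < ρ) (hρξ : ρ ≤ ξ₀) (hm : 0 < m)
    {C : ℝ} (hC : 0 < C)
    (hp2 : ∀ z s t, |z| + |s| < ρ → |t - t₀| < ρ →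
      2 * p z t - p (z + s) t - p (z - s) t ≤ C * s ^ 2) :
    ∃ r₁ > 0, ∀ r > 0, 2 * r < r₁ → ∀ a b, t₀ - r₁ < a → a ≤ b → b ≤ t₀ →
      (∀ t ∈ Ioo a b, ∫ z, (oddExt (V · t) (ξ₀ + z) - p z t) ∂archMeasure r ≤
        2 * (4 * C * r ^ 2 * (archMeasure r).real univ)) →
      m / 4 * (archMeasure r).real univ * (b - a) ≤
        (∫ z, (oddExt (V · b) (ξ₀ + z) - p z b) ∂archMeasure r) -
          ∫ z, (oddExt (V · a) (ξ₀ + z) - p z a) ∂archMeasure r := by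
  obtain ⟨κ, hκ, hκρ, hκm⟩ := exists_pos_mul_rpow_le (sub_pos.2 hβ)
    (show 0 < m / 4 by positivity) (show 0 < ρ / 4 by positivity) (36 * c * C / (2 - β))
  obtain ⟨r₁, hr₁, hderiv⟩ := h.exists_gap_deriv_ge hβ₀ (hρ.trans_le hρξ) hρ hm hc hκ (by linarith)
  refine ⟨min r₁ (ρ / 2), by positivity, fun r hr hrr a b ha hab hb hgap => ?_⟩
  have := isFiniteMeasure_archMeasure hr
  obtain ⟨hrr₁, hrρ⟩ := lt_min_iff.1 hrr
  have hmin₁ : min r₁ (ρ / 2) ≤ r₁ := min_le_left _ _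
  have hminρ : min r₁ (ρ / 2) ≤ ρ / 2 := min_le_right _ _
  have : 0 < 2 - β := sub_pos.2 hβ
  refine le_trans ?_ (mul_sub_le_integral_sub_integral hab (by positivity)
    (fun z => (h.continuous_gap.comp (Continuous.prodMk_right z)).continuousOn)
    (fun t => integrable_archMeasure hr (h.continuous_gap.comp (Continuous.prodMk_left t)))
    (((h.family.measurable_nearDefect β κ).comp
      (by fun_prop : Measurable fun q : ℝ × ℝ => (ξ₀ + q.1, q.2))).const_mul (ENNReal.ofReal c))
    (δ := m / 2) ?_ fun t ht => h.lintegral_nearDefect_le hβ hc hρξ hκ hr hC.le (by linarith [hrρ])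
      ⟨by linarith [ht.1], ht.2.le.trans hb⟩ (fun z s hz hs hsκ => hp2 z s t
        (by rw [abs_of_nonneg hs]; linarith)
        (by rw [abs_lt]; constructor <;> linarith [ht.1, ht.2])) (hgap t ht))
  · refine mul_le_mul_of_nonneg_right ?_ (sub_nonneg.2 hab)
    rw [← sub_mul]
    refine mul_le_mul_of_nonneg_right ?_ measureReal_nonneg
    rw [mul_div_assoc', ← div_mul_eq_mul_div]
    linarith
  · filter_upwards [ae_archMeasure_abs_lt hr] with z hz
    obtain ⟨S, hS⟩ := hderiv z (hz.trans hrr₁)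
    exact ⟨S, fun t ht => hS t ⟨by linarith [ht.1], by linarith [ht.2]⟩⟩

end IsLocalContact

/-- The average of the gap at time `t₀` is at most of order `r ^ 2`, which is incompatible with its
growth on a time interval whose length does not depend on `r`. -/
theorem not_isLocalContact {β c m ξ₀ t₀ ρ : ℝ} {V p U : ℝ → ℝ → ℝ} (hβ₀ : 0 < β) (hβ : β < 2)
    (hc : 0 ≤ c) (hξ₀ : 0 < ξ₀) (hρ : 0 < ρ) (hm : 0 < m) :
    ¬IsLocalContact β c m ξ₀ t₀ ρ V p U := fun h => by
  obtain ⟨C, hC, R, hR, hp2⟩ := exists_second_difference_le h.contDiffAt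
  obtain ⟨ρ', hρ', hρ'ρ, hρ'ξ₀, hρ'R⟩ : ∃ ρ' > 0, ρ' ≤ ρ ∧ ρ' ≤ ξ₀ ∧ ρ' ≤ R :=
    ⟨min ρ (min ξ₀ R), by positivity, by simp⟩
  replace h := h.mono hρ'ρ
  obtain ⟨r₁, hr₁, hgrowth⟩ := h.growth hβ₀ hβ hc hρ' hρ'ξ₀ hm hC fun z s t hz ht =>
    hp2 z s t (hz.trans_le hρ'R) (ht.trans_le hρ'R)
  obtain ⟨s, hs, hsr₁⟩ := exists_between (lt_min hr₁ hρ')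
  rw [lt_min_iff] at hsr₁
  obtain ⟨r, hr, hrs, hrm⟩ := exists_pos_mul_rpow_le two_pos
    (show 0 < m * s / 16 by positivity) (show 0 < s / 2 by positivity) (4 * C)
  rw [Real.rpow_two] at hrm
  have hP := archMeasure_real_univ_pos hr
  refine (h.integral_gap_le hρ'ξ₀ hC.le hr (by linarith) fun z hz => ?_).not_gt
    (lt_of_growth hs (by positivity) (continuous_integral_archMeasure hr h.continuous_gap)
      (integral_nonneg_of_ae ?_) ?_ fun a b ha hab hb => hgrowth r hr (by linarith) a b
        (by linarith) hab hb)
  · simpa only [zero_add, zero_sub] using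
      hp2 0 z t₀ (by rw [abs_zero]; linarith) (by simpa using hR)
  · filter_upwards [ae_archMeasure_abs_lt hr] with z hz
    exact h.gap_nonneg hρ'ξ₀ (by linarith) ⟨by linarith, by linarith⟩
  · linarith [mul_pos (mul_pos hm hs) hP, mul_le_mul_of_nonneg_right hrm hP.le]

/-! ### The maximum principle -/

lemma nearDefect_const_mul (β κ : ℝ) {c : ℝ} (hc : 0 ≤ c) (w : ℝ → ℝ) (ξ : ℝ) :
    nearDefect β κ (fun x => c * w x) ξ = ENNReal.ofReal c * nearDefect β κ w ξ := by
  rw [nearDefect, nearDefect, ← lintegral_const_mul' _ _ ENNReal.ofReal_ne_top]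
  refine lintegral_congr fun η => ?_
  rw [← ENNReal.ofReal_mul hc]
  congr 1
  simp only [concavityDefect, oddExt]
  ring

lemma farDefect_const_mul (β κ c : ℝ) (w : ℝ → ℝ) (ξ : ℝ) :
    farDefect β κ (fun x => c * w x) ξ = c * farDefect β κ w ξ := by
  rw [farDefect, farDefect, ← integral_const_mul]
  congr 1
  ext η
  simp only [concavityDefect, oddExt]
  ring

lemma fderiv_zero_one_eq {F : Type*} [NormedAddCommGroup F] [NormedSpace ℝ F] {f : ℝ × ℝ → F}
    {z t : ℝ} {f' : F} (hf : DifferentiableAt ℝ f (z, t))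
    (hf' : HasDerivAt (fun s => f (z, s)) f' t) : fderiv ℝ f (z, t) (0, 1) = f' :=
  (hf.hasFDerivAt.comp_hasDerivAt t ((hasDerivAt_const t z).prodMk (hasDerivAt_id t))).unique hf'

lemma continuous_comp_max {X Y : Type*} [TopologicalSpace X] [TopologicalSpace Y] {f : X → ℝ → Y}
    (hf : ContinuousOn (fun q : X × ℝ => f q.1 q.2) (univ ×ˢ Ici 0)) :
    Continuous fun q : X × ℝ => f q.1 (max q.2 0) :=
  hf.comp_continuous (f := fun q : X × ℝ => (q.1, max q.2 0)) (by fun_prop)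
    fun _ => ⟨mem_univ _, mem_Ici.2 (le_max_right _ _)⟩

lemma comp_max_eventuallyEq {Y : Type*} (f : ℝ → Y) {t : ℝ} (ht : 0 < t) :
    (fun s => f (max s 0)) =ᶠ[𝓝 t] f := by
  filter_upwards [lt_mem_nhds ht] with s hs
  rw [max_eq_left hs.le]

lemma contDiffAt_comp_max {E F : Type*} [NormedAddCommGroup E] [NormedSpace ℝ E]
    [NormedAddCommGroup F] [NormedSpace ℝ F] {n : WithTop ℕ∞} {f : E → ℝ → F}
    (hf : ContDiffOn ℝ n (fun q : E × ℝ => f q.1 q.2) (univ ×ˢ Ici 0)) (x : E) {t : ℝ}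
    (ht : 0 < t) : ContDiffAt ℝ n (fun q : E × ℝ => f q.1 (max q.2 0)) (x, t) := by
  refine (hf.contDiffAt (prod_mem_nhds univ_mem (Ici_mem_nhds ht))).congr_of_eventuallyEq ?_
  filter_upwards [continuous_snd.continuousAt.eventually (lt_mem_nhds ht)] with q hq
  rw [max_eq_left (le_of_lt hq)]

section Spread

variable {E : Type*} [NormedAddCommGroup E] [NormedSpace ℝ E]

/-- The point `x` moved away from `y` so that, when `y` is moved away from `x` likewise, the
distance of the two points grows by `z`. -/
noncomputable def spread (x y : E) (z : ℝ) : E := x + (z / (2 * dist x y)) • (x - y)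

lemma spread_zero (x y : E) : spread x y 0 = x := by simp [spread]

lemma contDiff_spread (x y : E) {n : WithTop ℕ∞} : ContDiff ℝ n (spread x y) := by
  unfold spread
  fun_prop

lemma dist_spread {x y : E} (hxy : x ≠ y) {z : ℝ} (hz : 0 ≤ dist x y + z) :
    dist (spread x y z) (spread y x z) = dist x y + z := by
  have hξ : 0 < dist x y := dist_pos.2 hxy
  have hsub : spread x y z - spread y x z = ((dist x y + z) / dist x y) • (x - y) := by
    rw [add_div, div_self hξ.ne', spread, spread, dist_comm y x]
    module
  rw [dist_eq_norm, hsub, norm_smul, ← dist_eq_norm, Real.norm_of_nonneg (by positivity),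
    div_mul_cancel₀ _ hξ.ne']

/-- The difference, at time `t`, of the values of `f` at the points `x`, `y` spread apart by `z`.
Clamping `t` makes it continuous for all times when `f` is continuous for nonnegative ones. -/
noncomputable def spreadIncrement {F : Type*} [Sub F] (f : E → ℝ → F) (x y : E) (z t : ℝ) : F :=
  f (spread x y z) (max t 0) - f (spread y x z) (max t 0)

lemma spreadIncrement_of_nonneg {F : Type*} [Sub F] (f : E → ℝ → F) (x y : E) (z : ℝ) {t : ℝ}
    (ht : 0 ≤ t) : spreadIncrement f x y z t = f (spread x y z) t - f (spread y x z) t := by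
  rw [spreadIncrement, max_eq_left ht]

lemma spreadIncrement_zero {F : Type*} [Sub F] (f : E → ℝ → F) (x y : E) {t : ℝ} (ht : 0 ≤ t) :
    spreadIncrement f x y 0 t = f x t - f y t := by
  rw [spreadIncrement_of_nonneg f x y 0 ht, spread_zero, spread_zero]

variable {F : Type*} [NormedAddCommGroup F] {f : E → ℝ → F}

lemma continuous_spreadIncrement
    (hf : ContinuousOn (fun q : E × ℝ => f q.1 q.2) (univ ×ˢ Ici 0)) (x y : E) :
    Continuous fun q : ℝ × ℝ => spreadIncrement f x y q.1 q.2 := by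
  have hpoint : ∀ x y : E, Continuous fun q : ℝ × ℝ => f (spread x y q.1) (max q.2 0) :=
    fun x y => (continuous_comp_max hf).comp (f := fun q : ℝ × ℝ => (spread x y q.1, q.2))
      (((contDiff_spread x y (n := 0)).continuous.comp continuous_fst).prodMk continuous_snd)
  exact (hpoint x y).sub (hpoint y x)

variable [NormedSpace ℝ F]

lemma contDiffAt_spreadIncrement {n : WithTop ℕ∞}
    (hf : ContDiffOn ℝ n (fun q : E × ℝ => f q.1 q.2) (univ ×ˢ Ici 0)) (x y : E) (z : ℝ) {t : ℝ}
    (ht : 0 < t) : ContDiffAt ℝ n (fun q : ℝ × ℝ => spreadIncrement f x y q.1 q.2) (z, t) := by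
  have hpoint : ∀ x y : E,
      ContDiffAt ℝ n (fun q : ℝ × ℝ => f (spread x y q.1) (max q.2 0)) (z, t) := fun x y =>
    (contDiffAt_comp_max hf (spread x y z) ht).comp (z, t)
      (f := fun q : ℝ × ℝ => (spread x y q.1, q.2))
      (((contDiff_spread x y).comp contDiff_fst).prodMk contDiff_snd).contDiffAt
  exact (hpoint x y).sub (hpoint y x)

lemma hasDerivAt_spreadIncrement {x y : E} {t : ℝ} (ht : 0 < t) {f₁ f₂ : F}
    (hx : HasDerivAt (f x) f₁ t) (hy : HasDerivAt (f y) f₂ t) :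
    HasDerivAt (spreadIncrement f x y 0) (f₁ - f₂) t := by
  refine (hx.sub hy).congr_of_eventuallyEq ?_
  filter_upwards [lt_mem_nhds ht] with s hs using spreadIncrement_zero f x y hs.le

end Spread

namespace IsAdmissiblePair

variable {E : Type*} [NormedAddCommGroup E] [InnerProductSpace ℝ E] {θ : E → ℝ → ℝ}
  {ω : ℝ → ℝ → ℝ} (h : IsAdmissiblePair θ ω)
include h

lemma exists_bound {t : ℝ} (ht : 0 ≤ t) : ∃ M, ∀ x, |θ x t| ≤ M := by
  obtain ⟨K, hK, hrep⟩ := h.representatives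
  obtain ⟨M, hM⟩ := hK.exists_bound_of_continuousOn
    (contDiff_slice h.contDiffOn ht).continuous.continuousOn
  refine ⟨M, fun x => ?_⟩
  obtain ⟨x', hx', y', -, -, hθ⟩ := hrep x x
  rw [← (hθ t).1]
  exact hM x' hx'

lemma abs_le_iSup {t : ℝ} (ht : 0 ≤ t) (x : E) : |θ x t| ≤ ⨆ x, |θ x t| :=
  have ⟨M, hM⟩ := h.exists_bound ht
  le_ciSup (f := fun x => |θ x t|) ⟨M, forall_mem_range.2 hM⟩ x

lemma isModulusFamily {lam : ℝ → ℝ} (hlam : Continuous lam) (hlam0 : ∀ t, 0 ≤ lam t) :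
    IsModulusFamily fun ξ t => lam t * ω ξ (max t 0) where
  isConcaveModulus t := (h.isConcaveModulus (le_max_right t 0)).const_mul (hlam0 t)
  continuous_oddExt := by
    have hω : ∀ {f : ℝ → ℝ}, Continuous f →
        Continuous fun q : ℝ × ℝ => ω (max (f q.1) 0) (max q.2 0) := fun {f} hf =>
      h.continuousOn.comp_continuous (f := fun q : ℝ × ℝ => (max (f q.1) 0, max q.2 0))
        (by fun_prop) fun _ => ⟨mem_Ici.2 (le_max_right _ _), mem_Ici.2 (le_max_right _ _)⟩
    have hpos := hω continuous_id
    have hneg := hω continuous_neg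
    exact ((hlam.comp continuous_snd).mul hpos).sub ((hlam.comp continuous_snd).mul hneg)

lemma eventually_nhds_contact {lam : ℝ → ℝ} (hlam : Continuous lam) {m ξ t : ℝ} (hξ : 0 < ξ)
    (ht : 0 < t) (hm : m < lam t * ω ξ t) {x : E} (hx : ω ξ t < 2 * |θ x t|) :
    ∀ᶠ q : ℝ × ℝ in 𝓝 (0, t), 0 < ξ + q.1 ∧ 0 < q.2 ∧ m < lam q.2 * ω (ξ + q.1) q.2 ∧
      ω (ξ + q.1) q.2 < 2 * |θ x q.2| := by
  have hω : ContinuousAt (fun q : ℝ × ℝ => ω (ξ + q.1) q.2) (0, t) :=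
    ContinuousAt.comp_of_eq (f := fun q : ℝ × ℝ => (ξ + q.1, q.2))
      (h.continuousOn.continuousAt (prod_mem_nhds (Ici_mem_nhds hξ) (Ici_mem_nhds ht)))
      (by fun_prop) (by simp)
  have hθ : ContinuousAt (fun q : ℝ × ℝ => θ x q.2) (0, t) :=
    ContinuousAt.comp_of_eq (f := fun q : ℝ × ℝ => q.2)
      ((h.continuousOn_time x).continuousAt (Ici_mem_nhds ht)) continuousAt_snd rfl
  have hprod : ContinuousAt (fun q : ℝ × ℝ => lam q.2 * ω (ξ + q.1) q.2) (0, t) :=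
    (hlam.comp continuous_snd).continuousAt.mul hω
  filter_upwards [
    (by fun_prop : ContinuousAt (fun q : ℝ × ℝ => ξ + q.1) (0, t)).eventually_const_lt (by simpa),
    (continuousAt_snd (p := ((0 : ℝ), t))).eventually_const_lt ht,
    hprod.eventually_const_lt (by simpa using hm),
    hω.eventually_lt (hθ.abs.const_mul 2) (by simpa using hx)] with q h₁ h₂ h₃ h₄
    using ⟨h₁, h₂, h₃, h₄⟩

end IsAdmissiblePair

lemma exists_pos_of_eventually_nhds_prod {P : ℝ × ℝ → Prop} {t : ℝ} (h : ∀ᶠ q in 𝓝 (0, t), P q) :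
    ∃ ρ > 0, ∀ z s, |z| < ρ → s ∈ Icc (t - ρ) t → P (z, s) := by
  obtain ⟨r, hr, hball⟩ := Metric.eventually_nhds_iff.1 h
  refine ⟨r / 2, by positivity, fun z s hz hs => hball ?_⟩
  rw [Prod.dist_eq, max_lt_iff, Real.dist_eq, Real.dist_eq, sub_zero, abs_lt (a := s - t)]
  constructor
  · linarith
  · constructor <;> linarith [hs.1, hs.2]

/-- A solution of `∂ₜθ = (u·∇)θ - Lθ` for positive times, where `L` is the fractional dissipation of
order `β`, with continuous velocity `u`. -/
structure IsDissipativeScalar {E : Type*} [NormedAddCommGroup E] [InnerProductSpace ℝ E]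
    [FiniteDimensional ℝ E] [MeasurableSpace E] [BorelSpace E] (β : ℝ) (θ : E → ℝ → ℝ)
    (u : E → ℝ → E) : Prop where
  velocity : ContinuousOn (fun p : E × ℝ => u p.1 p.2) (univ ×ˢ Ici 0)
  equation : ∀ x, ∀ t > 0, ∃ l, HasFractionalLaplacianAt β (fun p => θ p t) x l ∧
    HasDerivAt (θ x) (fderiv ℝ (fun p => θ p t) x (u x t) - l) t

/-- The key inequality `∂ₜω ≥ Ω ∂_ξω + D` for a moving modulus `ω`, at the points where
`ω < 2 sup |θ|`. Derivatives in time are taken where they exist, which for each `ξ` is off a finite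
set; those in `ξ` are right derivatives, the larger ones by concavity. -/
structure IsModulusSupersolution {E : Type*} (β c : ℝ) (θ : E → ℝ → ℝ) (ω Ω : ℝ → ℝ → ℝ) :
    Prop where
  differentiableAt : ∀ ξ > 0, ∃ S : Finset ℝ, ∀ t > 0, t ∉ S → DifferentiableAt ℝ (ω ξ) t
  le : ∀ ξ t, 0 < ξ → 0 < t → (∃ x, ω ξ t < 2 * |θ x t|) → ∀ a b, HasDerivAt (ω ξ) a t →
    HasDerivWithinAt (fun r => ω r t) b (Ici ξ) ξ →
      Ω ξ t * b + c * modulusDissipation β (fun r => ω r t) ξ ≤ a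

lemma IsModulusSupersolution.drift_sub_defect_le {E : Type*} {β c : ℝ} {θ : E → ℝ → ℝ}
    {ω Ω : ℝ → ℝ → ℝ} (hs : IsModulusSupersolution β c θ ω Ω) (hβ : 0 < β) (hc : 0 ≤ c) {ξ t : ℝ}
    (hξ : 0 < ξ) (ht : 0 < t) (hω : IsConcaveModulus fun r => ω r t)
    (hlt : ∃ x, ω ξ t < 2 * |θ x t|) {a : ℝ} (ha : HasDerivAt (ω ξ) a t) {U lam : ℝ}
    (hU : U ≤ Ω ξ t) (hlam : 0 < lam) {κ b : ℝ} (hκ : 0 < κ) (hκξ : 2 * κ ≤ ξ)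
    (hb : HasDerivWithinAt (fun r => lam * ω r t) b (Ici ξ) ξ) :
    U * b - c * ((nearDefect β κ (fun r => lam * ω r t) ξ).toReal +
      farDefect β κ (fun r => lam * ω r t) ξ) ≤ lam * a := by
  have hb' : HasDerivWithinAt (fun r => ω r t) (b / lam) (Ici ξ) ξ := by
    simpa [div_eq_inv_mul, hlam.ne'] using hb.const_mul lam⁻¹
  have hb0 : 0 ≤ b / lam := hω.supergradient_nonneg hξ.le fun x hx =>
    hω.le_add_mul_of_hasDerivWithinAt hξ hb' hx
  have hdiss := mul_le_mul_of_nonneg_left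
    (hω.neg_nearDefect_sub_farDefect_le hβ hκ (by linarith : κ ≤ ξ / 2)) hc
  rw [nearDefect_const_mul _ _ hlam.le, farDefect_const_mul, ENNReal.toReal_mul,
    ENNReal.toReal_ofReal hlam.le]
  calc
    _ = lam * (U * (b / lam) +
        c * (-(nearDefect β κ (fun r => ω r t) ξ).toReal - farDefect β κ (fun r => ω r t) ξ)) := by
      field_simp
      ring
    _ ≤ lam * (Ω ξ t * (b / lam) + c * modulusDissipation β (fun r => ω r t) ξ) := by gcongr
    _ ≤ lam * a := mul_le_mul_of_nonneg_left (hs.le ξ t hξ ht hlt a _ ha hb') hlam.le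

/-- Growth of the factor `lam` at the rate `ε` makes the supersolution property strict. -/
lemma IsModulusSupersolution.exists_hasDerivAt_const_mul {E : Type*} {β c : ℝ} {θ : E → ℝ → ℝ}
    {ω Ω : ℝ → ℝ → ℝ} (hs : IsModulusSupersolution β c θ ω Ω) (hβ : 0 < β) (hc : 0 ≤ c) {ξ t : ℝ}
    (hξ : 0 < ξ) (ht : 0 < t) (hω : IsConcaveModulus fun r => ω r t)
    (hlt : ∃ x, ω ξ t < 2 * |θ x t|) (hdiff : DifferentiableAt ℝ (ω ξ) t) {U : ℝ}
    (hU : U ≤ Ω ξ t) {lam : ℝ → ℝ} {ε m : ℝ} (hlam : 0 < lam t)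
    (hlam' : HasDerivAt lam (ε * lam t) t) (hm : m ≤ ε * (lam t * ω ξ t)) :
    ∃ a, HasDerivAt (fun s => lam s * ω ξ (max s 0)) a t ∧ ∀ κ b, 0 < κ → 2 * κ ≤ ξ →
      HasDerivWithinAt (fun r => lam t * ω r (max t 0)) b (Ici ξ) ξ →
      m + U * b - c * ((nearDefect β κ (fun r => lam t * ω r (max t 0)) ξ).toReal +
        farDefect β κ (fun r => lam t * ω r (max t 0)) ξ) ≤ a := by
  refine ⟨_, hlam'.mul (hdiff.hasDerivAt.congr_of_eventuallyEq (comp_max_eventuallyEq (ω ξ) ht)),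
    ?_⟩
  rw [max_eq_left ht.le]
  intro κ b hκ hκξ hb
  linarith [hs.drift_sub_defect_le hβ hc hξ ht hω hlt hdiff.hasDerivAt hU hlam hκ hκξ hb]

section MaximumPrinciple

variable {E : Type*} [NormedAddCommGroup E] [InnerProductSpace ℝ E] [FiniteDimensional ℝ E]
  [MeasurableSpace E] [BorelSpace E] {β : ℝ}

lemma IsContactPair.drift_sub_dissipation_le {g : E → ℝ} {w : ℝ → ℝ} {x y : E} {M b κ Lx Ly : ℝ}
    (h : IsContactPair g w x y) (hβ : 0 < β) (hw : IsConcaveModulus w) (hg : Differentiable ℝ g)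
    (hM : ∀ p, |g p| ≤ M) (hLx : HasFractionalLaplacianAt β g x Lx)
    (hLy : HasFractionalLaplacianAt β g y Ly) (hκ : 0 < κ)
    (hb : HasDerivWithinAt w b (Ici (dist x y)) (dist x y)) (v₁ v₂ : E) :
    (fderiv ℝ g x v₁ - Lx) - (fderiv ℝ g y v₂ - Ly) ≤ dist v₁ v₂ * b -
      dissipationConstant (Module.finrank ℝ E) β * farDefect β κ w (dist x y) := by
  have hdrift := h.fderiv_sub_fderiv_le
    (fun s hs => hw.le_add_mul_of_hasDerivWithinAt (dist_pos.2 h.ne) hb hs) hw (hg x) (hg y) v₁ v₂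
  have hdiss := h.farDefect_le_sub hβ hw hg.continuous.measurable hM hLx hLy hκ
  linarith

variable {θ : E → ℝ → ℝ} {u : E → ℝ → E} {ω Ω : ℝ → ℝ → ℝ}

lemma fderiv_spreadIncrement_le (h : IsAdmissiblePair θ ω) (hu : IsDissipativeScalar β θ u)
    (hβ : 0 < β) {lam : ℝ} (hlam : 0 < lam) {t : ℝ} (ht : 0 < t) {x y : E}
    (hc : IsContactPair (fun p => θ p t) (fun ξ => lam * ω ξ t) x y) {κ b : ℝ} (hκ : 0 < κ)
    (hb : HasDerivWithinAt (fun ξ => lam * ω ξ t) b (Ici (dist x y)) (dist x y)) :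
    fderiv ℝ (fun q : ℝ × ℝ => spreadIncrement θ x y q.1 q.2) (0, t) (0, 1) ≤
      ‖spreadIncrement u x y 0 t‖ * b - dissipationConstant (Module.finrank ℝ E) β *
        farDefect β κ (fun ξ => lam * ω ξ t) (dist x y) := by
  obtain ⟨Lx, hLx, hx⟩ := hu.equation x t ht
  obtain ⟨Ly, hLy, hy⟩ := hu.equation y t ht
  obtain ⟨M, hM⟩ := h.exists_bound ht.le
  rw [fderiv_zero_one_eq
      ((contDiffAt_spreadIncrement h.contDiffOn x y 0 ht).differentiableAt two_ne_zero)
      (hasDerivAt_spreadIncrement ht hx hy),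
    spreadIncrement_zero u x y ht.le, ← dist_eq_norm]
  exact hc.drift_sub_dissipation_le hβ ((h.isConcaveModulus ht.le).const_mul hlam.le)
    ((contDiff_slice h.contDiffOn ht.le).differentiable two_ne_zero) hM hLx hLy hκ hb _ _

lemma exists_isLocalContact (h : IsAdmissiblePair θ ω) (hu : IsDissipativeScalar β θ u)
    (hs : IsModulusSupersolution β (dissipationConstant (Module.finrank ℝ E) β) θ ω Ω)
    (hΩ : ∀ t > 0, (∀ x y, |θ x t - θ y t| ≤ ω (dist x y) t) →
      ∀ x y, x ≠ y → dist (u x t) (u y t) ≤ Ω (dist x y) t)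
    (hβ : 0 < β) {lam : ℝ → ℝ} {ε t₀ : ℝ} (hε : 0 < ε) (ht₀ : 0 < t₀)
    (hlam : ∀ t, HasDerivAt lam (ε * lam t) t) (hlam0 : ∀ t, 0 < lam t)
    (hlam1 : ∀ t ≤ t₀, lam t ≤ 1)
    (hle : ∀ t ∈ Icc 0 t₀, ∀ x y, |θ x t - θ y t| ≤ lam t * ω (dist x y) t) {x y : E}
    (hc : IsContactPair (fun p => θ p t₀) (fun ξ => lam t₀ * ω ξ t₀) x y)
    (hlt : ∃ z, ω (dist x y) t₀ < 2 * |θ z t₀|) :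
    ∃ m > 0, ∃ ρ > 0, IsLocalContact β (dissipationConstant (Module.finrank ℝ E) β) m (dist x y) t₀
      ρ (fun ξ t => lam t * ω ξ (max t 0)) (spreadIncrement θ x y)
      (fun z t => ‖spreadIncrement u x y z t‖) := by
  have hξ : 0 < dist x y := dist_pos.2 hc.ne
  have hcont : Continuous lam := continuous_iff_continuousAt.2 fun t => (hlam t).continuousAt
  have hV : 0 < lam t₀ * ω (dist x y) t₀ := mul_pos (hlam0 t₀) (h.modulus_pos hξ ht₀.le)
  obtain ⟨z₀, hz₀⟩ := hlt
  obtain ⟨ρ, hρ, hnear⟩ := exists_pos_of_eventually_nhds_prod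
    (h.eventually_nhds_contact hcont hξ ht₀ (half_lt_self hV) hz₀)
  refine ⟨ε * (lam t₀ * ω (dist x y) t₀ / 2), by positivity, ρ, hρ, ?_⟩
  constructor
  case family => exact h.isModulusFamily hcont fun t => (hlam0 t).le
  case continuous => exact continuous_spreadIncrement h.contDiffOn.continuousOn x y
  case contDiffAt => exact contDiffAt_spreadIncrement h.contDiffOn x y 0 ht₀
  case speed_continuousAt =>
    exact (continuous_spreadIncrement hu.velocity x y).norm.continuousAt
  case speed_nonneg => exact fun _ _ => norm_nonneg _
  case le =>
    intro z t hz ht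
    obtain ⟨hξz, ht0, -⟩ := hnear z t hz ht
    have := hle t ⟨ht0.le, ht.2⟩ (spread x y z) (spread y x z)
    rw [dist_spread hc.ne hξz.le] at this
    simpa only [spreadIncrement_of_nonneg θ x y z ht0.le, max_eq_left ht0.le] using
      (le_abs_self _).trans this
  case eq =>
    simpa only [spreadIncrement_zero θ x y ht₀.le, max_eq_left ht₀.le] using hc.sub_eq
  case time_deriv_le =>
    intro κ hκ b hb
    rw [max_eq_left ht₀.le] at hb ⊢
    exact fderiv_spreadIncrement_le h hu hβ (hlam0 t₀) ht₀ hc hκ hb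
  case supersolution =>
    intro z hz
    obtain ⟨hξz, -⟩ := hnear z t₀ hz ⟨by linarith, le_rfl⟩
    obtain ⟨S, hS⟩ := hs.differentiableAt (dist x y + z) hξz
    refine ⟨S, fun t ht htS => ?_⟩
    obtain ⟨-, ht0, hm, hlt⟩ := hnear z t hz (Ioo_subset_Icc_self ht)
    have hω := h.isConcaveModulus ht0.le
    have hU : ‖spreadIncrement u x y z t‖ ≤ Ω (dist x y + z) t := by
      have hdist := dist_spread hc.ne hξz.le
      rw [spreadIncrement_of_nonneg u x y z ht0.le, ← dist_eq_norm, ← hdist]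
      exact hΩ t ht0 (fun x y => (hle t ⟨ht0.le, ht.2.le⟩ x y).trans
        (mul_le_of_le_one_left (hω.nonneg dist_nonneg) (hlam1 t ht.2.le))) _ _
        (dist_pos.1 (hdist ▸ hξz))
    exact hs.exists_hasDerivAt_const_mul hβ (dissipationConstant_nonneg _ _) hξz ht0 hω ⟨z₀, hlt⟩
      (hS t ht0 htS) hU (hlam0 t) (hlam t) (by gcongr)

theorem nonlocal_maximum_principle_general (hβ : 0 < β) (hβ2 : β < 2) (h : IsAdmissiblePair θ ω)
    (hu : IsDissipativeScalar β θ u)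
    (hs : IsModulusSupersolution β (dissipationConstant (Module.finrank ℝ E) β) θ ω Ω)
    (hΩ : ∀ t > 0, (∀ x y, |θ x t - θ y t| ≤ ω (dist x y) t) →
      ∀ x y, x ≠ y → dist (u x t) (u y t) ≤ Ω (dist x y) t)
    (hinit : ∀ x y, x ≠ y → |θ x 0 - θ y 0| < ω (dist x y) 0) {T : ℝ} (hT : 0 < T) {x y : E}
    (hxy : x ≠ y) : |θ x T - θ y T| < ω (dist x y) T := by
  by_contra! hviol
  obtain ⟨ε, hε, t₀, ht₀, hle, x₀, y₀, hc, hlt⟩ := h.exists_contact hinit hT ⟨x, y, hxy, hviol⟩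
  have hlam : ∀ t, HasDerivAt (fun t => Real.exp (ε * (t - 2 * T)))
      (ε * Real.exp (ε * (t - 2 * T))) t := fun t => by
    simpa [mul_comm] using (((hasDerivAt_id t).sub_const (2 * T)).const_mul ε).exp
  obtain ⟨m, hm, ρ, hρ, hcontact⟩ := exists_isLocalContact h hu hs hΩ hβ hε ht₀.1 hlam
    (fun t => Real.exp_pos _) (fun t ht => Real.exp_le_one_iff.2
      (mul_nonpos_of_nonneg_of_nonpos hε.le (by linarith [ht₀.2]))) hle hc hlt
  exact not_isLocalContact hβ hβ2 (dissipationConstant_nonneg _ _) (dist_pos.2 hc.ne) hρ hm hcontact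

end MaximumPrinciple

/-- **Nonlocal maximum principle for dissipative active scalars (Theorem 2.2).**
There is a constant `c = c(d,α) > 0` such that: if `θ` is a smooth space-periodic solution
of `∂_t θ = (u·∇)θ − L_α θ` (with `L_α` the unnormalized fractional dissipation, realized
as a principal value), `ω(ξ,t)` is a time-dependent modulus of continuity (continuous in
`(ξ,t)`, piecewise `C¹` in `t`, with `∂²_{ξξ}ω(0,t) = −∞`), `Ω(·,t)` is a modulus of
continuity transferring `ω`-continuity of `θ(·,t)` to `Ω`-continuity of `u(·,t)`, `θ(·,0)`
obeys `ω(·,0)`, and the key inequality `∂_t ω > Ω ∂_ξ ω + D_{α,ω}` holds whenever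
`ω(ξ,t) ≤ 2‖θ(·,t)‖_∞` (with the larger one-sided `ξ`-derivative and the smaller one-sided
`t`-derivative, here quantified over all one-sided derivative values `a`, `b`), then
`θ(·,t)` obeys `ω(·,t)` for all `t > 0`. -/
theorem nonlocal_maximum_principle (d : ℕ) (hd : 0 < d) (α : ℝ) (hα0 : 0 < α) (hα1 : α < 1) :
    ∃ c > (0:ℝ),
      ∀ (θ : EuclideanSpace ℝ (Fin d) → ℝ → ℝ)
        (u : EuclideanSpace ℝ (Fin d) → ℝ → EuclideanSpace ℝ (Fin d))
        (Lθ : EuclideanSpace ℝ (Fin d) → ℝ → ℝ) (L : ℝ) (ω Ω : ℝ → ℝ → ℝ),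
      0 < L →
      -- θ and u are smooth and periodic in space
      ContDiffOn ℝ (⊤ : ℕ∞)
        (fun p : EuclideanSpace ℝ (Fin d) × ℝ => θ p.1 p.2) (univ ×ˢ Ici 0) →
      ContDiffOn ℝ (⊤ : ℕ∞)
        (fun p : EuclideanSpace ℝ (Fin d) × ℝ => u p.1 p.2) (univ ×ˢ Ici 0) →
      (∀ v : Fin d → ℤ, ∀ x t,
        θ (x + (WithLp.equiv 2 (∀ _ : Fin d, ℝ)).symm (fun i => L * (v i : ℝ))) t = θ x t) →
      (∀ v : Fin d → ℤ, ∀ x t,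
        u (x + (WithLp.equiv 2 (∀ _ : Fin d, ℝ)).symm (fun i => L * (v i : ℝ))) t = u x t) →
      -- Lθ is the principal-value fractional dissipation of θ
      (∀ t ∈ Ici (0:ℝ), ∀ x,
        Tendsto (fun ε => ∫ y in {y : EuclideanSpace ℝ (Fin d) | ε < ‖y‖},
            (θ x t - θ (x + y) t) / ‖y‖ ^ ((d : ℝ) + 2*α))
          (nhdsWithin 0 (Ioi 0)) (nhds (Lθ x t))) →
      -- the active scalar equation
      (∀ x, ∀ t ∈ Ici (0:ℝ),
        HasDerivWithinAt (fun s => θ x s)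
          (fderiv ℝ (fun x' => θ x' t) x (u x t) - Lθ x t) (Ici 0) t) →
      -- ω is continuous in (ξ,t), piecewise C¹ in t, a modulus of continuity in ξ
      ContinuousOn (fun p : ℝ × ℝ => ω p.1 p.2) (Ici 0 ×ˢ Ici 0) →
      (∀ ξ ∈ Ici (0:ℝ), ∃ S : Finset ℝ,
        (∀ t ∈ Ioi (0:ℝ) \ ↑S, DifferentiableAt ℝ (fun s => ω ξ s) t) ∧
        ContinuousOn (deriv fun s => ω ξ s) (Ioi (0:ℝ) \ ↑S)) →
      (∀ t ∈ Ici (0:ℝ), IsModulusOfContinuity (fun ξ => ω ξ t)) →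
      -- ∂²_{ξξ} ω(0,t) = −∞
      (∀ t ∈ Ici (0:ℝ),
        (∃ b, HasDerivWithinAt (fun r => ω r t) b (Ici 0) 0) →
        Tendsto (fun ξ => deriv (deriv (fun r => ω r t)) ξ) (nhdsWithin 0 (Ioi 0)) atBot) →
      -- Ω(·,t) is a modulus of continuity transferring ω-continuity of θ to u
      (∀ t ∈ Ici (0:ℝ), IsModulusOfContinuity (fun ξ => Ω ξ t)) →
      (∀ t ∈ Ici (0:ℝ),
        (∀ x y, x ≠ y → |θ x t - θ y t| ≤ ω (dist x y) t) →
        ∀ x y, dist (u x t) (u y t) ≤ Ω (dist x y) t) →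
      -- the initial data obeys ω(·,0)
      (∀ x y, x ≠ y → |θ x 0 - θ y 0| < ω (dist x y) 0) →
      -- the key inequality ∂_t ω > Ω ∂_ξ ω + D_{α,ω}
      (∀ ξ t : ℝ, 0 < ξ → 0 < t → ω ξ t ≤ 2 * (⨆ x, |θ x t|) →
        ∀ a b : ℝ,
        (HasDerivWithinAt (fun s => ω ξ s) a (Ici t) t ∨
          HasDerivWithinAt (fun s => ω ξ s) a (Iic t) t) →
        (HasDerivWithinAt (fun r => ω r t) b (Ici ξ) ξ ∨
          HasDerivWithinAt (fun r => ω r t) b (Iic ξ) ξ) →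
        Ω ξ t * b +
          c * ((∫ η in Ioo 0 (ξ/2),
                  (ω (ξ + 2*η) t + ω (ξ - 2*η) t - 2 * ω ξ t) / η ^ (1 + 2*α)) +
               (∫ η in Ioi (ξ/2),
                  (ω (ξ + 2*η) t - ω (2*η - ξ) t - 2 * ω ξ t) / η ^ (1 + 2*α))) < a) →
      -- conclusion: θ(·,t) obeys ω(·,t) for all t > 0
      ∀ t > (0:ℝ), ∀ x y, x ≠ y → |θ x t - θ y t| < ω (dist x y) t := by
  refine ⟨dissipationConstant d (2 * α), by unfold dissipationConstant; positivity, ?_⟩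
  intro θ u Lθ L ω Ω hL hθ hu hθper _ hLθ heqn hω hωt hmod hω2 _ hΩ hinit hkey t ht x y hxy
  have hpair : IsAdmissiblePair θ ω :=
    ⟨hθ.of_le (by norm_cast), exists_compact_representatives d hL hθper, hω, hmod, hω2⟩
  have hscalar : IsDissipativeScalar (2 * α) θ u :=
    ⟨hu.continuousOn, fun x t ht => ⟨Lθ x t,
      by simpa only [HasFractionalLaplacianAt, finrank_euclideanSpace_fin] using hLθ t ht.le x,
      (heqn x t ht.le).hasDerivAt (Ici_mem_nhds ht)⟩⟩
  have hsuper : IsModulusSupersolution (2 * α) (dissipationConstant d (2 * α)) θ ω Ω :=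
    { differentiableAt ξ hξ := (hωt ξ hξ.le).imp fun S hS t ht htS => hS.1 t ⟨ht, htS⟩
      le ξ t hξ ht := fun ⟨x, hx⟩ a b ha hb => (hkey ξ t hξ ht
        (hx.le.trans (by gcongr; exact hpair.abs_le_iSup ht.le x)) a b
        (.inl ha.hasDerivWithinAt) (.inl hb)).le }
  exact nonlocal_maximum_principle_general (by linarith) (by linarith) hpair hscalar
    (by rwa [finrank_euclideanSpace_fin])
    (fun t ht hobeys x y _ => hΩ t ht.le (fun x y _ => hobeys x y) x y) hinit ht hxy
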